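/- arXiv:0908.1698 — 5 statements merged into one kernel-verified Lean document; each statement's English description precedes it below -/
import Mathlib

section
/- Let d ≥ 3 and let P be a Mani d-polytope with Γ(P) ≥ 2. Then f₀(P) ≥ d + p(d) + ⌈d/p(d)⌉ + 1. -/
open scoped RealInnerProductSpace

noncomputable section

/-- We work in `ℝ^d`, modelled as Euclidean space. -/
abbrev Euc (d : ℕ) := EuclideanSpace ℝ (Fin d)

/-- `P` is a polytope: the convex hull of a finite set of points. -/
def IsPolytope {d : ℕ} (P : Set (Euc d)) : Prop :=
  ∃ V : Set (Euc d), V.Finite ∧ P = convexHull ℝ V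

/-- `P` is a `d`-polytope in `ℝ^d`: a polytope whose affine span is all of `ℝ^d`. -/
def IsDPolytope {d : ℕ} (P : Set (Euc d)) : Prop :=
  IsPolytope P ∧ affineSpan ℝ P = ⊤

/-- The vertices of a polytope are its extreme points. -/
def verts {d : ℕ} (P : Set (Euc d)) : Set (Euc d) :=
  Set.extremePoints ℝ P

/-- `[u,v]` is an inner diagonal of `P`: `u`, `v` are distinct vertices and the
relative interior of the segment (the open segment) meets the interior of `P`. -/
def InnerDiagonal {d : ℕ} (P : Set (Euc d)) (u v : Euc d) : Prop :=
  u ∈ verts P ∧ v ∈ verts P ∧ u ≠ v ∧ (openSegment ℝ u v ∩ interior P).Nonempty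

/-- `P` is illuminated: every vertex lies on an inner diagonal. -/
def Illuminated {d : ℕ} (P : Set (Euc d)) : Prop :=
  ∀ v ∈ verts P, ∃ u, InnerDiagonal P u v

/-- A set `U` of vertices illuminates itself if every `v ∈ U` lies on an inner
diagonal `[u,v]` with `u ∈ U`. -/
def IlluminatesItself {d : ℕ} (P : Set (Euc d)) (U : Set (Euc d)) : Prop :=
  ∀ v ∈ U, ∃ u ∈ U, InnerDiagonal P u v

/-- A set `W` of vertices lies opposite the vertex `v ∉ W` if `[v,w]` is an inner
diagonal for all `w ∈ W`, and the remaining vertices illuminate themselves. -/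
def LiesOpposite {d : ℕ} (P : Set (Euc d)) (W : Set (Euc d)) (v : Euc d) : Prop :=
  v ∈ verts P ∧ W ⊆ verts P ∧ v ∉ W ∧ (∀ w ∈ W, InnerDiagonal P v w) ∧
    IlluminatesItself P (verts P \ (W ∪ {v}))

/-- `Γ(P)`: the maximum cardinality of a set lying opposite some vertex (`0` if none). -/
def Gamma {d : ℕ} (P : Set (Euc d)) : ℕ :=
  sSup {n : ℕ | ∃ W v, LiesOpposite P W v ∧ W.ncard = n}

/-- `p(d) = ⌈(√(4d+1) - 1)/2⌉`. -/
def pf (d : ℕ) : ℕ := ⌈(Real.sqrt (4 * d + 1) - 1) / 2⌉₊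

/-- `M(d) = min {2d, d + p(d) + ⌈d/p(d)⌉ + 1}`. -/
def Mf (d : ℕ) : ℕ := min (2 * d) (d + pf d + ⌈(d : ℝ) / (pf d : ℝ)⌉₊ + 1)

/-- A Mani `d`-polytope: an illuminated `d`-polytope with exactly `M(d)` vertices. -/
def IsManiPolytope {d : ℕ} (P : Set (Euc d)) : Prop :=
  IsDPolytope P ∧ Illuminated P ∧ (verts P).ncard = Mf d

/-- A facet of a `d`-polytope: an exposed face of dimension `d - 1`. -/
def IsFacetOf {d : ℕ} (P F : Set (Euc d)) : Prop :=
  IsExposed ℝ P F ∧ Module.finrank ℝ (affineSpan ℝ F).direction = d - 1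

/-- `S` is the vertex set of an (exposed) face of `P`. -/
def IsFaceVertexSet {d : ℕ} (P S : Set (Euc d)) : Prop :=
  ∃ F : Set (Euc d), IsExposed ℝ P F ∧ S = verts P ∩ F

/-- Combinatorial equivalence: a bijection of the vertex sets carrying vertex sets
of faces to vertex sets of faces in both directions. -/
def CombEquiv {d : ℕ} (P Q : Set (Euc d)) : Prop :=
  ∃ f : Euc d → Euc d, Set.BijOn f (verts P) (verts Q) ∧
    ∀ S ⊆ verts P, (IsFaceVertexSet P S ↔ IsFaceVertexSet Q (f '' S))

/-- The `d`-dimensional crosspolytope `conv {±e₁, …, ±e_d}`. -/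
def crossPolytope (d : ℕ) : Set (Euc d) :=
  convexHull ℝ
    {x | ∃ i : Fin d, x = EuclideanSpace.single i 1 ∨ x = -EuclideanSpace.single i 1}

/-- `{u, v}` is the vertex set of an edge (a `1`-dimensional exposed face) of `P`. -/
def IsEdgeVertexSet {d : ℕ} (P : Set (Euc d)) (u v : Euc d) : Prop :=
  ∃ F : Set (Euc d), IsExposed ℝ P F ∧
    Module.finrank ℝ (affineSpan ℝ F).direction = 1 ∧ Set.extremePoints ℝ F = {u, v}

/-- Pushing a supporting functional until it is tight on many vectors. -/
lemma exists_tight_functional {E : Type*} [AddCommGroup E] [Module ℝ E] [FiniteDimensional ℝ E]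
    (A : Finset E) (hA : Submodule.span ℝ (A : Set E) = ⊤) (a0 : E) (l0 : E →ₗ[ℝ] ℝ)
    (h0 : ∀ a ∈ A, l0 a ≤ 0) (h0' : l0 a0 < 0) :
    ∃ l : E →ₗ[ℝ] ℝ, (∀ a ∈ A, l a ≤ 0) ∧ l a0 < 0 ∧
      Module.finrank ℝ E ≤ (A.filter (fun a => l a = 0)).card + 1 := by
  classical
  by_contra hcon
  push Not at hcon
  have key : ∀ n : ℕ, ∃ l : E →ₗ[ℝ] ℝ, (∀ a ∈ A, l a ≤ 0) ∧ l a0 < 0 ∧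
      n ≤ (A.filter (fun a => l a = 0)).card := by
    intro n
    induction n with
    | zero => exact ⟨l0, h0, h0', Nat.zero_le _⟩
    | succ n ih =>
      obtain ⟨l, hl, hl', hn⟩ := ih
      have hlt := hcon l hl hl'
      set T := A.filter (fun a => l a = 0) with hT
      have hspan : Submodule.span ℝ ((insert a0 T : Finset E) : Set E) < ⊤ := by
        rw [lt_top_iff_ne_top]
        intro htop
        have h1 := finrank_span_finset_le_card (R := ℝ) (insert a0 T)
        have h2 := Finset.card_insert_le a0 T
        rw [Set.finrank, htop, finrank_top] at h1
        omega
      obtain ⟨g, hg, hgk⟩ := Submodule.exists_le_ker_of_lt_top _ hspan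
      have hgz : ∀ a ∈ insert a0 T, g a = 0 := fun a ha =>
        hgk (Submodule.subset_span ha)
      have hex : ∃ a ∈ A, g a ≠ 0 := by
        by_contra hno
        push Not at hno
        apply hg
        apply LinearMap.ext_on hA
        intro a ha
        simpa using hno a ha
      have hex2 : ∃ g' : E →ₗ[ℝ] ℝ, (∀ a ∈ insert a0 T, g' a = 0) ∧ ∃ a ∈ A, 0 < g' a := by
        obtain ⟨a, ha, hne⟩ := hex
        rcases lt_or_gt_of_ne hne with h | h
        · exact ⟨-g, fun b hb => by simp [hgz b hb], a, ha, by simpa using h⟩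
        · exact ⟨g, hgz, a, ha, h⟩
      obtain ⟨g', hg'z, hg'p⟩ := hex2
      have hBne : (A.filter (fun a => 0 < g' a)).Nonempty := by
        obtain ⟨a, ha, hp⟩ := hg'p
        exact ⟨a, by simp [ha, hp]⟩
      obtain ⟨b, hb, hbmin⟩ := Finset.exists_min_image _ (fun a => - l a / g' a) hBne
      simp only [Finset.mem_filter] at hb hbmin
      set t := - l b / g' b with ht
      have htnn : 0 ≤ t := div_nonneg (by linarith [hl b hb.1]) hb.2.le
      refine ⟨l + t • g', ?_, ?_, ?_⟩
      · intro a ha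
        simp only [LinearMap.add_apply, LinearMap.smul_apply, smul_eq_mul]
        by_cases hp : 0 < g' a
        · have := hbmin a ⟨ha, hp⟩
          rw [le_div_iff₀ hp] at this
          linarith
        · have := mul_nonneg htnn (by linarith : 0 ≤ - g' a)
          linarith [hl a ha]
      · have := hg'z a0 (by simp)
        simp [this, hl']
      · have hbT : b ∉ T := by
          intro h
          have := hg'z b (by simp [h])
          linarith [hb.2]
        have hsub : insert b T ⊆ A.filter (fun a => (l + t • g') a = 0) := by
          intro a ha
          rcases Finset.mem_insert.1 ha with rfl | ha
          · have : g' a ≠ 0 := hb.2.ne'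
            simp [hb.1, ht]
            field_simp
            ring
          · have h1 := hg'z a (by simp [ha])
            simp only [hT, Finset.mem_filter] at ha
            simp [ha.1, ha.2, h1]
        have := Finset.card_le_card hsub
        rw [Finset.card_insert_of_notMem hbT] at this
        omega
  obtain ⟨l, -, -, h⟩ := key (A.card + 1)
  have := Finset.card_filter_le A (fun a => l a = 0)
  omega

lemma verts_finite {d : ℕ} {P : Set (Euc d)} (hP : IsPolytope P) : (verts P).Finite := by
  obtain ⟨V, hV, rfl⟩ := hP
  exact hV.subset extremePoints_convexHull_subset

lemma convexHull_verts {d : ℕ} {P : Set (Euc d)} (hP : IsPolytope P) :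
    convexHull ℝ (verts P) = P := by
  have hf := verts_finite hP
  obtain ⟨V, hV, rfl⟩ := hP
  have h := closure_convexHull_extremePoints (hV.isCompact_convexHull (𝕜 := ℝ)) (convex_convexHull ℝ V)
  rw [← verts] at h
  rwa [(hf.isCompact_convexHull (𝕜 := ℝ)).isClosed.closure_eq] at h

/-- A facet through `v` that avoids `u`, described by its vertex set. -/
lemma exists_facet {d : ℕ} {P : Set (Euc d)} (hP : IsDPolytope P) {u v : Euc d}
    (hu : u ∈ verts P) (hv : v ∈ verts P) (huv : u ≠ v) :
    ∃ F : Finset (Euc d), (F : Set (Euc d)) ⊆ verts P ∧ v ∈ F ∧ u ∉ F ∧ d ≤ F.card ∧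
      ∀ x ∈ F, ∀ y ∈ F, ¬ InnerDiagonal P x y := by
  classical
  have hf := verts_finite hP.1
  have hhull := convexHull_verts hP.1
  set V := hf.toFinset with hV
  have hmem : ∀ x, x ∈ V ↔ x ∈ verts P := fun x => by simp [hV]
  -- a strictly supporting functional
  have hvnot : v ∉ convexHull ℝ (verts P \ {v}) := by
    have h1 := hv
    have hconv : Convex ℝ P := by rw [← hhull]; exact convex_convexHull ℝ _
    rw [verts, hconv.mem_extremePoints_iff_mem_sdiff_convexHull_sdiff] at h1
    intro h
    exact h1.2 (convexHull_mono (Set.sdiff_subset_sdiff_left extremePoints_subset) h)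
  obtain ⟨f, c, hfc, hcv⟩ := geometric_hahn_banach_closed_point (convex_convexHull ℝ (verts P \ {v}))
    ((hf.subset Set.sdiff_subset).isCompact_convexHull (𝕜 := ℝ)).isClosed hvnot
  have hflt : ∀ w ∈ verts P, w ≠ v → f w < f v := fun w hw hne =>
    (hfc w (subset_convexHull ℝ _ ⟨hw, hne⟩)).trans hcv
  set A := (V.erase v).image (fun w => w - v) with hA
  have hspan : Submodule.span ℝ (A : Set (Euc d)) = ⊤ := by
    have h1 : affineSpan ℝ (verts P) = ⊤ := by
      rw [← affineSpan_convexHull, hhull]; exact hP.2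
    have h2 : vectorSpan ℝ (verts P) = ⊤ := by
      rw [← direction_affineSpan, h1, AffineSubspace.direction_top]
    rw [vectorSpan_eq_span_vsub_set_right_ne ℝ hv] at h2
    rw [← h2]
    congr 1
    ext x
    simp [hA, hV, and_comm]
  obtain ⟨l, hl, hlu, hcard⟩ := exists_tight_functional A hspan (u - v) (f : Euc d →ₗ[ℝ] ℝ)
    (by
      intro a ha
      simp only [hA, Finset.mem_image, Finset.mem_erase, hmem] at ha
      obtain ⟨w, ⟨hne, hw⟩, rfl⟩ := ha
      have := hflt w hw hne
      simp only [ContinuousLinearMap.coe_coe, map_sub]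
      linarith)
    (by
      have := hflt u hu huv
      simp only [ContinuousLinearMap.coe_coe, map_sub]
      linarith)
  rw [finrank_euclideanSpace_fin] at hcard
  have hle : ∀ w ∈ verts P, l w ≤ l v := by
    intro w hw
    by_cases hne : w = v
    · rw [hne]
    · have := hl (w - v) (by
        simp only [hA, Finset.mem_image, Finset.mem_erase, hmem]
        exact ⟨w, ⟨hne, hw⟩, rfl⟩)
      rw [map_sub] at this
      linarith
  have hleP : ∀ x ∈ P, l x ≤ l v := by
    intro x hx
    rw [← hhull] at hx
    have : convexHull ℝ (verts P) ⊆ {x | l x ≤ l v} :=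
      convexHull_min hle (convex_halfSpace_le l.isLinear _)
    exact this hx
  rw [map_sub] at hlu
  refine ⟨V.filter (fun w => l w = l v), ?_, ?_, ?_, ?_, ?_⟩
  · intro x hx
    simp [hmem] at hx
    exact hx.1
  · simp [hmem, hv]
  · simp only [Finset.mem_filter, not_and]
    intro _ h
    linarith
  · have hsub : insert v ((A.filter (fun a => l a = 0)).image (fun a => a + v)) ⊆
        V.filter (fun w => l w = l v) := by
      intro x hx
      rcases Finset.mem_insert.1 hx with rfl | hx
      · simp [hmem, hv]
      · simp only [hA, Finset.mem_image, Finset.mem_filter, Finset.mem_erase] at hx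
        obtain ⟨a, ⟨⟨w, ⟨hne, hw⟩, rfl⟩, h0⟩, rfl⟩ := hx
        rw [map_sub] at h0
        simp only [sub_add_cancel, Finset.mem_filter]
        exact ⟨hw, by linarith⟩
    have h1 := Finset.card_le_card hsub
    rw [Finset.card_insert_of_notMem, Finset.card_image_of_injective _ (add_left_injective v)] at h1
    · omega
    · simp [hA]
      intro x hx _ h0
      exact hx (sub_eq_zero.1 h0)
  · intro x hx y hy hd
    simp only [Finset.mem_filter] at hx hy
    obtain ⟨-, -, -, z, hz, hzP⟩ := hd
    have hlz : l z = l v := by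
      obtain ⟨a, b, -, -, hab, rfl⟩ := hz
      rw [map_add, map_smul, map_smul, hx.2, hy.2, ← add_smul, hab, one_smul]
    have hcont : Filter.Tendsto (fun t : ℝ => z + t • (v - u)) (nhds 0) (nhds z) := by
      have : Continuous (fun t : ℝ => z + t • (v - u)) := by fun_prop
      simpa using this.tendsto 0
    have hev := hcont.eventually (mem_interior_iff_mem_nhds.1 hzP)
    obtain ⟨e, he, hball⟩ := Metric.eventually_nhds_iff.1 hev
    have h1 := hleP _ (hball (y := e / 2) (by
      rw [Real.dist_eq, sub_zero, abs_of_pos (by linarith)]; linarith))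
    simp only [map_add, map_smul, map_sub, smul_eq_mul, hlz] at h1
    have : 0 < e / 2 * (l v - l u) := mul_pos (by linarith) (by linarith)
    linarith

/-- A star partition of a finite set `U`, encoded by the map sending each point to its center. -/
def IsStarMap {α : Type*} (r : α → α → Prop) (U : Finset α) (c : α → α) : Prop :=
  (∀ x ∈ U, c x ∈ U ∧ c (c x) = c x ∧ (c x ≠ x → r x (c x))) ∧
    ∀ y ∈ U, c y = y → ∃ x ∈ U, x ≠ y ∧ c x = y

lemma exists_starMap {α : Type*} (r : α → α → Prop)
    (hs : ∀ x y, r x y → r y x) (hi : ∀ x, ¬ r x x) :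
    ∀ (n : ℕ) (U : Finset α), U.card = n → (∀ x ∈ U, ∃ y ∈ U, r x y) →
      ∃ c, IsStarMap r U c := by
  classical
  intro n
  induction n using Nat.strong_induction_on with
  | _ n ih =>
  intro U hn hU
  by_cases hrem : ∃ x ∈ U, ∀ z ∈ U.erase x, ∃ y ∈ U.erase x, r z y
  · obtain ⟨x, hx, hx'⟩ := hrem
    have hcard := Finset.card_erase_lt_of_mem hx
    obtain ⟨c, hc1, hc2⟩ := ih _ (by omega) (U.erase x) rfl hx'
    obtain ⟨y, hy, hxy⟩ := hU x hx
    have hyx : y ≠ x := fun h => hi x (by rwa [h] at hxy)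
    have hyx' := hs _ _ hxy
    have hy' : y ∈ U.erase x := by simp [hy, hyx]
    simp only [Finset.mem_erase] at hc1 hc2 hy'
    by_cases hcy : c y = y
    · refine ⟨Function.update c x y, ?_, ?_⟩
      · intro z hz
        by_cases hzx : z = x
        · subst hzx; simp [hyx, hcy, hy, hxy]
        · have := hc1 z ⟨hzx, hz⟩
          simp [Function.update_of_ne hzx, Function.update_of_ne this.1.1, this.1.2, this.2.1]
          exact this.2.2
      · intro z hz hcz
        by_cases hzx : z = x
        · subst hzx; simp [hyx] at hcz
        · rw [Function.update_of_ne hzx] at hcz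
          obtain ⟨w, hw, hwz, hcw⟩ := hc2 z ⟨hzx, hz⟩ hcz
          exact ⟨w, hw.2, hwz, by rw [Function.update_of_ne hw.1, hcw]⟩
    · obtain ⟨⟨hcyx, hcyU⟩, hccy, hrc⟩ := hc1 y hy'
      by_cases hother : ∃ w ∈ U.erase x, w ≠ y ∧ w ≠ c y ∧ c w = c y
      · -- detach `y` from its star
        obtain ⟨w, hw, hwy, hwc, hcw⟩ := hother
        simp only [Finset.mem_erase] at hw
        refine ⟨fun z => if z = x ∨ z = y then y else c z, ?_, ?_⟩
        · intro z hz
          by_cases hzx : z = x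
          · subst hzx; simp [hy, hxy]
          by_cases hzy : z = y
          · subst hzy; simp [hz]
          obtain ⟨⟨h1, h2⟩, h3, h4⟩ := hc1 z ⟨hzx, hz⟩
          have h5 : c z ≠ y := fun h => hcy (by rw [← h]; exact h3)
          simp [hzx, hzy, h1, h2, h3, h5]
          exact h4
        · intro z hz hcz
          by_cases hzx : z = x
          · subst hzx; simp [hyx] at hcz
          by_cases hzy : z = y
          · subst hzy; exact ⟨x, hx, Ne.symm hzx, by simp⟩
          simp only [hzx, hzy, or_self, if_false] at hcz
          obtain ⟨q, hq, hqz, hcq⟩ := hc2 z ⟨hzx, hz⟩ hcz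
          by_cases hqy : q = y
          · subst hqy
            refine ⟨w, hw.2, ?_, ?_⟩
            · rw [← hcq]; exact hwc
            · simp [hw.1, hwy, hcw, hcq]
          · exact ⟨q, hq.2, hqz, by simp [hq.1, hqy, hcq]⟩
      · -- the star is `{y, c y}`: make `y` its center
        push Not at hother
        simp only [Finset.mem_erase] at hother
        refine ⟨fun z => if z = x ∨ z = y ∨ z = c y then y else c z, ?_, ?_⟩
        · intro z hz
          by_cases hzx : z = x
          · subst hzx; simp [hy, hxy]
          by_cases hzy : z = y
          · subst hzy; simp [hz]
          by_cases hzc : z = c y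
          · simp only [hzc, or_true, if_true]
            simp only [hy, true_or, or_true, if_true, true_and]
            intro h
            exact hs _ _ (hrc h.symm)
          obtain ⟨⟨h1, h2⟩, h3, h4⟩ := hc1 z ⟨hzx, hz⟩
          have h5 : c z ≠ y := fun h => hcy (by rw [← h]; exact h3)
          have h6 : c z ≠ c y := hother z ⟨hzx, hz⟩ hzy hzc
          simp [hzx, hzy, hzc, h1, h2, h3, h5, h6]
          exact h4
        · intro z hz hcz
          by_cases hzx : z = x
          · subst hzx; simp [hyx] at hcz
          by_cases hzy : z = y
          · subst hzy; exact ⟨x, hx, Ne.symm hzx, by simp⟩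
          by_cases hzc : z = c y
          · simp only [hzc, or_true, if_true] at hcz
            exact absurd hcz.symm hcy
          simp only [hzx, hzy, hzc, or_self, if_false] at hcz
          obtain ⟨q, hq, hqz, hcq⟩ := hc2 z ⟨hzx, hz⟩ hcz
          have hqy : q ≠ y := by rintro rfl; exact hzc hcq.symm
          have hqc : q ≠ c y := by
            rintro rfl
            rw [hccy] at hcq
            exact hzc hcq.symm
          exact ⟨q, hq.2, hqz, by simp [hq.1, hqy, hqc, hcq]⟩
  · push Not at hrem
    rcases U.eq_empty_or_nonempty with rfl | ⟨x, hx⟩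
    · exact ⟨id, by simp [IsStarMap]⟩
    have hpend : ∀ x ∈ U, ∃ z ∈ U, r z x ∧ ∀ y ∈ U, r z y → y = x := by
      intro x hx
      obtain ⟨z, hz, hz'⟩ := hrem x hx
      simp only [Finset.mem_erase] at hz hz'
      have hall : ∀ y ∈ U, r z y → y = x := by
        intro y hy hzy
        by_contra hne
        exact hz' y ⟨hne, hy⟩ hzy
      obtain ⟨y, hy, hzy⟩ := hU z hz.2
      have := hall y hy hzy
      subst this
      exact ⟨z, hz.2, hzy, hall⟩
    obtain ⟨y, hy, hyx, hyo⟩ := hpend x hx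
    obtain ⟨z, hz, hzy, hzo⟩ := hpend y hy
    have hzx : z = x := hyo z hz (hs _ _ hzy)
    subst hzx
    have hyz : y ≠ z := fun h => hi y (by rwa [← h] at hyx)
    have hcard : ((U.erase z).erase y).card < n := by
      have h1 := Finset.card_erase_lt_of_mem hz
      have h2 := Finset.card_erase_le (s := U.erase z) (a := y)
      omega
    obtain ⟨c, hc1, hc2⟩ := ih _ hcard ((U.erase z).erase y) rfl (by
      intro w hw
      simp only [Finset.mem_erase] at hw ⊢
      obtain ⟨q, hq, hwq⟩ := hU w hw.2.2
      refine ⟨q, ⟨?_, ?_, hq⟩, hwq⟩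
      · rintro rfl; exact hw.2.1 (hyo w hw.2.2 (hs _ _ hwq))
      · rintro rfl; exact hw.1 (hzo w hw.2.2 (hs _ _ hwq)))
    simp only [Finset.mem_erase] at hc1 hc2
    refine ⟨fun w => if w = y ∨ w = z then y else c w, ?_, ?_⟩
    · intro w hw
      by_cases hwy : w = y
      · subst hwy; simp [hw]
      by_cases hwz : w = z
      · subst hwz; simp [hy, hzy]
      obtain ⟨⟨h1, h1', h2⟩, h3, h4⟩ := hc1 w ⟨hwy, hwz, hw⟩
      simp [hwy, hwz, h1, h1', h2, h3]
      exact h4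
    · intro w hw hcw
      by_cases hwy : w = y
      · subst hwy; exact ⟨z, hz, hyz.symm, by simp⟩
      by_cases hwz : w = z
      · subst hwz; simp [hyz] at hcw
      simp only [hwy, hwz, or_self, if_false] at hcw
      obtain ⟨q, hq, hqw, hcq⟩ := hc2 w ⟨hwy, hwz, hw⟩ hcw
      exact ⟨q, hq.2.2, hqw, by simp [hq.1, hq.2.1, hcq]⟩

lemma pf_spec (d : ℕ) (hd : 3 ≤ d) :
    d ≤ pf d * (pf d + 1) ∧ (pf d - 1) * pf d < d ∧ 2 ≤ pf d := by
  have hdR : (3 : ℝ) ≤ d := by exact_mod_cast hd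
  have hnn : (0 : ℝ) ≤ 4 * d + 1 := by positivity
  have hsq := Real.sq_sqrt hnn
  have hs0 := Real.sqrt_nonneg (4 * (d : ℝ) + 1)
  set s := Real.sqrt (4 * (d : ℝ) + 1) with hs
  have hs3 : 3 < s := by nlinarith
  have hle : (s - 1) / 2 ≤ (pf d : ℝ) := Nat.le_ceil _
  have hlt : (pf d : ℝ) < (s - 1) / 2 + 1 := Nat.ceil_lt_add_one (by linarith)
  have h2 : 2 ≤ pf d := by
    have : (1 : ℝ) < pf d := by linarith
    exact_mod_cast this
  refine ⟨?_, ?_, h2⟩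
  · have : (d : ℝ) ≤ pf d * (pf d + 1) := by nlinarith
    exact_mod_cast this
  · have : ((pf d : ℝ) - 1) * pf d < d := by
      have : (1 : ℝ) < pf d := by linarith
      nlinarith
    obtain ⟨q, hq⟩ : ∃ q, pf d = q + 1 := ⟨pf d - 1, by omega⟩
    rw [hq] at this ⊢
    push_cast at this
    simp only [Nat.add_sub_cancel]
    have h3 : (q : ℝ) * (q + 1) < d := by linarith
    exact_mod_cast h3

lemma small_dim (d : ℕ) (hd : 3 ≤ d) (h : 2 * d < d + pf d + ⌈(d : ℝ) / (pf d : ℝ)⌉₊ + 1) :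
    d ≤ 5 := by
  obtain ⟨h1, h2, h3⟩ := pf_spec d hd
  by_contra hcon
  push Not at hcon
  have hceil : ∀ m : ℕ, d ≤ m * pf d → ⌈(d : ℝ) / (pf d : ℝ)⌉₊ ≤ m := by
    intro m hm
    apply Nat.ceil_le.2
    rw [div_le_iff₀ (by exact_mod_cast (by omega : 0 < pf d))]
    exact_mod_cast hm
  have hc1 := hceil (pf d + 1) (by nlinarith)
  generalize hk : ⌈(d : ℝ) / (pf d : ℝ)⌉₊ = k at *
  generalize pf d = p at *
  obtain ⟨q, rfl⟩ : ∃ q, p = q + 1 := ⟨p - 1, by omega⟩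
  simp only [Nat.add_sub_cancel] at h2
  have hq : q < 3 := by
    by_contra hq
    push Not at hq
    nlinarith
  interval_cases q
  · omega
  · have := hceil 3; omega
  · have := hceil 3; omega

lemma small_gamma {d : ℕ} (P : Set (Euc d)) (hP : IsDPolytope P)
    (hcard : (verts P).ncard = 2 * d) (hGamma : 2 ≤ Gamma P) (hd3 : 3 ≤ d) (hd5 : d ≤ 5) :
    False := by
  classical
  have hf := verts_finite hP.1
  have hsymm : ∀ x y, InnerDiagonal P x y → InnerDiagonal P y x := by
    rintro x y ⟨h1, h2, h3, h4⟩
    exact ⟨h2, h1, h3.symm, by rwa [openSegment_symm]⟩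
  have hirr : ∀ x, ¬ InnerDiagonal P x x := fun x h => h.2.2.1 rfl
  have hbdd : BddAbove {n : ℕ | ∃ W v, LiesOpposite P W v ∧ W.ncard = n} := by
    refine ⟨(verts P).ncard, ?_⟩
    rintro n ⟨W, v, h, rfl⟩
    exact Set.ncard_le_ncard h.2.1 hf
  have hne : {n : ℕ | ∃ W v, LiesOpposite P W v ∧ W.ncard = n}.Nonempty := by
    by_contra h
    rw [Set.not_nonempty_iff_eq_empty] at h
    rw [Gamma, h] at hGamma
    simp at hGamma
  obtain ⟨W', v, hopp, hW'⟩ := Nat.sSup_mem hne hbdd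
  change W'.ncard = Gamma P at hW'
  obtain ⟨hv, hWV, hvW, hdiag, hself⟩ := hopp
  set g := Gamma P with hg
  set V := hf.toFinset with hV
  have hmem : ∀ x, x ∈ V ↔ x ∈ verts P := fun x => by simp [hV]
  have hVc : V.card = 2 * d := by rw [← hcard, Set.ncard_eq_toFinset_card _ hf]
  have hWf := hf.subset hWV
  set W := hWf.toFinset with hWdef
  have hmemW : ∀ x, x ∈ W ↔ x ∈ W' := fun x => by simp [hWdef]
  have hWc : W.card = g := by rw [← hW', Set.ncard_eq_toFinset_card _ hWf]
  set U := V \ insert v W with hU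
  have hmemU : ∀ x, x ∈ U ↔ x ∈ verts P \ (W' ∪ {v}) := fun x => by
    simp [hU, hmem, hmemW, or_comm]
  have hinsV : insert v W ⊆ V := by
    intro x hx
    rcases Finset.mem_insert.1 hx with rfl | hx
    · exact (hmem _).2 hv
    · exact (hmem _).2 (hWV ((hmemW _).1 hx))
  have hinsC : (insert v W).card = g + 1 := by
    rw [Finset.card_insert_of_notMem (by rwa [hmemW]), hWc]
  have hUc : U.card + (g + 1) = 2 * d := by
    rw [← hinsC, hU, Finset.card_sdiff_add_card_eq_card hinsV, hVc]
  obtain ⟨c, hc1, hc2⟩ := exists_starMap (InnerDiagonal P) hsymm hirr _ U rfl (by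
    intro x hx
    obtain ⟨y, hy, hxy⟩ := hself x ((hmemU x).1 hx)
    exact ⟨y, (hmemU y).2 hy, hsymm _ _ hxy⟩)
  set C := U.image c with hC
  have hCU : ∀ y ∈ C, y ∈ U ∧ c y = y := by
    intro y hy
    obtain ⟨x, hx, rfl⟩ := Finset.mem_image.1 hy
    exact ⟨(hc1 x hx).1, (hc1 x hx).2.1⟩
  -- fibers have at most `g + 1` elements
  have hfib : ∀ y ∈ C, (U.filter (fun x => c x = y)).card ≤ g + 1 := by
    intro y hy
    obtain ⟨hyU, hcy⟩ := hCU y hy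
    set L := (U.filter (fun x => c x = y)).erase y with hL
    have hyV := (hmemU y).1 hyU
    have hLopp : LiesOpposite P (L : Set (Euc d)) y := by
      refine ⟨hyV.1, ?_, by simp [hL], ?_, ?_⟩
      · intro x hx
        simp only [hL, Finset.coe_erase, Finset.coe_filter] at hx
        exact ((hmemU x).1 hx.1.1).1
      · intro w hw
        simp only [hL, Finset.mem_coe, Finset.mem_erase, Finset.mem_filter] at hw
        have := (hc1 w hw.2.1).2.2 (by rw [hw.2.2]; exact hw.1.symm)
        rw [hw.2.2] at this
        exact hsymm _ _ this
      · intro x hx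
        have hnot : ∀ z, z ∉ U → z ∈ verts P → z ∈ verts P \ ((L : Set (Euc d)) ∪ {y}) := by
          intro z hz hzP
          refine ⟨hzP, ?_⟩
          rintro (h | h)
          · simp only [hL, Finset.mem_coe, Finset.mem_erase, Finset.mem_filter] at h
            exact hz h.2.1
          · rw [Set.mem_singleton_iff] at h
            subst h
            exact hz hyU
        have hyes : ∀ z ∈ U, c z ≠ y → z ∈ verts P \ ((L : Set (Euc d)) ∪ {y}) := by
          intro z hz hzc
          refine ⟨((hmemU z).1 hz).1, ?_⟩
          rintro (h | h)
          · simp only [hL, Finset.mem_coe, Finset.mem_erase, Finset.mem_filter] at h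
            exact hzc h.2.2
          · rw [Set.mem_singleton_iff] at h
            subst h
            exact hzc hcy
        by_cases hxU : x ∈ U
        · have hxc : c x ≠ y := by
            intro h
            apply hx.2
            by_cases hxy : x = y
            · right; exact hxy
            · left; simp [hL, hxy, hxU, h]
          by_cases hxx : c x = x
          · obtain ⟨z, hz, hzx, hcz⟩ := hc2 x hxU hxx
            refine ⟨z, hyes z hz (by rw [hcz, ← hxx]; exact hxc), ?_⟩
            have := (hc1 z hz).2.2 (by rw [hcz]; exact hzx.symm)
            rwa [hcz] at this
          · exact ⟨c x, hyes (c x) (hc1 x hxU).1 (by rw [(hc1 x hxU).2.1]; exact hxc),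
              hsymm _ _ ((hc1 x hxU).2.2 hxx)⟩
        · have hvU : v ∉ U := by simp [hU]
          have hWU : ∀ w ∈ W', w ∉ U := by
            intro w hw h
            exact ((hmemU w).1 h).2 (Or.inl hw)
          by_cases hxv : x = v
          · have hWne : W'.Nonempty := by
              apply Set.nonempty_of_ncard_ne_zero
              omega
            obtain ⟨w, hw⟩ := hWne
            exact ⟨w, hnot w (hWU w hw) (hWV hw), by rw [hxv]; exact hsymm _ _ (hdiag w hw)⟩
          · have hxW : x ∈ W' := by
              by_contra hxW
              apply hxU
              rw [hmemU]
              exact ⟨hx.1, by rintro (h | h); exacts [hxW h, hxv h]⟩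
            exact ⟨v, hnot v hvU hv, hdiag x hxW⟩
    have hle : L.card ≤ g := le_csSup hbdd ⟨_, y, hLopp, by rw [Set.ncard_coe_finset]⟩
    have hyF : y ∈ U.filter (fun x => c x = y) := by simp [hyU, hcy]
    have := Finset.card_erase_add_one hyF
    rw [← hL] at this
    omega
  have hmaps : ∀ x ∈ U, c x ∈ C := fun x hx => Finset.mem_image_of_mem c hx
  have hUle : U.card ≤ (g + 1) * C.card :=
    Finset.card_le_mul_card_image_of_maps_to hmaps (g + 1) hfib
  have hfib2 : ∀ y ∈ C, 2 ≤ (U.filter (fun x => c x = y)).card := by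
    intro y hy
    obtain ⟨hyU, hcy⟩ := hCU y hy
    obtain ⟨x, hx, hxy, hcx⟩ := hc2 y hyU hcy
    exact Finset.one_lt_card.2 ⟨x, by simp [hx, hcx], y, by simp [hyU, hcy], hxy⟩
  have hUge : 2 * C.card ≤ U.card := by
    have h1 := Finset.card_eq_sum_card_fiberwise hmaps
    have h2 := Finset.card_nsmul_le_sum C _ 2 hfib2
    rw [← h1, smul_eq_mul] at h2
    omega
  -- facets through `v`
  have hFsplit : ∀ F : Finset (Euc d), (F : Set (Euc d)) ⊆ verts P → v ∈ F →
      (∀ x ∈ F, ∀ y ∈ F, ¬ InnerDiagonal P x y) →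
      C.card ≤ (U \ F).card ∧ C ⊆ (U \ F).image c ∧ F.card + (U \ F).card ≤ 1 + U.card := by
    intro F hFV hvF hFd
    have hsub : C ⊆ (U \ F).image c := by
      intro y hy
      obtain ⟨hyU, hcy⟩ := hCU y hy
      obtain ⟨x, hx, hxy, hcx⟩ := hc2 y hyU hcy
      by_cases hyF : y ∈ F
      · have hxF : x ∉ F := by
          intro hxF
          have := (hc1 x hx).2.2 (by rw [hcx]; exact hxy.symm)
          rw [hcx] at this
          exact hFd x hxF y hyF this
        exact Finset.mem_image.2 ⟨x, by simp [hx, hxF], hcx⟩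
      · exact Finset.mem_image.2 ⟨y, by simp [hyU, hyF], hcy⟩
    refine ⟨(Finset.card_le_card hsub).trans Finset.card_image_le, hsub, ?_⟩
    have hFsub : F ⊆ insert v (U ∩ F) := by
      intro x hx
      by_cases hxv : x = v
      · simp [hxv]
      · have hxU : x ∈ U := by
          rw [hmemU]
          refine ⟨hFV hx, ?_⟩
          rintro (h | h)
          · exact hFd v hvF x hx (hdiag x h)
          · exact hxv h
        simp [hx, hxU]
    have h1 := Finset.card_le_card hFsub
    have h2 := Finset.card_insert_le v (U ∩ F)
    have h3 := Finset.card_sdiff_add_card_inter U F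
    omega
  have hgood : ∃ F : Finset (Euc d), d ≤ F.card ∧ C.card + 1 ≤ (U \ F).card ∧
      F.card + (U \ F).card ≤ 1 + U.card := by
    by_contra hno
    push Not at hno
    have htight : ∀ F : Finset (Euc d), (F : Set (Euc d)) ⊆ verts P → v ∈ F → d ≤ F.card →
        (∀ x ∈ F, ∀ y ∈ F, ¬ InnerDiagonal P x y) →
        (U \ F).card = C.card ∧ F.card + (U \ F).card ≤ 1 + U.card ∧
          Set.InjOn c (U \ F : Finset (Euc d)) := by
      intro F hFV hvF hFc hFd
      obtain ⟨h1, h2, h3⟩ := hFsplit F hFV hvF hFd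
      have h4 : (U \ F).card = C.card := by
        by_contra h
        have := hno F hFc (by omega)
        omega
      refine ⟨h4, h3, ?_⟩
      apply Finset.card_image_iff.1
      have h5 := Finset.card_le_card h2
      have h6 : ((U \ F).image c).card ≤ (U \ F).card := Finset.card_image_le
      omega
    -- all fibers have two elements
    have hfib2' : ∀ y ∈ C, (U.filter (fun x => c x = y)).card ≤ 2 := by
      intro y hy
      obtain ⟨hyU, hcy⟩ := hCU y hy
      have hyF : y ∈ U.filter (fun x => c x = y) := by simp [hyU, hcy]
      by_contra hlt
      push Not at hlt
      have h1 := Finset.card_erase_add_one hyF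
      obtain ⟨a, ha, b, hb, hab⟩ :=
        Finset.one_lt_card.1 (by omega : 1 < ((U.filter (fun x => c x = y)).erase y).card)
      simp only [Finset.mem_erase, Finset.mem_filter] at ha hb
      have haV := (hmemU a).1 ha.2.1
      obtain ⟨F, hFV, hvF, haF, hFc, hFd⟩ := exists_facet hP haV.1 hv
        (fun h => haV.2 (Or.inr h))
      obtain ⟨-, -, hinj⟩ := htight F hFV hvF hFc hFd
      have haUF : a ∈ ((U \ F : Finset (Euc d)) : Set (Euc d)) := by simp [ha.2.1, haF]
      have hyF : y ∈ F := by
        by_contra hyF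
        exact ha.1 (hinj haUF (by simp [hyU, hyF]) (by rw [ha.2.2, hcy]))
      have hbF : b ∈ F := by
        by_contra hbF
        exact hab (hinj haUF (by simp [hb.2.1, hbF]) (by rw [ha.2.2, hb.2.2]))
      have := (hc1 b hb.2.1).2.2 (by rw [hb.2.2]; exact hb.1.symm)
      rw [hb.2.2] at this
      exact hFd b hbF y hyF this
    have hU2 : U.card ≤ 2 * C.card := Finset.card_le_mul_card_image_of_maps_to hmaps 2 hfib2'
    have hWne : W'.Nonempty := by
      apply Set.nonempty_of_ncard_ne_zero
      omega
    obtain ⟨w, hw⟩ := hWne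
    obtain ⟨F, hFV, hvF, -, hFc, hFd⟩ := exists_facet hP (hWV hw) hv
      (fun h => hvW (h ▸ hw))
    obtain ⟨h1, h2, -⟩ := htight F hFV hvF hFc hFd
    omega
  obtain ⟨F, h1, h2, h3⟩ := hgood
  have h4 : C.card + 1 + g ≤ d := by omega
  have h5 : 2 * d ≤ (g + 1) * (C.card + 1) := by nlinarith
  generalize C.card = k at *
  have hg5 : g ≤ 5 := by omega
  have hk5 : k ≤ 5 := by omega
  clear_value g
  interval_cases g <;> omega

/-- A Mani `d`-polytope (`d ≥ 3`) with `Γ(P) ≥ 2` has at least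
`d + p(d) + ⌈d/p(d)⌉ + 1` vertices. -/
theorem mani_gammaTwo_card {d : ℕ} (hd : 3 ≤ d) (P : Set (Euc d))
    (hP : IsManiPolytope P) (hGamma : 2 ≤ Gamma P) :
    d + pf d + ⌈(d : ℝ) / (pf d : ℝ)⌉₊ + 1 ≤ (verts P).ncard := by

  obtain ⟨hD, -, hc⟩ := hP
  by_contra hcon
  push Not at hcon
  have h1 : Mf d = 2 * d := by
    rw [hc, Mf] at hcon
    rw [Mf]
    omega
  rw [hc, h1] at hcon
  exact small_gamma P hD (hc.trans h1) hGamma hd (small_dim d hd hcon)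
end
end

section
/- Let d ≥ 3 and let P be a Mani d-polytope with Γ(P) ≥ 2. Then d ≥ 6. -/
open scoped RealInnerProductSpace

noncomputable section

/-- Peeling a star off a finite set in which every element has a neighbour. -/
lemma peel_star {α : Type*} (R : α → α → Prop) (hs : ∀ a b, R a b → R b a)
    (hne : ∀ a b, R a b → a ≠ b) (U : Set α) (hU : U.Nonempty)
    (hI : ∀ v ∈ U, ∃ u ∈ U, R u v) :
    ∃ v ∈ U, ∃ W ⊆ U, W.Nonempty ∧ v ∉ W ∧ (∀ w ∈ W, R v w) ∧
      ∀ z ∈ U \ (W ∪ {v}), ∃ u ∈ U \ (W ∪ {v}), R u z := by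
  obtain ⟨u, hu⟩ := hU
  obtain ⟨y, hy, hyu⟩ := hI u hu
  have hyu' := hne _ _ hyu
  set S : Set α := {z | z ∈ U ∧ z ≠ u ∧ z ≠ y ∧ ∀ t ∈ U, R t z → t = u ∨ t = y} with hS
  have key : ∀ z ∈ U, z ≠ u → z ≠ y → z ∉ S → ∃ t ∈ U, t ≠ u ∧ t ≠ y ∧ t ∉ S ∧ R t z := by
    intro z hz h1 h2 h3
    have : ∃ t ∈ U, R t z ∧ t ≠ u ∧ t ≠ y := by
      by_contra hcon
      push Not at hcon
      exact h3 ⟨hz, h1, h2, fun t ht hR => by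
        by_cases h : t = u
        · exact Or.inl h
        · exact Or.inr (hcon t ht hR h)⟩
    obtain ⟨t, ht, hR, h4, h5⟩ := this
    refine ⟨t, ht, h4, h5, fun h => ?_, hR⟩
    rcases h.2.2.2 z hz (hs _ _ hR) with h | h
    · exact h1 h
    · exact h2 h
  have Sadj : ∀ z ∈ S, R u z ∨ R y z := by
    intro z hz
    obtain ⟨t, ht, hR⟩ := hI z hz.1
    rcases hz.2.2.2 t ht hR with rfl | rfl
    · exact Or.inl hR
    · exact Or.inr hR
  by_cases h1 : ∀ z ∈ S, R u z
  · refine ⟨u, hu, S ∪ {y}, ?_, ⟨y, by simp⟩, ?_, ?_, ?_⟩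
    · rintro z (hz | rfl)
      · exact hz.1
      · exact hy
    · rintro (h | h)
      · exact h.2.1 rfl
      · exact hyu' h.symm
    · rintro z (hz | rfl)
      · exact h1 z hz
      · exact hs _ _ hyu
    · rintro z ⟨hz, hz'⟩
      simp only [Set.mem_union, Set.mem_singleton_iff, not_or] at hz'
      obtain ⟨t, a, b, c, e, f⟩ := key z hz hz'.2 hz'.1.2 hz'.1.1
      exact ⟨t, ⟨a, by simp [b, c, e]⟩, f⟩
  by_cases h2 : ∀ z ∈ S, R y z
  · refine ⟨y, hy, S ∪ {u}, ?_, ⟨u, by simp⟩, ?_, ?_, ?_⟩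
    · rintro z (hz | rfl)
      · exact hz.1
      · exact hu
    · rintro (h | h)
      · exact h.2.2.1 rfl
      · exact hyu' h
    · rintro z (hz | rfl)
      · exact h2 z hz
      · exact hyu
    · rintro z ⟨hz, hz'⟩
      simp only [Set.mem_union, Set.mem_singleton_iff, not_or] at hz'
      obtain ⟨t, a, b, c, e, f⟩ := key z hz hz'.1.2 hz'.2 hz'.1.1
      exact ⟨t, ⟨a, by simp [b, c, e]⟩, f⟩
  push Not at h1 h2
  obtain ⟨a, ha, hau⟩ := h1
  obtain ⟨b, hb, hby⟩ := h2
  have hay : R y a := (Sadj a ha).resolve_left hau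
  have hbu : R u b := (Sadj b hb).resolve_right hby
  refine ⟨u, hu, {z | z ∈ S ∧ R u z}, fun z hz => hz.1.1, ⟨b, hb, hbu⟩,
    fun h => h.1.2.1 rfl, fun w hw => hw.2, ?_⟩
  rintro z ⟨hz, hz'⟩
  simp only [Set.mem_union, Set.mem_singleton_iff, not_or, Set.mem_setOf_eq] at hz'
  have hyS : y ∉ S := fun h => h.2.2.1 rfl
  by_cases hzy : z = y
  · subst hzy
    refine ⟨a, ⟨ha.1, ?_⟩, hs _ _ hay⟩
    rintro (h | h)
    · exact hau h.2
    · exact ha.2.1 h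
  by_cases hzS : z ∈ S
  · refine ⟨y, ⟨hy, ?_⟩, (Sadj z hzS).resolve_left fun h => hz'.1 ⟨hzS, h⟩⟩
    rintro (h | h)
    · exact hyS h.1
    · exact hyu' h
  · obtain ⟨t, a, b, c, e, f⟩ := key z hz hz'.2 hzy hzS
    refine ⟨t, ⟨a, ?_⟩, f⟩
    rintro (h | h)
    · exact e h.1
    · exact b h

/-- `f` describes a partition of `U` into stars of `R`, each with at least one leaf. -/
def StarMap {α : Type*} (R : α → α → Prop) (U : Set α) (f : α → α) : Prop :=
  (∀ u ∈ U, f u ∈ U ∧ f (f u) = f u ∧ (f u ≠ u → R (f u) u)) ∧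
    ∀ u ∈ U, f u = u → ∃ w ∈ U, w ≠ u ∧ f w = u

open Classical in
lemma StarMap.extend {α : Type*} (R : α → α → Prop) (U : Set α) (v : α) (hv : v ∈ U)
    (W : Set α) (hW : W ⊆ U) (hne : W.Nonempty) (hvW : v ∉ W) (hR : ∀ w ∈ W, R v w)
    (f : α → α) (hf : StarMap R (U \ (W ∪ {v})) f) :
    StarMap R U (fun x => if x ∈ W ∪ {v} then v else f x) := by
  obtain ⟨h1, h2⟩ := hf
  have hvv : v ∈ W ∪ {v} := by simp
  constructor
  · intro u hu
    by_cases h : u ∈ W ∪ {v}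
    · simp only [h, if_true, hvv]
      refine ⟨hv, trivial, fun hne => hR u ?_⟩
      rcases h with h | h
      · exact h
      · exact absurd h.symm hne
    · obtain ⟨a, b, c⟩ := h1 u ⟨hu, h⟩
      simp only [h, if_false, a.2]
      exact ⟨a.1, b, c⟩
  · intro u hu hfu
    by_cases h : u ∈ W ∪ {v}
    · simp only [h, if_true] at hfu
      subst hfu
      obtain ⟨w, hw⟩ := hne
      refine ⟨w, hW hw, fun h => hvW (h ▸ hw), ?_⟩
      simp [hw]
    · simp only [h, if_false] at hfu
      obtain ⟨w, hw, hwu, hfw⟩ := h2 u ⟨hu, h⟩ hfu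
      refine ⟨w, hw.1, hwu, ?_⟩
      simp only [hw.2, if_false, hfw]

lemma exists_starMap_s2 {α : Type*} (R : α → α → Prop) (hs : ∀ a b, R a b → R b a)
    (hne : ∀ a b, R a b → a ≠ b) (n : ℕ) : ∀ (U : Set α), U.Finite → U.ncard = n →
    (∀ v ∈ U, ∃ u ∈ U, R u v) → ∃ f, StarMap R U f := by
  induction n using Nat.strong_induction_on with
  | _ n ih =>
    intro U hfin hn hI
    rcases U.eq_empty_or_nonempty with rfl | hU
    · exact ⟨id, by simp [StarMap]⟩
    obtain ⟨v, hv, W, hW, hWne, hvW, hR, hrest⟩ := peel_star R hs hne U hU hI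
    have hlt : (U \ (W ∪ {v})).ncard < n := by
      rw [← hn]
      apply Set.ncard_lt_ncard _ hfin
      refine ⟨Set.diff_subset, fun h => (h hv).2 (by simp)⟩
    obtain ⟨f, hf⟩ := ih _ hlt _ (hfin.subset Set.diff_subset) rfl hrest
    exact ⟨_, StarMap.extend R U v hv W hW hWne hvW hR f hf⟩

open Classical in
/-- The combinatorial core. -/
lemma star_count {α : Type*} (R : α → α → Prop) (V : Finset α) (f : α → α)
    (hf : StarMap R (V : Set α) f) (d : ℕ) (hV : V.card = 2 * d) (hd : d < 6)
    (hT : ∀ v ∈ V, ∀ x ∈ V, x ≠ v → ∃ T ⊆ V, v ∈ T ∧ x ∉ T ∧ d ≤ T.card ∧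
      ∀ a ∈ T, ∀ b ∈ T, ¬ R a b)
    (c0 : α) (hc0 : c0 ∈ V) (hfc0 : f c0 = c0)
    (h2 : 2 ≤ (V.filter fun u => f u = c0 ∧ u ≠ c0).card) : False := by
  obtain ⟨h1, hl⟩ := hf
  simp only [Finset.mem_coe] at h1 hl
  set C := V.filter fun u => f u = u with hC
  set K : α → Finset α := fun c => V.filter fun u => f u = c ∧ u ≠ c with hK
  have hmap : ∀ u ∈ V, f u ∈ C := fun u hu => by
    simp [hC, h1 u hu]
  have hKpos : ∀ c ∈ C, 1 ≤ (K c).card := by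
    intro c hc
    simp only [hC, Finset.mem_filter] at hc
    obtain ⟨w, hw, hwc, hfw⟩ := hl c hc.1 hc.2
    exact Finset.card_pos.mpr ⟨w, by simp [hK, hw, hwc, hfw]⟩
  have hfib : ∀ c ∈ C, V.filter (fun u => f u = c) = insert c (K c) := by
    intro c hc
    simp only [hC, Finset.mem_filter] at hc
    ext u
    simp only [hK, Finset.mem_filter, Finset.mem_insert]
    by_cases h : u = c
    · subst h; simp [hc]
    · simp [h]
  have hcV : ∀ c, c ∉ K c := fun c => by simp [hK]
  have hsum : 2 * d = ∑ c ∈ C, ((K c).card + 1) := by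
    rw [← hV, Finset.card_eq_sum_card_fiberwise (f := f) (t := C) hmap]
    refine Finset.sum_congr rfl fun c hc => ?_
    rw [hfib c hc, Finset.card_insert_of_notMem (hcV c)]
  -- intersection of an independent set with a star
  have hTsum : ∀ T ⊆ V, T.card = ∑ c ∈ C, (T.filter fun u => f u = c).card := by
    intro T hTV
    exact Finset.card_eq_sum_card_fiberwise (f := f) (t := C) fun u hu => hmap u (hTV hu)
  have hTone : ∀ T ⊆ V, (∀ a ∈ T, ∀ b ∈ T, ¬ R a b) → ∀ c ∈ T,
      (T.filter fun u => f u = c).card ≤ 1 := by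
    intro T hTV hind c hcT
    rw [Finset.card_le_one]
    have : ∀ a ∈ T.filter (fun u => f u = c), a = c := by
      intro a ha
      simp only [Finset.mem_filter] at ha
      by_contra hne
      have := (h1 a (hTV ha.1)).2.2 (by rw [ha.2]; exact fun h => hne h.symm)
      rw [ha.2] at this
      exact hind c hcT a ha.1 this
    intro a ha b hb
    rw [this a ha, this b hb]
  have hTsub : ∀ T ⊆ V, ∀ c, c ∉ T → (T.filter fun u => f u = c) ⊆ K c := by
    intro T hTV c hcT u hu
    simp only [Finset.mem_filter] at hu
    simp only [hK, Finset.mem_filter]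
    exact ⟨hTV hu.1, hu.2, fun h => hcT (h ▸ hu.1)⟩
  have hTle : ∀ T ⊆ V, (∀ a ∈ T, ∀ b ∈ T, ¬ R a b) → ∀ c ∈ C,
      (T.filter fun u => f u = c).card ≤ (K c).card := by
    intro T hTV hind c hc
    by_cases hcT : c ∈ T
    · exact (hTone T hTV hind c hcT).trans (hKpos c hc)
    · exact Finset.card_le_card (hTsub T hTV c hcT)
  have hc0C : c0 ∈ C := by simp [hC, hc0, hfc0]
  obtain ⟨c1, hc1, hmax⟩ := Finset.exists_max_image C (fun c => (K c).card) ⟨c0, hc0C⟩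
  have hk2 : 2 ≤ (K c1).card := h2.trans (hmax c0 hc0C)
  have hc1V : c1 ∈ V := (Finset.mem_filter.mp hc1).1
  rw [← Finset.add_sum_erase C _ hc1] at hsum
  have hcardC : (C.erase c1).card + 1 = C.card := Finset.card_erase_add_one hc1
  by_cases hcase : ∃ c2 ∈ C.erase c1, 2 ≤ (K c2).card
  · obtain ⟨c2, hc2, hKc2⟩ := hcase
    obtain ⟨x, hx⟩ : (K c2).Nonempty := Finset.card_pos.mp (by omega)
    have hx' := hx
    simp only [hK, Finset.mem_filter] at hx'
    have hxc1 : x ≠ c1 := by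
      rintro rfl
      have := (Finset.mem_filter.mp hc1).2
      exact hx'.2.2 (this.symm.trans hx'.2.1)
    obtain ⟨T, hTV, hc1T, hxT, hdT, hind⟩ := hT c1 hc1V x hx'.1 hxc1
    have e1 := hTsum T hTV
    rw [← Finset.add_sum_erase C _ hc1] at e1
    have e2 := hTone T hTV hind c1 hc1T
    have e3 : ∑ c ∈ C.erase c1, (T.filter fun u => f u = c).card
        < ∑ c ∈ C.erase c1, (K c).card := by
      apply Finset.sum_lt_sum
      · intro c hc
        exact hTle T hTV hind c (Finset.mem_of_mem_erase hc)
      · refine ⟨c2, hc2, ?_⟩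
        by_cases hcT : c2 ∈ T
        · have := hTone T hTV hind c2 hcT
          omega
        · apply Finset.card_lt_card
          refine ⟨hTsub T hTV c2 hcT, fun h => hxT ?_⟩
          exact (Finset.mem_filter.mp (h hx)).1
    have e4 : ∑ c ∈ C.erase c1, ((K c).card + 1) ≤ (C.erase c1).card * ((K c1).card + 1) := by
      apply Finset.sum_le_card_nsmul
      intro c hc
      have := hmax c (Finset.mem_of_mem_erase hc)
      omega
    have e5 : ∑ c ∈ C.erase c1, ((K c).card + 1)
        = ∑ c ∈ C.erase c1, (K c).card + (C.erase c1).card := by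
      rw [Finset.sum_add_distrib]; simp
    generalize (K c1).card = k at *
    generalize (C.erase c1).card = s at *
    have a1 : s + 1 + k ≤ d := by omega
    have a2 : 2 * d ≤ k + 1 + s * (k + 1) := by omega
    have : s ≤ 5 := by omega
    have : k ≤ 5 := by omega
    interval_cases d <;> interval_cases k <;> omega
  · push Not at hcase
    have hone : ∀ c ∈ C.erase c1, (K c).card = 1 := fun c hc => by
      have := hcase c hc
      have := hKpos c (Finset.mem_of_mem_erase hc)
      omega
    obtain ⟨x, hx⟩ : (K c1).Nonempty := Finset.card_pos.mp (by omega)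
    have hx' := hx
    simp only [hK, Finset.mem_filter] at hx'
    obtain ⟨T, hTV, hc1T, hxT, hdT, hind⟩ := hT c1 hc1V x hx'.1 hx'.2.2
    have e1 := hTsum T hTV
    rw [← Finset.add_sum_erase C _ hc1] at e1
    have e2 := hTone T hTV hind c1 hc1T
    have e3 : ∑ c ∈ C.erase c1, (T.filter fun u => f u = c).card
        ≤ ∑ c ∈ C.erase c1, 1 := by
      apply Finset.sum_le_sum
      intro c hc
      rw [← hone c hc]
      exact hTle T hTV hind c (Finset.mem_of_mem_erase hc)
    have e4 : ∑ c ∈ C.erase c1, ((K c).card + 1) = ∑ c ∈ C.erase c1, 2 :=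
      Finset.sum_congr rfl fun c hc => by rw [hone c hc]
    simp only [Finset.sum_const, smul_eq_mul] at e3 e4
    omega

open Classical in
/-- Pivoting: if few points are tight, one can make more points tight. -/
lemma pivot {d : ℕ} (V : Finset (Euc d)) (v x : Euc d) (hvV : v ∈ V)
    (hspan : affineSpan ℝ (V : Set (Euc d)) = ⊤) (f : Module.Dual ℝ (Euc d))
    (hf : ∀ u ∈ V, f (u - v) ≤ 0) (hfx : f (x - v) < 0)
    (hcard : (V.filter fun u => f (u - v) = 0).card < d) :
    ∃ f' : Module.Dual ℝ (Euc d), (∀ u ∈ V, f' (u - v) ≤ 0) ∧ f' (x - v) < 0 ∧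
      (V.filter fun u => f (u - v) = 0).card < (V.filter fun u => f' (u - v) = 0).card := by
  set T := V.filter fun u => f (u - v) = 0 with hT
  have hvT : v ∈ T := by simp [hT, hvV]
  let B : Finset (Euc d) := insert (x - v) ((T.erase v).image fun u => u - v)
  have hB : B.card < d := by
    have h1 : B.card ≤ ((T.erase v).image fun u => u - v).card + 1 := Finset.card_insert_le _ _
    have h2 : ((T.erase v).image fun u => u - v).card ≤ (T.erase v).card := Finset.card_image_le
    have h3 := Finset.card_erase_add_one hvT
    omega
  have hlt : Submodule.span ℝ (B : Set (Euc d)) < ⊤ := by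
    rw [lt_top_iff_ne_top]
    intro h
    have h1 := finrank_span_finset_le_card (R := ℝ) B
    rw [Set.finrank, h, finrank_top] at h1
    simp at h1
    omega
  obtain ⟨g0, hg0, hg0k⟩ := Submodule.exists_le_ker_of_lt_top _ hlt
  have hvs : Submodule.span ℝ ((fun u => u - v) '' (V : Set (Euc d))) = ⊤ := by
    have := vectorSpan_eq_span_vsub_set_right ℝ (s := (V : Set (Euc d))) (p := v) hvV
    rw [← direction_affineSpan, hspan, AffineSubspace.direction_top] at this
    simpa using this.symm
  have hex : ∃ u ∈ V, g0 (u - v) ≠ 0 := by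
    by_contra hcon
    push Not at hcon
    apply hg0
    apply LinearMap.ker_eq_top.mp
    rw [eq_top_iff, ← hvs, Submodule.span_le]
    rintro _ ⟨u, hu, rfl⟩
    exact hcon u hu
  have hg0T : ∀ u ∈ T, g0 (u - v) = 0 := by
    intro u hu
    by_cases h : u = v
    · simp [h]
    · apply hg0k
      apply Submodule.subset_span
      simp only [B, Finset.coe_insert, Finset.coe_image]
      exact Or.inr ⟨u, by simp [h, hu], rfl⟩
  have hg0x : g0 (x - v) = 0 := by
    apply hg0k
    apply Submodule.subset_span
    simp [B]
  obtain ⟨g, hgT, hgx, u0, hu0, hgu0⟩ : ∃ g : Module.Dual ℝ (Euc d),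
      (∀ u ∈ T, g (u - v) = 0) ∧ g (x - v) = 0 ∧ ∃ u ∈ V, 0 < g (u - v) := by
    obtain ⟨u, hu, hgu⟩ := hex
    rcases lt_or_gt_of_ne hgu with h | h
    · refine ⟨-g0, fun w hw => ?_, ?_, u, hu, ?_⟩
      · rw [LinearMap.neg_apply, hg0T w hw, neg_zero]
      · rw [LinearMap.neg_apply, hg0x, neg_zero]
      · rw [LinearMap.neg_apply]; linarith
    · exact ⟨g0, hg0T, hg0x, u, hu, h⟩
  obtain ⟨w, hw, hmin⟩ := Finset.exists_min_image (V.filter fun u => 0 < g (u - v))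
    (fun u => -f (u - v) / g (u - v)) ⟨u0, Finset.mem_filter.mpr ⟨hu0, hgu0⟩⟩
  simp only [Finset.mem_filter] at hw hmin
  obtain ⟨hwV, hgw⟩ := hw
  set t := -f (w - v) / g (w - v) with ht
  have ht0 : 0 ≤ t := div_nonneg (by linarith [hf w hwV]) hgw.le
  refine ⟨f + t • g, ?_, ?_, ?_⟩
  · intro u hu
    simp only [LinearMap.add_apply, LinearMap.smul_apply, smul_eq_mul]
    by_cases h : 0 < g (u - v)
    · have := hmin u ⟨hu, h⟩
      rw [le_div_iff₀ h] at this
      linarith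
    · have := mul_nonneg ht0 (by linarith : 0 ≤ -g (u - v))
      have := hf u hu
      linarith
  · simp only [LinearMap.add_apply, LinearMap.smul_apply, smul_eq_mul, hgx]
    linarith
  · apply Finset.card_lt_card
    refine ⟨?_, fun h => ?_⟩
    · intro u hu
      have h0 := hgT u hu
      simp only [hT, Finset.mem_filter] at hu
      simp only [Finset.mem_filter, LinearMap.add_apply, LinearMap.smul_apply, smul_eq_mul, h0]
      exact ⟨hu.1, by linarith [hu.2]⟩
    · have hwT : w ∈ T := by
        apply h
        simp only [Finset.mem_filter, LinearMap.add_apply, LinearMap.smul_apply, smul_eq_mul]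
        refine ⟨hwV, ?_⟩
        rw [ht]
        field_simp
        ring
      exact hgw.ne' (hgT w hwT)

open Classical in
lemma exists_tight {d : ℕ} (V : Finset (Euc d)) (v x : Euc d) (hvV : v ∈ V)
    (hspan : affineSpan ℝ (V : Set (Euc d)) = ⊤) (n : ℕ) :
    ∀ (f : Module.Dual ℝ (Euc d)), (∀ u ∈ V, f (u - v) ≤ 0) → f (x - v) < 0 →
    V.card - (V.filter fun u => f (u - v) = 0).card = n →
    ∃ f' : Module.Dual ℝ (Euc d), (∀ u ∈ V, f' (u - v) ≤ 0) ∧ f' (x - v) < 0 ∧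
      d ≤ (V.filter fun u => f' (u - v) = 0).card := by
  induction n using Nat.strong_induction_on with
  | _ n ih =>
    intro f hf hfx hn
    by_cases h : d ≤ (V.filter fun u => f (u - v) = 0).card
    · exact ⟨f, hf, hfx, h⟩
    · obtain ⟨f', h1, h2, h3⟩ := pivot V v x hvV hspan f hf hfx (not_le.mp h)
      have h4 : (V.filter fun u => f' (u - v) = 0).card ≤ V.card := Finset.card_filter_le _ _
      exact ih _ (by omega) f' h1 h2 rfl

lemma exists_separating {d : ℕ} (P : Set (Euc d)) (hc : Convex ℝ P) (V : Finset (Euc d))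
    (hV : (V : Set (Euc d)) ⊆ P) (v : Euc d) (hv : v ∈ Set.extremePoints ℝ P) :
    ∃ f : Module.Dual ℝ (Euc d), ∀ u ∈ V, u ≠ v → f (u - v) < 0 := by
  rw [hc.mem_extremePoints_iff_mem_diff_convexHull_diff] at hv
  have hsub : convexHull ℝ ((V : Set (Euc d)) \ {v}) ⊆ convexHull ℝ (P \ {v}) :=
    convexHull_mono (Set.diff_subset_diff_left hV)
  have hfin : ((V : Set (Euc d)) \ {v}).Finite := V.finite_toSet.subset Set.diff_subset
  obtain ⟨f, a, h1, h2⟩ := geometric_hahn_banach_closed_point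
    (convex_convexHull ℝ ((V : Set (Euc d)) \ {v}))
    (hfin.isCompact_convexHull (𝕜 := ℝ)).isClosed (fun h => hv.2 (hsub h))
  refine ⟨f.toLinearMap, fun u hu hne => ?_⟩
  have := h1 u (subset_convexHull ℝ _ ⟨hu, hne⟩)
  simp only [map_sub, ContinuousLinearMap.coe_coe]
  linarith

lemma not_innerDiagonal {d : ℕ} (P : Set (Euc d)) (f : Module.Dual ℝ (Euc d)) (c : ℝ)
    (hP : ∀ y ∈ P, f y ≤ c) (x : Euc d) (hfx : f x < c) (a b : Euc d)
    (ha : f a = c) (hb : f b = c) : ¬ InnerDiagonal P a b := by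
  rintro ⟨-, -, -, y, hy, hyP⟩
  obtain ⟨s, t, hs, ht, hst, rfl⟩ := hy
  set y := s • a + t • b with hy
  have hfy : f y = c := by
    simp only [hy, map_add, map_smul, smul_eq_mul, ha, hb]
    rw [← add_mul, hst, one_mul]
  have hcont : Continuous fun r : ℝ => y + r • (y - x) := by fun_prop
  have hnhds : ∀ᶠ r in nhds (0 : ℝ), y + r • (y - x) ∈ P := by
    apply hcont.continuousAt
    simpa using mem_interior_iff_mem_nhds.mp hyP
  obtain ⟨ε, hε, hball⟩ := Metric.eventually_nhds_iff.mp hnhds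
  have := hP _ (hball (y := ε / 2) (by rw [Real.dist_eq, sub_zero, abs_of_pos] <;> linarith))
  simp only [map_add, map_smul, map_sub, smul_eq_mul, hfy] at this
  nlinarith

lemma innerDiagonal_symm {d : ℕ} (P : Set (Euc d)) (a b : Euc d) (h : InnerDiagonal P a b) :
    InnerDiagonal P b a := by
  obtain ⟨h1, h2, h3, h4⟩ := h
  exact ⟨h2, h1, h3.symm, by rwa [openSegment_symm]⟩

lemma pf_eq_two {d : ℕ} (h3 : 3 ≤ d) (h5 : d ≤ 5) : pf d = 2 := by
  unfold pf
  have h3' : (3 : ℝ) ≤ d := by exact_mod_cast h3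
  have h5' : (d : ℝ) ≤ 5 := by exact_mod_cast h5
  rw [Nat.ceil_eq_iff (by norm_num)]
  have a1 : (3 : ℝ) < Real.sqrt (4 * d + 1) := by
    rw [Real.lt_sqrt (by norm_num)]; linarith
  have a2 : Real.sqrt (4 * d + 1) ≤ 5 := by
    rw [Real.sqrt_le_left (by norm_num)]; linarith
  constructor
  · norm_num; linarith
  · norm_num; linarith

lemma Mf_eq {d : ℕ} (h3 : 3 ≤ d) (h5 : d ≤ 5) : Mf d = 2 * d := by
  unfold Mf
  rw [pf_eq_two h3 h5]
  apply min_eq_left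
  have h3' : (3 : ℝ) ≤ d := by exact_mod_cast h3
  have : d ≤ 2 * ⌈(d : ℝ) / ((2 : ℕ) : ℝ)⌉₊ := by
    have := Nat.le_ceil ((d : ℝ) / ((2 : ℕ) : ℝ))
    push_cast at this ⊢
    have h : (d : ℝ) ≤ 2 * (⌈(d : ℝ) / 2⌉₊ : ℝ) := by linarith
    exact_mod_cast h
  omega

/-- A Mani `d`-polytope (`d ≥ 3`) with `Γ(P) ≥ 2` forces `d ≥ 6`. -/
theorem mani_gammaTwo_dim {d : ℕ} (hd : 3 ≤ d) (P : Set (Euc d))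
    (hP : IsManiPolytope P) (hGamma : 2 ≤ Gamma P) : 6 ≤ d := by
  classical
  by_contra hlt
  obtain ⟨⟨⟨S, hSfin, hPS⟩, haff⟩, -, hcard⟩ := hP
  have hVfin : (verts P).Finite := by
    refine hSfin.subset ?_
    unfold verts
    rw [hPS]
    exact extremePoints_convexHull_subset
  have hconv : Convex ℝ P := hPS ▸ convex_convexHull ℝ S
  have hcomp : IsCompact P := hPS ▸ hSfin.isCompact_convexHull (𝕜 := ℝ)
  have hPV : convexHull ℝ (verts P) = P := by
    have h := closure_convexHull_extremePoints hcomp hconv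
    rwa [IsClosed.closure_eq] at h
    exact (hVfin.isCompact_convexHull (𝕜 := ℝ)).isClosed
  obtain ⟨W, v0, hopp, hW2⟩ : ∃ W v, LiesOpposite P W v ∧ 2 ≤ W.ncard := by
    by_contra hcon
    push Not at hcon
    have : Gamma P ≤ 1 := by
      apply csSup_le'
      rintro n ⟨W, v, h, rfl⟩
      have := hcon W v h
      omega
    omega
  obtain ⟨hv0, hWV, hv0W, hWd, hill⟩ := hopp
  obtain ⟨V, hV⟩ : ∃ V : Finset (Euc d), (V : Set (Euc d)) = verts P :=
    ⟨hVfin.toFinset, by simp⟩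
  have hVaff : affineSpan ℝ (V : Set (Euc d)) = ⊤ := by
    rw [hV, ← affineSpan_convexHull, hPV, haff]
  have hVcard : V.card = 2 * d := by
    rw [← Set.ncard_coe_finset, hV, hcard, Mf_eq hd (by omega)]
  have hWfin : W.Finite := hVfin.subset hWV
  have hWne : W.Nonempty := by
    rw [← Set.ncard_pos hWfin]; omega
  obtain ⟨f, hf⟩ := exists_starMap_s2 (InnerDiagonal P) (innerDiagonal_symm P)
    (fun a b h => h.2.2.1) _ _ (hVfin.subset (Set.diff_subset (t := W ∪ {v0}))) rfl hill
  have hF := StarMap.extend (InnerDiagonal P) (verts P) v0 hv0 W hWV hWne hv0W hWd f hf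
  rw [← hV] at hF
  have hmem : ∀ u, u ∈ V ↔ u ∈ verts P := fun u => by rw [← hV]; simp
  refine star_count (InnerDiagonal P) V _ hF d hVcard (by omega) ?_ v0 ((hmem _).2 hv0)
    (by simp) ?_
  · intro v hv x hx hxv
    obtain ⟨f0, hf0⟩ := exists_separating P hconv V
      (by rw [hV]; exact extremePoints_subset) v ((hmem v).1 hv)
    obtain ⟨g, hg1, hg2, hg3⟩ := exists_tight V v x hv hVaff _ f0
      (fun u hu => by
        by_cases h : u = v
        · simp [h]
        · exact (hf0 u hu h).le) (hf0 x hx hxv) rfl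
    have hgP : ∀ y ∈ P, g y ≤ g v := by
      intro y hy
      have hsub : convexHull ℝ (verts P) ⊆ {y | g y ≤ g v} := by
        apply convexHull_min
        · intro u hu
          have := hg1 u ((hmem u).2 hu)
          rw [map_sub] at this
          simp only [Set.mem_setOf_eq]
          linarith
        · exact convex_halfSpace_le g.isLinear _
      rw [hPV] at hsub
      exact hsub hy
    rw [map_sub] at hg2
    refine ⟨V.filter fun u => g (u - v) = 0, Finset.filter_subset _ _, by simp [hv], ?_, hg3, ?_⟩
    · simp only [Finset.mem_filter, map_sub]
      intro h
      linarith [h.2]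
    · intro a ha b hb
      simp only [Finset.mem_filter, map_sub] at ha hb
      exact not_innerDiagonal P g (g v) hgP x (by linarith) a b (by linarith [ha.2])
        (by linarith [hb.2])
  · refine hW2.trans ?_
    rw [← Set.ncard_coe_finset]
    apply Set.ncard_le_ncard _ (Finset.finite_toSet _)
    intro w hw
    simp only [Finset.coe_filter, Set.mem_setOf_eq]
    exact ⟨(hmem w).2 (hWV hw), by simp [hw], fun h => hv0W (h ▸ hw)⟩
end
end

section
/- For every d with 1 ≤ d ≤ 5, every Mani d-polytope is combinatorially equivalent to the d-dimensional crosspolytope conv{±e₁, …, ±e_d}; in particular there is exactly one combinatorial type of Mani d-polytope for 1 ≤ d ≤ 5. -/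
open scoped RealInnerProductSpace

noncomputable section

theorem star_forest {V : Type*} [Fintype V] [DecidableEq V] (adj : V → V → Prop)
    (hs : ∀ x y, adj x y → adj y x) (hi : ∀ x, ¬ adj x x) (hne : ∀ v, ∃ u, adj v u) :
    ∃ c : V → V, (∀ x, c (c x) = c x) ∧ (∀ x, c x ≠ x → adj x (c x)) ∧
      ∀ x, c x = x → ∃ y, y ≠ x ∧ c y = x := by
  have key : ∀ T : Finset V, ∃ c : V → V, (∀ x, c (c x) = c x) ∧ (∀ x, c x ≠ x → adj x (c x)) ∧
      ∀ x ∈ T, c x = x → ∃ y, y ≠ x ∧ c y = x := by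
    intro T
    induction T using Finset.induction_on with
    | empty => exact ⟨id, by simp, by simp, by simp⟩
    | insert x T hx ih =>
      obtain ⟨c, h1, h2, h3⟩ := ih
      by_cases hb : c x = x → ∃ y, y ≠ x ∧ c y = x
      · exact ⟨c, h1, h2, by
          intro z hz
          rcases Finset.mem_insert.1 hz with rfl | hz
          · exact hb
          · exact h3 z hz⟩
      · push Not at hb
        obtain ⟨hcx, hb⟩ := hb
        obtain ⟨u, hu⟩ := hne x
        have hux : u ≠ x := by rintro rfl; exact hi _ hu
        have hcu : c u ≠ x := hb u hux
        by_cases hc : c u = u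
        · refine ⟨fun z => if z = x then u else c z, ?_, ?_, ?_⟩
          · grind
          · grind
          · intro z hz hz'
            by_cases hzx : z = x
            · grind
            · have : c z = z := by grind
              have hzT : z ∈ T := by grind
              obtain ⟨y, hy, hy'⟩ := h3 z hzT this
              refine ⟨y, hy, ?_⟩
              grind
        · by_cases hl : ∃ y, y ≠ u ∧ y ≠ c u ∧ c y = c u
          · refine ⟨fun z => if z = x then u else if z = u then u else c z, ?_, ?_, ?_⟩
            · grind
            · grind
            · intro z hz hz'
              by_cases hzx : z = x
              · grind
              by_cases hzu : z = u
              · exact ⟨x, by grind⟩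
              have : c z = z := by grind
              have hzT : z ∈ T := by grind
              by_cases hzw : z = c u
              · obtain ⟨y, hy⟩ := hl
                exact ⟨y, by grind⟩
              obtain ⟨y, hy, hy'⟩ := h3 z hzT this
              refine ⟨y, hy, ?_⟩
              grind
          · push Not at hl
            refine ⟨fun z => if z = x then u else if z = u then u else if z = c u then u else c z, ?_, ?_, ?_⟩
            · grind
            · grind
            · intro z hz hz'
              by_cases hzx : z = x
              · grind
              by_cases hzu : z = u
              · exact ⟨x, by grind⟩
              by_cases hzw : z = c u
              · grind
              have : c z = z := by grind
              have hzT : z ∈ T := by grind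
              obtain ⟨y, hy, hy'⟩ := h3 z hzT this
              refine ⟨y, hy, ?_⟩
              grind
  obtain ⟨c, h1, h2, h3⟩ := key Finset.univ
  exact ⟨c, h1, h2, fun x => h3 x (Finset.mem_univ x)⟩

theorem comb_matching {V : Type*} [Fintype V] [DecidableEq V] (d : ℕ) (hd1 : 1 ≤ d) (hd5 : d ≤ 5)
    (hV : Fintype.card V = 2 * d) (adj : V → V → Prop)
    (hs : ∀ x y, adj x y → adj y x) (hi : ∀ x, ¬ adj x x) (hne : ∀ v, ∃ u, adj v u)
    (Fam : Set (Finset V)) (hcard : ∀ F ∈ Fam, d ≤ F.card)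
    (hsep : ∀ i j, i ≠ j → ∃ F ∈ Fam, i ∈ F ∧ j ∉ F)
    (hadj : ∀ F ∈ Fam, ∀ i j, adj i j → i ∈ F → j ∈ F → False) :
    ∃ u : Fin d × Bool → V, Function.Bijective u ∧ ∀ i, adj (u (i, true)) (u (i, false)) := by
  obtain ⟨c, h1, h2, h3⟩ := star_forest adj hs hi hne
  set C : Finset V := Finset.univ.filter (fun x => c x = x) with hC
  set fib : V → Finset V := fun v => Finset.univ.filter (fun x => c x = v) with hfib
  have hmem : ∀ x ∈ (Finset.univ : Finset V), c x ∈ C := by intro x _; simp [hC, h1]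
  have hsum : ∑ v ∈ C, (fib v).card = 2 * d := by
    rw [← hV, ← Finset.card_univ]
    exact (Finset.card_eq_sum_card_fiberwise hmem).symm
  have hs2 : ∀ v ∈ C, 2 ≤ (fib v).card := by
    intro v hv
    have hv' : c v = v := by simpa [hC] using hv
    obtain ⟨y, hy, hy'⟩ := h3 v hv'
    have : ({v, y} : Finset V) ⊆ fib v := by
      intro z hz; simp at hz; rcases hz with rfl | rfl <;> simp [*]
    calc 2 = ({v, y} : Finset V).card := (Finset.card_pair hy.symm).symm
      _ ≤ _ := Finset.card_le_card this
  -- b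
  obtain ⟨b, hb⟩ : ∃ b : V → ℕ, ∀ v ∈ C, (fib v).card = b v + 2 :=
    ⟨fun v => (fib v).card - 2, fun v hv => by have := hs2 v hv; simp only; omega⟩
  have hbsum : ∑ v ∈ C, b v + 2 * C.card = 2 * d := by
    rw [← hsum, Finset.sum_congr rfl hb, Finset.sum_add_distrib]; simp [mul_comm]
  have hFsum : ∀ F : Finset V, F.card = ∑ v ∈ C, (F.filter (fun x => c x = v)).card := by
    intro F
    exact Finset.card_eq_sum_card_fiberwise (fun x _ => hmem x (Finset.mem_univ x))
  have hin : ∀ F ∈ Fam, ∀ v ∈ C, v ∈ F → (F.filter (fun x => c x = v)).card ≤ 1 := by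
    intro F hF v hv hvF
    have : F.filter (fun x => c x = v) ⊆ {v} := by
      intro z hz
      simp only [Finset.mem_filter] at hz
      by_contra hne'
      simp at hne'
      have := h2 z (by rw [hz.2]; exact fun h => hne' h.symm)
      rw [hz.2] at this
      exact hadj F hF z v this hz.1 hvF
    simpa using Finset.card_le_card this
  have hout : ∀ F : Finset V, ∀ v ∈ C, v ∉ F → (F.filter (fun x => c x = v)).card ≤ b v + 1 := by
    intro F v hv hvF
    have : F.filter (fun x => c x = v) ⊆ (fib v).erase v := by
      intro z hz
      simp only [Finset.mem_filter] at hz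
      simp [hfib, hz.2]
      rintro rfl; exact hvF hz.1
    have h := Finset.card_le_card this
    rw [Finset.card_erase_of_mem (by simpa [hfib, hC] using hv), hb v hv] at h
    simpa using h
  have hout2 : ∀ F : Finset V, ∀ v ∈ C, v ∉ F → ∀ w, w ≠ v → c w = v → w ∉ F →
      (F.filter (fun x => c x = v)).card ≤ b v := by
    intro F v hv hvF w hwv hw hwF
    have : F.filter (fun x => c x = v) ⊆ ((fib v).erase v).erase w := by
      intro z hz
      simp only [Finset.mem_filter] at hz
      simp [hfib, hz.2]
      constructor
      · rintro rfl; exact hwF hz.1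
      · rintro rfl; exact hvF hz.1
    have h := Finset.card_le_card this
    rw [Finset.card_erase_of_mem (by simp [hfib, hw, hwv]), Finset.card_erase_of_mem (by simpa [hfib, hC] using hv), hb v hv] at h
    simpa using h
  -- bound
  have hFb : ∀ F ∈ Fam, ∑ v ∈ C, (if v ∈ F then b v else 0) + C.card ≤ d := by
    intro F hF
    have h := hcard F hF
    rw [hFsum F] at h
    have : ∑ v ∈ C, (F.filter (fun x => c x = v)).card + ∑ v ∈ C, (if v ∈ F then b v else 0) ≤ ∑ v ∈ C, (b v + 1) := by
      rw [← Finset.sum_add_distrib]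
      apply Finset.sum_le_sum
      intro v hv
      split_ifs with hvF
      · have := hin F hF v hv hvF; omega
      · simpa using hout F v hv hvF
    rw [Finset.sum_add_distrib] at this
    simp at this
    simp
    omega
  have hcardpos : 0 < C.card := by
    have : Nonempty V := Fintype.card_pos_iff.1 (by omega)
    obtain ⟨x⟩ := this
    exact Finset.card_pos.2 ⟨c x, hmem x (Finset.mem_univ x)⟩
  have hall : ∀ v ∈ C, b v = 0 := by
    by_contra hcon
    have hpos : 0 < ∑ v ∈ C, b v := by
      by_contra h0
      apply hcon
      have : ∑ v ∈ C, b v = 0 := by omega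
      exact Finset.sum_eq_zero_iff.1 this
    have hlt : ∀ v ∈ C, b v + C.card + 1 ≤ d := by
      intro v hv
      -- another center
      by_contra hge
      have hother : ∃ v' ∈ C, v' ≠ v ∧ 0 < b v' := by
        by_contra hno
        push Not at hno
        have heq : ∑ x ∈ C, b x = b v := by
          rw [Finset.sum_eq_single v]
          · intro x hx hxv; exact Nat.le_zero.1 (hno x hx hxv)
          · intro h; exact absurd hv h
        obtain ⟨y, hy, -⟩ := h3 v (by simpa [hC] using hv)
        obtain ⟨F, hF, hvF, -⟩ := hsep v y hy.symm
        have := hFb F hF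
        have h' : (if v ∈ F then b v else 0) ≤ ∑ v ∈ C, (if v ∈ F then b v else 0) :=
          Finset.single_le_sum (f := fun v => if v ∈ F then b v else 0) (fun _ _ => Nat.zero_le _) hv
        simp only [hvF, if_true] at h'
        omega
      obtain ⟨v', hv', hvv', hbv'⟩ := hother
      obtain ⟨w, hwv, hw⟩ := h3 v' (by simpa [hC] using hv')
      have hvw : v ≠ w := by
        rintro rfl
        have : c v = v := by simpa [hC] using hv
        exact hwv (this.symm.trans hw)
      obtain ⟨F, hF, hvF, hwF⟩ := hsep v w hvw
      have hFF := hFb F hF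
      have hv'F : v' ∉ F := by
        intro hv'F
        have h' : ∑ x ∈ ({v, v'} : Finset V), (if x ∈ F then b x else 0) ≤ ∑ v ∈ C, (if v ∈ F then b v else 0) := by
          apply Finset.sum_le_sum_of_subset
          intro z hz; simp at hz; rcases hz with rfl | rfl <;> assumption
        rw [Finset.sum_pair hvv'.symm] at h'
        simp only [hvF, hv'F, if_true] at h'
        omega
      have h := hcard F hF
      rw [hFsum F] at h
      have h4 : ∑ v ∈ C, (F.filter (fun x => c x = v)).card + ∑ v ∈ C, (if v ∈ F then b v else 0) < ∑ v ∈ C, (b v + 1) := by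
        rw [← Finset.sum_add_distrib]
        apply Finset.sum_lt_sum
        · intro v hv
          split_ifs with hvF
          · have := hin F hF v hv hvF; omega
          · simpa using hout F v hv hvF
        · refine ⟨v', hv', ?_⟩
          have := hout2 F v' hv' hv'F w hwv hw hwF
          simp only [hv'F, if_false]; omega
      rw [Finset.sum_add_distrib] at h4
      have h' : (if v ∈ F then b v else 0) ≤ ∑ v ∈ C, (if v ∈ F then b v else 0) :=
          Finset.single_le_sum (f := fun v => if v ∈ F then b v else 0) (fun _ _ => Nat.zero_le _) hv
      simp only [hvF, if_true] at h'
      rw [Finset.sum_const, smul_eq_mul, mul_one] at h4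
      omega
    have hle : ∑ v ∈ C, b v ≤ C.card * (d - C.card - 1) := by
      rw [← smul_eq_mul]
      apply Finset.sum_le_card_nsmul
      intro v hv; have := hlt v hv; omega
    have hk : C.card ≤ d := by omega
    generalize hB : ∑ v ∈ C, b v = B at *
    generalize C.card = k at *
    have : k ≤ 5 := by omega
    interval_cases k <;> interval_cases d <;> omega
  have hCd : C.card = d := by
    have : ∑ v ∈ C, b v = 0 := Finset.sum_eq_zero hall
    omega
  let e : Fin d ≃ C := (Fintype.equivFinOfCardEq (by simp [hCd])).symm
  have hcc : ∀ v : C, c v = v := fun v => (Finset.mem_filter.1 v.2).2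
  choose l hl1 hl2 using fun v : C => h3 v (hcc v)
  refine ⟨fun p => if p.2 then (e p.1 : V) else l (e p.1), ?_, ?_⟩
  · rw [Fintype.bijective_iff_injective_and_card]
    refine ⟨?_, by simp [hV, mul_comm]⟩
    rintro ⟨i, p⟩ ⟨j, q⟩ h
    have hcp : ∀ i p, c (if p = true then (e i : V) else l (e i)) = e i := by
      intro i p; split_ifs
      · exact hcc _
      · exact hl2 _
    have hij : (e i : V) = e j := by rw [← hcp i p, ← hcp j q]; exact congrArg c h
    have hij : i = j := e.injective (Subtype.ext hij)
    subst hij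
    have := hl1 (e i)
    cases p <;> cases q
    · rfl
    · exact absurd h this
    · exact absurd h.symm this
    · rfl
  · intro i
    simp only [if_true, Bool.false_eq_true, if_false]
    have := h2 (l (e i)) (by rw [hl2]; exact (hl1 _).symm)
    rw [hl2] at this
    exact hs _ _ this

theorem bool_eq_not {b c : Bool} (h : ¬ b = c) : b = !c := by revert h; revert b c; decide

/-- The polar body of a finite family of vectors. -/
def polarK {d : ℕ} {ι : Type*} (w : ι → Euc d) : Set (Euc d) := {y | ∀ i, ⟪y, w i⟫ ≤ 1}

theorem polar_closed {d : ℕ} {ι : Type*} (w : ι → Euc d) : IsClosed (polarK w) := by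
  have : polarK w = ⋂ i, {y | ⟪y, w i⟫ ≤ 1} := by ext; simp [polarK]
  rw [this]
  exact isClosed_iInter fun i => isClosed_le (by fun_prop) (by fun_prop)

theorem polar_le {d : ℕ} {ι : Type*} (w : ι → Euc d) {y : Euc d} (hy : y ∈ polarK w)
    {x : Euc d} (hx : x ∈ convexHull ℝ (Set.range w)) : ⟪y, x⟫ ≤ 1 := by
  have hc : Convex ℝ {x : Euc d | ⟪y, x⟫ ≤ 1} :=
    convex_halfSpace_le (innerₛₗ ℝ y).isLinear 1
  have : convexHull ℝ (Set.range w) ⊆ {x : Euc d | ⟪y, x⟫ ≤ 1} := by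
    apply convexHull_min _ hc
    rintro _ ⟨i, rfl⟩
    exact hy i
  exact this hx

theorem polar_compact {d : ℕ} {ι : Type*} (w : ι → Euc d)
    (h : (0 : Euc d) ∈ interior (convexHull ℝ (Set.range w))) : IsCompact (polarK w) := by
  apply Metric.isCompact_of_isClosed_isBounded (polar_closed w)
  obtain ⟨r, hr, hball⟩ := Metric.mem_nhds_iff.1 (mem_interior_iff_mem_nhds.1 h)
  refine (Metric.isBounded_iff_subset_closedBall 0).2 ⟨2 / r, ?_⟩
  intro y hy
  rw [mem_closedBall_zero_iff]
  by_cases h0 : y = 0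
  · subst h0; simp; positivity
  have hn : 0 < ‖y‖ := norm_pos_iff.2 h0
  have hx : (r / 2 / ‖y‖) • y ∈ Metric.ball (0 : Euc d) r := by
    rw [mem_ball_zero_iff, norm_smul, Real.norm_of_nonneg (by positivity), div_mul_cancel₀ _ hn.ne']
    linarith
  have := polar_le w hy (hball hx)
  rw [real_inner_smul_right, real_inner_self_eq_norm_sq] at this
  have h2 : r / 2 / ‖y‖ * ‖y‖ ^ 2 = r / 2 * ‖y‖ := by field_simp
  rw [h2] at this
  rw [le_div_iff₀ hr]; linarith

theorem polar_pert {d : ℕ} {ι : Type*} [Finite ι] (w : ι → Euc d) {y m : Euc d} (hy : y ∈ polarK w)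
    (hm : ∀ i, ⟪y, w i⟫ = 1 → ⟪m, w i⟫ ≤ 0) :
    ∃ δ > (0 : ℝ), ∀ t, 0 ≤ t → t < δ → y + t • m ∈ polarK w := by
  have key : ∀ᶠ t in nhds (0 : ℝ), ∀ i, 0 ≤ t → ⟪y + t • m, w i⟫ ≤ 1 := by
    rw [Filter.eventually_all]
    intro i
    by_cases hi : ⟪y, w i⟫ = 1
    · refine Filter.Eventually.of_forall fun t ht => ?_
      rw [inner_add_left, real_inner_smul_left, hi]
      nlinarith [hm i hi]
    · have hlt : ⟪y + (0 : ℝ) • m, w i⟫ < 1 := by simpa using lt_of_le_of_ne (hy i) hi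
      have hcont : Continuous fun t : ℝ => ⟪y + t • m, w i⟫ := by fun_prop
      filter_upwards [hcont.continuousAt.eventually (gt_mem_nhds hlt)] with t ht _ using ht.le
  obtain ⟨δ, hδ, hb⟩ := Metric.mem_nhds_iff.1 key
  refine ⟨δ, hδ, fun t ht0 ht i => hb ?_ i ht0⟩
  rw [mem_ball_zero_iff, Real.norm_of_nonneg ht0]; exact ht

theorem polar_extreme_nd {d : ℕ} {ι : Type*} [Finite ι] (w : ι → Euc d) {y : Euc d}
    (hy : y ∈ (polarK w).extremePoints ℝ) (m : Euc d)
    (hm : ∀ i, ⟪y, w i⟫ = 1 → ⟪m, w i⟫ = 0) : m = 0 := by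
  obtain ⟨δ1, h1, h1'⟩ := polar_pert w (m := m) hy.1 (fun i hi => (hm i hi).le)
  obtain ⟨δ2, h2, h2'⟩ := polar_pert w (m := -m) hy.1 (fun i hi => by simp [hm i hi])
  set t := min δ1 δ2 / 2 with ht
  have hmin : 0 < min δ1 δ2 := lt_min h1 h2
  have ht0 : 0 < t := by positivity
  have ha := h1' t ht0.le (by have := min_le_left δ1 δ2; linarith)
  have hb := h2' t ht0.le (by have := min_le_right δ1 δ2; linarith)
  have hseg : y ∈ openSegment ℝ (y + t • m) (y + t • (-m)) := by
    refine ⟨1 / 2, 1 / 2, by norm_num, by norm_num, by norm_num, ?_⟩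
    module
  have := hy.2 ha hb hseg
  have h3 : t • m = 0 := by simpa using this
  exact (smul_eq_zero.1 h3).resolve_left ht0.ne'

theorem polar_extreme_card {d : ℕ} {ι : Type*} [Fintype ι] (w : ι → Euc d) {y : Euc d}
    (hy : y ∈ (polarK w).extremePoints ℝ) (F : Finset ι) (hF : ∀ i, i ∈ F ↔ ⟪y, w i⟫ = 1) :
    d ≤ F.card := by
  let φ : Euc d →ₗ[ℝ] (F → ℝ) := LinearMap.pi fun i => (innerₛₗ ℝ (w i))
  have hinj : Function.Injective φ := by
    rw [injective_iff_map_eq_zero]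
    intro m hm
    apply polar_extreme_nd w hy
    intro i hi
    have := congrFun hm ⟨i, (hF i).2 hi⟩
    rw [real_inner_comm]; simpa [φ] using this
  have := LinearMap.finrank_le_finrank_of_injective hinj
  simpa using this

theorem polar_extreme_sep {d : ℕ} {ι : Type*} (w : ι → Euc d) (hK : IsCompact (polarK w))
    {y0 : Euc d} (hy0 : y0 ∈ polarK w) (i j : ι) (hi : ⟪y0, w i⟫ = 1) (hj : ⟪y0, w j⟫ < 1) :
    ∃ y ∈ (polarK w).extremePoints ℝ, ⟪y, w i⟫ = 1 ∧ ⟪y, w j⟫ < 1 := by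
  set A : Set (Euc d) := polarK w ∩ {y | ⟪y, w i⟫ = 1} with hA
  have hAc : IsCompact A := hK.inter_right (isClosed_eq (by fun_prop) (by fun_prop))
  obtain ⟨y1, hy1, hmin⟩ := hAc.exists_isMinOn ⟨y0, hy0, hi⟩
    (f := fun y => ⟪y, w j⟫) (by fun_prop)
  set B : Set (Euc d) := A ∩ {y | ⟪y, w j⟫ = ⟪y1, w j⟫} with hB
  have hBc : IsCompact B := hAc.inter_right (isClosed_eq (by fun_prop) (by fun_prop))
  obtain ⟨y, hy⟩ := hBc.extremePoints_nonempty ⟨y1, hy1, rfl⟩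
  have hyB : y ∈ B := hy.1
  have h01 : ⟪y1, w j⟫ ≤ ⟪y0, w j⟫ := hmin ⟨hy0, hi⟩
  refine ⟨y, ⟨hyB.1.1, ?_⟩, hyB.1.2, ?_⟩
  · intro a ha b hb hseg
    have hyi : ⟪y, w i⟫ = 1 := hyB.1.2
    have hyj : ⟪y, w j⟫ = ⟪y1, w j⟫ := hyB.2
    obtain ⟨s, t, hs, ht, hst, hsum⟩ := hseg
    have e1 : s * ⟪a, w i⟫ + t * ⟪b, w i⟫ = 1 := by
      rw [← hyi, ← hsum, inner_add_left, real_inner_smul_left, real_inner_smul_left]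
    have e2 : s * ⟪a, w j⟫ + t * ⟪b, w j⟫ = ⟪y1, w j⟫ := by
      rw [← hyj, ← hsum, inner_add_left, real_inner_smul_left, real_inner_smul_left]
    have hai := ha i
    have hbi := hb i
    have hai' : ⟪a, w i⟫ = 1 := by
      by_contra hne
      have := lt_of_le_of_ne hai hne
      nlinarith
    have hbi' : ⟪b, w i⟫ = 1 := by
      by_contra hne
      have := lt_of_le_of_ne hbi hne
      nlinarith
    have haj : ⟪y1, w j⟫ ≤ ⟪a, w j⟫ := hmin ⟨ha, hai'⟩
    have hbj : ⟪y1, w j⟫ ≤ ⟪b, w j⟫ := hmin ⟨hb, hbi'⟩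
    have ht' : t = 1 - s := by linarith
    subst ht'
    have haj' : ⟪a, w j⟫ = ⟪y1, w j⟫ := by
      by_contra hne
      have := lt_of_le_of_ne haj (Ne.symm hne)
      nlinarith
    have hbj' : ⟪b, w j⟫ = ⟪y1, w j⟫ := by
      by_contra hne
      have := lt_of_le_of_ne hbj (Ne.symm hne)
      nlinarith
    exact hy.2 ⟨⟨ha, hai'⟩, haj'⟩ ⟨⟨hb, hbi'⟩, hbj'⟩ ⟨s, 1 - s, hs, ht, hst, hsum⟩
  · have : ⟪y, w j⟫ = ⟪y1, w j⟫ := hyB.2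
    rw [this]; linarith

/-- The transversal `η` is the tight set of a nondegenerate point of the polar. -/
def GoodT {d : ℕ} (w : Fin d × Bool → Euc d) (η : Fin d → Bool) : Prop :=
  ∃ y ∈ polarK w, (∀ p, ⟪y, w p⟫ = 1 ↔ p.2 = η p.1) ∧
    ∀ m : Euc d, (∀ j, ⟪m, w (j, η j)⟫ = 0) → m = 0

theorem goodT_step {d : ℕ} (w : Fin d × Bool → Euc d) (hK : IsCompact (polarK w))
    (hpair : ∀ y ∈ polarK w, ∀ i, ⟪y, w (i, true)⟫ = 1 → ⟪y, w (i, false)⟫ = 1 → False)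
    (η : Fin d → Bool) (hη : GoodT w η) (i : Fin d) :
    GoodT w (Function.update η i (!η i)) := by
  obtain ⟨y, hy, htight, hnd⟩ := hη
  have hpair' : ∀ y ∈ polarK w, ∀ i b, ⟪y, w (i, b)⟫ = 1 → ⟪y, w (i, !b)⟫ = 1 → False := by
    intro y hy i b h1 h2
    cases b
    · exact hpair y hy i h2 h1
    · exact hpair y hy i h1 h2
  let φ : Euc d →ₗ[ℝ] (Fin d → ℝ) := LinearMap.pi fun j => (innerₛₗ ℝ (w (j, η j)))
  have hφ : ∀ m j, φ m j = ⟪m, w (j, η j)⟫ := by intro m j; rw [real_inner_comm]; simp [φ]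
  have hinj : Function.Injective φ := by
    rw [injective_iff_map_eq_zero]
    intro m hm
    apply hnd
    intro j
    rw [← hφ, hm]; rfl
  have hsurj : Function.Surjective φ :=
    (LinearMap.injective_iff_surjective_of_finrank_eq_finrank (by simp)).1 hinj
  obtain ⟨m, hm⟩ := hsurj (Pi.single i (-1))
  have hmi : ⟪m, w (i, η i)⟫ = -1 := by rw [← hφ, hm]; simp
  have hmj : ∀ j, j ≠ i → ⟪m, w (j, η j)⟫ = 0 := by intro j hj; rw [← hφ, hm]; simp [hj]
  have hyt : ∀ j, ⟪y, w (j, η j)⟫ = 1 := fun j => (htight (j, η j)).2 rfl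
  set D : Set ℝ := {t | 0 ≤ t ∧ y + t • m ∈ polarK w} with hD
  have hDc : IsCompact D := by
    have himg : IsCompact ((fun z : Euc d => 1 - ⟪z, w (i, η i)⟫) '' polarK w) :=
      hK.image (by fun_prop)
    apply himg.of_isClosed_subset
    · exact (isClosed_le continuous_const continuous_id).inter
        ((polar_closed w).preimage (f := fun t : ℝ => y + t • m) (by fun_prop))
    · rintro t ⟨-, ht⟩
      refine ⟨_, ht, ?_⟩
      simp only [inner_add_left, real_inner_smul_left, hyt, hmi]; ring
  obtain ⟨t, ⟨ht0, htK⟩, htmax⟩ := hDc.exists_isGreatest ⟨0, le_rfl, by simpa using hy⟩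
  have hval : ∀ p, ⟪y + t • m, w p⟫ = ⟪y, w p⟫ + t * ⟪m, w p⟫ := by
    intro p; rw [inner_add_left, real_inner_smul_left]
  have htpos : 0 < t := by
    obtain ⟨δ, hδ, hδ'⟩ := polar_pert w (m := m) hy (by
      rintro ⟨j, b⟩ hj
      have hb : b = η j := (htight (j, b)).1 hj
      subst hb
      by_cases hji : j = i
      · subst hji; rw [hmi]; norm_num
      · exact (hmj j hji).le)
    have : δ / 2 ≤ t := htmax ⟨by positivity, hδ' _ (by positivity) (by linarith)⟩
    linarith
  have hzj : ∀ j, j ≠ i → ⟪y + t • m, w (j, η j)⟫ = 1 := by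
    intro j hj; rw [hval, hyt, hmj j hj]; simp
  have hzi : ⟪y + t • m, w (i, η i)⟫ ≠ 1 := by
    rw [hval, hyt, hmi]; intro h; linarith
  have hznew : ⟪y + t • m, w (i, !η i)⟫ = 1 := by
    by_contra hnew
    obtain ⟨δ, hδ, hδ'⟩ := polar_pert w (m := m) htK (by
      rintro ⟨j, b⟩ hj
      by_cases hji : j = i
      · subst hji
        by_cases hb : b = η j
        · subst hb; exact absurd hj hzi
        · have : b = !η j := bool_eq_not hb
          subst this; exact absurd hj hnew
      · by_cases hb : b = η j
        · subst hb; exact (hmj j hji).le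
        · have : b = !η j := bool_eq_not hb
          subst this; exact (hpair' _ htK j _ (hzj j hji) hj).elim)
    have h1 := hδ' (δ / 2) (by positivity) (by linarith)
    rw [add_assoc, ← add_smul] at h1
    have : t + δ / 2 ≤ t := htmax ⟨by positivity, h1⟩
    linarith
  refine ⟨y + t • m, htK, ?_, ?_⟩
  · rintro ⟨j, b⟩
    by_cases hji : j = i
    · subst hji
      simp only [Function.update_self]
      constructor
      · intro h
        by_contra hb
        have : b = η j := by simpa using bool_eq_not hb
        subst this; exact hzi h
      · rintro rfl; exact hznew
    · simp only [Function.update_of_ne hji]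
      constructor
      · intro h
        by_contra hb
        have : b = !η j := bool_eq_not hb
        subst this; exact hpair' _ htK j _ (hzj j hji) h
      · rintro rfl; exact hzj j hji
  · intro n hn
    have hni : ⟪n, w (i, !η i)⟫ = 0 := by simpa using hn i
    have hnj : ∀ j, j ≠ i → ⟪n, w (j, η j)⟫ = 0 := by
      intro j hj; simpa [Function.update_of_ne hj] using hn j
    set c := ⟪n, w (i, η i)⟫ with hc
    have h0 : n + c • m = 0 := by
      apply hnd
      intro j
      rw [inner_add_left, real_inner_smul_left]
      by_cases hji : j = i
      · subst hji; rw [hmi, ← hc]; ring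
      · rw [hnj j hji, hmj j hji]; ring
    have hcm : c * ⟪m, w (i, !η i)⟫ = 0 := by
      have := congrArg (fun x => ⟪x, w (i, !η i)⟫) h0
      simpa [inner_add_left, real_inner_smul_left, hni] using this
    have hmne : ⟪m, w (i, !η i)⟫ ≠ 0 := by
      intro h
      rw [hval, h] at hznew
      exact hpair' y hy i _ (hyt i) (by simpa using hznew)
    have hc0 : c = 0 := (mul_eq_zero.1 hcm).resolve_right hmne
    simpa [hc0] using h0

theorem goodT_all {d : ℕ} (w : Fin d × Bool → Euc d) (hK : IsCompact (polarK w))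
    (hpair : ∀ y ∈ polarK w, ∀ i, ⟪y, w (i, true)⟫ = 1 → ⟪y, w (i, false)⟫ = 1 → False)
    (ε : Fin d → Bool) : ∃ y ∈ polarK w, ∀ p, ⟪y, w p⟫ = 1 ↔ p.2 = ε p.1 := by
  classical
  have hstart : ∃ η, GoodT w η := by
    obtain ⟨y, hy⟩ := hK.extremePoints_nonempty ⟨0, by intro i; simp⟩
    set F : Finset (Fin d × Bool) := Finset.univ.filter fun p => ⟪y, w p⟫ = 1 with hF
    have hcard : d ≤ F.card := polar_extreme_card w hy F (by simp [hF])
    have hinj : Set.InjOn Prod.fst (F : Set (Fin d × Bool)) := by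
      rintro ⟨i, a⟩ ha ⟨j, b⟩ hb hij
      simp only at hij
      subst hij
      have ha' : ⟪y, w (i, a)⟫ = 1 := by simpa [hF] using ha
      have hb' : ⟪y, w (i, b)⟫ = 1 := by simpa [hF] using hb
      cases a <;> cases b
      · rfl
      · exact (hpair y hy.1 i hb' ha').elim
      · exact (hpair y hy.1 i ha' hb').elim
      · rfl
    have himg : F.image Prod.fst = Finset.univ := by
      apply Finset.eq_univ_of_card
      rw [Finset.card_image_of_injOn hinj, Fintype.card_fin]
      apply le_antisymm _ hcard
      rw [← Finset.card_image_of_injOn hinj]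
      simpa using Finset.card_le_univ (F.image Prod.fst)
    have hex : ∀ i, ∃ b, ⟪y, w (i, b)⟫ = 1 := by
      intro i
      have : i ∈ F.image Prod.fst := by rw [himg]; simp
      obtain ⟨⟨j, b⟩, hp, rfl⟩ := Finset.mem_image.1 this
      exact ⟨b, by simpa [hF] using hp⟩
    choose η hη using hex
    have ht : ∀ p, ⟪y, w p⟫ = 1 ↔ p.2 = η p.1 := by
      rintro ⟨i, b⟩
      constructor
      · intro h
        have := hinj (x₁ := (i, b)) (by simpa [hF] using h) (x₂ := (i, η i)) (by simpa [hF] using hη i) rfl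
        simpa using this
      · rintro h
        simp only at h
        subst h; exact hη i
    refine ⟨η, y, hy.1, ht, ?_⟩
    intro m hm
    apply polar_extreme_nd w hy
    rintro ⟨i, b⟩ h
    have : b = η i := (ht (i, b)).1 h
    subst this; exact hm i
  have key : ∀ T : Finset (Fin d), ∃ η, GoodT w η ∧ ∀ i ∈ T, η i = ε i := by
    intro T
    induction T using Finset.induction_on with
    | empty => obtain ⟨η, h⟩ := hstart; exact ⟨η, h, by simp⟩
    | insert i T hi ih =>
      obtain ⟨η, hg, hT⟩ := ih
      by_cases hiη : η i = ε i
      · exact ⟨η, hg, by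
          intro j hj; rcases Finset.mem_insert.1 hj with rfl | hj
          · exact hiη
          · exact hT j hj⟩
      · refine ⟨_, goodT_step w hK hpair η hg i, ?_⟩
        intro j hj
        rcases Finset.mem_insert.1 hj with rfl | hjT
        · rw [Function.update_self]
          exact (bool_eq_not (Ne.symm hiη)).symm
        · rw [Function.update_of_ne (by rintro rfl; exact hi hjT)]
          exact hT j hjT
  obtain ⟨η, ⟨y, hy, ht, -⟩, hη⟩ := key Finset.univ
  refine ⟨y, hy, fun p => ?_⟩
  rw [ht, hη p.1 (Finset.mem_univ _)]

theorem linear_max_interior {d : ℕ} {P : Set (Euc d)} (l : Euc d →L[ℝ] ℝ) {x : Euc d}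
    (hx : x ∈ interior P) (hmax : ∀ y ∈ P, l y ≤ l x) : l = 0 := by
  have h1 : IsLocalMax l x := by
    filter_upwards [mem_interior_iff_mem_nhds.1 hx] with y hy using hmax y hy
  have h2 := h1.fderiv_eq_zero
  rwa [l.fderiv] at h2

theorem clm_le_hull {d : ℕ} (l : Euc d →L[ℝ] ℝ) (a : ℝ) (A : Set (Euc d)) (h : ∀ x ∈ A, l x ≤ a) :
    ∀ x ∈ convexHull ℝ A, l x ≤ a := by
  have hc : Convex ℝ {x : Euc d | l x ≤ a} := convex_halfSpace_le l.toLinearMap.isLinear a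
  have : convexHull ℝ A ⊆ {x : Euc d | l x ≤ a} := convexHull_min h hc
  exact fun x hx => this hx

/-- The faces of a polytope with crosspolytope-like structure. -/
theorem faces_char {d : ℕ} (P : Set (Euc d)) (u : Fin d × Bool → Euc d)
    (hu : Function.Injective u) (hv : verts P = Set.range u) (hP : P = convexHull ℝ (Set.range u))
    (H1 : ∀ l : Euc d →L[ℝ] ℝ, ∀ i, (∀ y ∈ P, l y ≤ l (u (i, true))) →
      (∀ y ∈ P, l y ≤ l (u (i, false))) → l = 0)
    (H2 : ∀ ε : Fin d → Bool, ∃ (l : Euc d →L[ℝ] ℝ) (a : ℝ), ∀ p, l (u p) ≤ a ∧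
      (l (u p) = a ↔ p.2 = ε p.1))
    (S : Set (Fin d × Bool)) :
    IsFaceVertexSet P (u '' S) ↔ S = Set.univ ∨ ∀ i, (i, true) ∈ S → (i, false) ∈ S → False := by
  classical
  have huP : ∀ p, u p ∈ P := fun p => by rw [hP]; exact subset_convexHull ℝ _ ⟨p, rfl⟩
  constructor
  · rintro ⟨F, hF, hS⟩
    by_cases hFe : F.Nonempty
    · obtain ⟨l, hl⟩ := hF hFe
      have hmem : ∀ p, p ∈ S ↔ ∀ y ∈ P, l y ≤ l (u p) := by
        intro p
        have h1 : p ∈ S ↔ u p ∈ u '' S := (hu.mem_set_image).symm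
        rw [h1, hS, hl, hv]
        simp [huP]
      by_cases hl0 : l = 0
      · left
        ext p
        simp [hmem, hl0]
      · right
        intro i h1 h2
        exact hl0 (H1 l i ((hmem _).1 h1) ((hmem _).1 h2))
    · right
      rw [Set.not_nonempty_iff_eq_empty] at hFe
      have : S = ∅ := by
        rw [hFe, Set.inter_empty] at hS
        exact Set.image_eq_empty.1 hS
      simp [this]
  · rintro (rfl | hS)
    · refine ⟨P, ?_, ?_⟩
      · intro _; exact ⟨0, by simp⟩
      · rw [Set.image_univ, ← hv]
        exact (Set.inter_eq_left.2 (extremePoints_subset)).symm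
    · by_cases hne : S = ∅
      · subst hne
        exact ⟨∅, fun h => absurd h Set.not_nonempty_empty, by simp⟩
      obtain ⟨p0, hp0⟩ := Set.nonempty_iff_ne_empty.2 hne
      obtain ⟨l1, a1, h1⟩ := H2 (fun i => if (i, true) ∈ S then true else false)
      obtain ⟨l2, a2, h2⟩ := H2 (fun i => if (i, false) ∈ S then false else true)
      have hle : ∀ p, (l1 + l2) (u p) ≤ a1 + a2 := by
        intro p; have := (h1 p).1; have := (h2 p).1; simp; linarith
      have heq : ∀ p, (l1 + l2) (u p) = a1 + a2 ↔ p ∈ S := by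
        rintro ⟨i, b⟩
        have e1 := h1 (i, b)
        have e2 := h2 (i, b)
        have : (l1 + l2) (u (i, b)) = a1 + a2 ↔ l1 (u (i, b)) = a1 ∧ l2 (u (i, b)) = a2 := by
          simp only [add_apply]
          constructor
          · intro h; constructor <;> linarith [e1.1, e2.1]
          · rintro ⟨h, h'⟩; rw [h, h']
        rw [this, e1.2, e2.2]
        have hSi := hS i
        cases b <;> simp <;> tauto
      have hleP : ∀ x ∈ P, (l1 + l2) x ≤ a1 + a2 := by
        rw [hP]; apply clm_le_hull
        rintro _ ⟨p, rfl⟩; exact hle p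
      refine ⟨{x ∈ P | ∀ y ∈ P, (l1 + l2) y ≤ (l1 + l2) x}, fun _ => ⟨l1 + l2, rfl⟩, ?_⟩
      rw [hv]
      ext x
      constructor
      · rintro ⟨p, hp, rfl⟩
        refine ⟨⟨p, rfl⟩, huP p, fun y hy => ?_⟩
        rw [(heq p).2 hp]; exact hleP y hy
      · rintro ⟨⟨p, rfl⟩, -, hmax⟩
        refine ⟨p, (heq p).1 (le_antisymm (hle p) ?_), rfl⟩
        rw [← (heq p0).2 hp0]
        exact hmax _ (huP p0)

theorem polytope_hull_verts {d : ℕ} {P : Set (Euc d)} (hP : IsPolytope P) :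
    (verts P).Finite ∧ P = convexHull ℝ (verts P) := by
  obtain ⟨V, hV, rfl⟩ := hP
  have hfin : (verts (convexHull ℝ V)).Finite := hV.subset extremePoints_convexHull_subset
  refine ⟨hfin, ?_⟩
  have h := closure_convexHull_extremePoints (hV.isCompact_convexHull ℝ) (convex_convexHull ℝ V)
  rw [IsClosed.closure_eq] at h
  · exact h.symm
  · exact Set.Finite.isClosed_convexHull ℝ hfin

/-- The vertices of the crosspolytope. -/
def crossU (d : ℕ) (p : Fin d × Bool) : Euc d :=
  if p.2 then EuclideanSpace.single p.1 1 else -EuclideanSpace.single p.1 1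

theorem cross_eq (d : ℕ) : crossPolytope d = convexHull ℝ (Set.range (crossU d)) := by
  unfold crossPolytope
  congr 1
  ext x
  constructor
  · rintro ⟨i, rfl | rfl⟩
    · exact ⟨(i, true), by simp [crossU]⟩
    · exact ⟨(i, false), by simp [crossU]⟩
  · rintro ⟨⟨i, b⟩, rfl⟩
    refine ⟨i, ?_⟩
    cases b
    · right; simp [crossU]
    · left; simp [crossU]

theorem single_inner_ne {d : ℕ} {i j : Fin d} (h : ¬ i = j) :
    ⟪(EuclideanSpace.single i 1 : Euc d), EuclideanSpace.single j 1⟫ = (0 : ℝ) := by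
  rw [EuclideanSpace.inner_single_left]; simp [h]

theorem crossU_inner (d : ℕ) (p q : Fin d × Bool) (h : crossU d q ≠ crossU d p) :
    ⟪crossU d p, crossU d q⟫ ≤ 0 := by
  obtain ⟨i, a⟩ := p
  obtain ⟨j, b⟩ := q
  by_cases hij : i = j
  · subst hij
    cases a <;> cases b <;> simp_all [crossU]
  · cases a <;> cases b <;> simp [crossU, single_inner_ne hij]

theorem crossU_self (d : ℕ) (p : Fin d × Bool) : ⟪crossU d p, crossU d p⟫ = (1 : ℝ) := by
  obtain ⟨i, a⟩ := p
  cases a <;> simp [crossU]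

theorem crossU_inj (d : ℕ) : Function.Injective (crossU d) := by
  rintro ⟨i, a⟩ ⟨j, b⟩ h
  have h1 : ⟪crossU d (i, a), crossU d (j, b)⟫ = (1 : ℝ) := by rw [h]; exact crossU_self d _
  by_cases hij : i = j
  · subst hij
    cases a <;> cases b
    · rfl
    · simp [crossU] at h1; norm_num at h1
    · simp [crossU] at h1; norm_num at h1
    · rfl
  · exfalso
    cases a <;> cases b <;> simp [crossU, single_inner_ne hij] at h1

theorem cross_verts (d : ℕ) : verts (crossPolytope d) = Set.range (crossU d) := by
  apply le_antisymm
  · rw [cross_eq]; exact extremePoints_convexHull_subset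
  · rintro _ ⟨p, rfl⟩
    by_contra hp
    have hpoly : IsPolytope (crossPolytope d) := ⟨_, Set.finite_range _, cross_eq d⟩
    obtain ⟨-, hh⟩ := polytope_hull_verts hpoly
    have hsub : verts (crossPolytope d) ⊆ Set.range (crossU d) := by
      rw [cross_eq]; exact extremePoints_convexHull_subset
    have hle := clm_le_hull (innerSL ℝ (crossU d p)) 0 (verts (crossPolytope d)) (by
      intro x hx
      obtain ⟨q, rfl⟩ := hsub hx
      exact crossU_inner d p q (by intro h; rw [h] at hx; exact hp hx))
    rw [← hh] at hle
    have := hle (crossU d p) (by rw [cross_eq]; exact subset_convexHull ℝ _ ⟨p, rfl⟩)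
    rw [innerSL_apply_apply, crossU_self] at this
    linarith

theorem cross_faces (d : ℕ) (S : Set (Fin d × Bool)) :
    IsFaceVertexSet (crossPolytope d) (crossU d '' S) ↔
      S = Set.univ ∨ ∀ i, (i, true) ∈ S → (i, false) ∈ S → False := by
  apply faces_char _ _ (crossU_inj d) (cross_verts d) (cross_eq d)
  · intro l i h1 h2
    have hm : ∀ p, crossU d p ∈ crossPolytope d := fun p => by
      rw [cross_eq]; exact subset_convexHull ℝ _ ⟨p, rfl⟩
    have hneg : ∀ j, l (crossU d (j, false)) = - l (crossU d (j, true)) := by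
      intro j; simp [crossU]
    have a1 := h1 _ (hm (i, false))
    have a2 := h2 _ (hm (i, true))
    have a3 := hneg i
    have hz : ∀ j, l (crossU d (j, true)) = 0 := by
      intro j
      have b1 := h1 _ (hm (j, false))
      have b2 := h1 _ (hm (j, true))
      have b3 := hneg j
      linarith
    apply ContinuousLinearMap.coe_injective
    apply (EuclideanSpace.basisFun (Fin d) ℝ).toBasis.ext
    intro j
    simpa [crossU] using hz j
  · intro ε
    refine ⟨innerSL ℝ (∑ i, crossU d (i, ε i)), 1, ?_⟩
    rintro ⟨j, b⟩
    have hval : innerSL ℝ (∑ i, crossU d (i, ε i)) (crossU d (j, b)) =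
        ⟪crossU d (j, ε j), crossU d (j, b)⟫ := by
      rw [innerSL_apply_apply, sum_inner, Finset.sum_eq_single j]
      · intro i _ hij
        cases h : ε i <;> cases b <;> simp [crossU, single_inner_ne hij]
      · simp
    rw [hval]
    by_cases hb : b = ε j
    · subst hb
      rw [crossU_self]; simp
    · have h0 : ⟪crossU d (j, ε j), crossU d (j, b)⟫ ≤ (0 : ℝ) := by
        apply crossU_inner
        intro h
        have := crossU_inj d h
        simp at this; exact hb this
      refine ⟨by linarith, ?_⟩
      constructor
      · intro h; linarith
      · intro h; exact absurd h hb

theorem pf_vals : pf 1 = 1 ∧ pf 2 = 1 ∧ pf 3 = 2 ∧ pf 4 = 2 ∧ pf 5 = 2 := by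
  have key : ∀ (d n : ℕ), n ≠ 0 → (2 * (n - 1 : ℝ) + 1) ^ 2 < 4 * d + 1 → 
      (4 * d + 1 : ℝ) ≤ (2 * n + 1) ^ 2 → pf d = n := by
    intro d n hn h1 h2
    unfold pf
    rw [Nat.ceil_eq_iff hn]
    have hn1 : (1 : ℝ) ≤ n := by exact_mod_cast Nat.one_le_iff_ne_zero.2 hn
    have e1 : 2 * (n - 1 : ℝ) + 1 < Real.sqrt (4 * d + 1) := Real.lt_sqrt_of_sq_lt h1
    have e2 : Real.sqrt (4 * d + 1) ≤ 2 * n + 1 := by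
      rw [Real.sqrt_le_left (by positivity)]; exact h2
    constructor
    · rw [Nat.cast_sub (Nat.one_le_iff_ne_zero.2 hn)]; push_cast; linarith
    · linarith
  refine ⟨?_, ?_, ?_, ?_, ?_⟩ <;> apply key <;> norm_num

theorem Mf_low {d : ℕ} (hd1 : 1 ≤ d) (hd5 : d ≤ 5) : Mf d = 2 * d := by
  obtain ⟨h1, h2, h3, h4, h5⟩ := pf_vals
  unfold Mf
  have hc : ∀ (x : ℝ) (n : ℕ), (n - 1 : ℝ) < x → n ≤ ⌈x⌉₊ := by
    intro x n h
    by_contra hlt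
    push Not at hlt
    have : ⌈x⌉₊ + 1 ≤ n := hlt
    have e : ((⌈x⌉₊ : ℕ) : ℝ) + 1 ≤ n := by exact_mod_cast this
    have := Nat.le_ceil x
    linarith
  apply min_eq_left
  interval_cases d
  · omega
  · rw [h2]; omega
  · rw [h3]; omega
  · rw [h4]; have := hc ((4 : ℕ) / (2 : ℕ)) 2 (by norm_num); omega
  · rw [h5]; have := hc ((5 : ℕ) / (2 : ℕ)) 3 (by norm_num); omega

theorem mani_matching {d : ℕ} (hd1 : 1 ≤ d) (hd5 : d ≤ 5)
    (P : Set (Euc d)) (hP : IsManiPolytope P) :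
    ∃ u : Fin d × Bool → Euc d, Function.Injective u ∧ verts P = Set.range u ∧
      P = convexHull ℝ (Set.range u) ∧
      ∀ S : Set (Fin d × Bool), IsFaceVertexSet P (u '' S) ↔
        S = Set.univ ∨ ∀ i, (i, true) ∈ S → (i, false) ∈ S → False := by
  classical
  obtain ⟨⟨hpoly, hspan⟩, hill, hcard⟩ := hP
  rw [Mf_low hd1 hd5] at hcard
  obtain ⟨hfin, hhull⟩ := polytope_hull_verts hpoly
  have hconv : Convex ℝ P := by rw [hhull]; exact convex_convexHull ℝ _
  obtain ⟨z, hz⟩ := hconv.interior_nonempty_iff_affineSpan_eq_top.2 hspan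
  letI : Fintype (verts P) := hfin.fintype
  have hcard' : Fintype.card (verts P) = 2 * d := by
    rw [← hcard, ← Nat.card_coe_set_eq, Nat.card_eq_fintype_card]
  -- the translated polar body
  have hint : ∀ {ι : Type} (u : ι → Euc d), Set.range u = verts P →
      (0 : Euc d) ∈ interior (convexHull ℝ (Set.range fun i => u i - z)) := by
    intro ι u hu
    have h1 : (Set.range fun i => u i - z) = (Homeomorph.addRight (-z)) '' (verts P) := by
      rw [← hu, ← Set.range_comp]; rfl
    have h2 : convexHull ℝ (Set.range fun i => u i - z) = (Homeomorph.addRight (-z)) '' P := by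
      rw [h1]
      conv_rhs => rw [hhull]
      have := AffineMap.image_convexHull (𝕜 := ℝ) (AffineEquiv.constVAdd ℝ (Euc d) (-z)).toAffineMap (verts P)
      have hfun : (⇑(Homeomorph.addRight (-z)) : Euc d → Euc d) =
          (AffineEquiv.constVAdd ℝ (Euc d) (-z)).toAffineMap := by
        ext1 x; simp [add_comm]
      rw [hfun]; exact this.symm
    rw [h2, ← Homeomorph.image_interior]
    exact ⟨z, hz, by simp⟩
  have hdiag : ∀ a b, InnerDiagonal P a b → ∀ l : Euc d →L[ℝ] ℝ, (∀ y ∈ P, l y ≤ l a) →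
      (∀ y ∈ P, l y ≤ l b) → l = 0 := by
    rintro a b ⟨ha, hb, -, x, ⟨s, t, hs, ht, hst, rfl⟩, hx⟩ l hla hlb
    apply linear_max_interior l hx
    intro y hy
    have e1 := hla y hy
    have e2 := hlb y hy
    simp only [map_add, map_smul, smul_eq_mul]
    calc l y = s * l y + t * l y := by rw [← add_mul, hst, one_mul]
      _ ≤ _ := by gcongr
  have hpolP : ∀ {ι : Type} (u : ι → Euc d), Set.range u = verts P → ∀ y ∈ polarK (fun i => u i - z),
      ∀ i, ⟪y, u i - z⟫ = 1 → ∀ x ∈ P, innerSL ℝ y x ≤ innerSL ℝ y (u i) := by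
    intro ι u hu y hy i hi x hx
    rw [hhull, ← hu] at hx
    refine clm_le_hull _ _ _ ?_ x hx
    rintro _ ⟨j, rfl⟩
    have := hy j
    simp only [innerSL_apply_apply]
    rw [inner_sub_right] at *
    linarith
  have hdiag' : ∀ {ι : Type} (u : ι → Euc d), Set.range u = verts P →
      ∀ y ∈ polarK (fun i => u i - z), ∀ i j, InnerDiagonal P (u i) (u j) →
      ⟪y, u i - z⟫ = 1 → ⟪y, u j - z⟫ = 1 → False := by
    intro ι u hu y hy i j hij hi hj
    have := hdiag _ _ hij (innerSL ℝ y) (hpolP u hu y hy i hi) (hpolP u hu y hy j hj)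
    have h0 := congrArg (fun l : Euc d →L[ℝ] ℝ => l (u i - z)) this
    simp only [innerSL_apply_apply, zero_apply] at h0
    linarith
  -- the vertex family
  set w : verts P → Euc d := fun v => (v : Euc d) - z with hw
  have hrange : Set.range (fun v : verts P => (v : Euc d)) = verts P := Subtype.range_coe
  have hKc : IsCompact (polarK w) := polar_compact w (hint _ hrange)
  have hsym : ∀ a b, InnerDiagonal P a b → InnerDiagonal P b a := by
    rintro a b ⟨ha, hb, hab, h⟩
    exact ⟨hb, ha, hab.symm, by rwa [openSegment_symm]⟩
  obtain ⟨m, hm, hmadj⟩ := comb_matching d hd1 hd5 hcard'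
    (fun a b : verts P => InnerDiagonal P a b) (fun a b => hsym a b) (fun a h => h.2.2.1 rfl)
    (by
      intro v
      obtain ⟨u, hu⟩ := hill v v.2
      exact ⟨⟨u, hu.1⟩, hsym _ _ hu⟩)
    {F | ∃ y ∈ (polarK w).extremePoints ℝ, ∀ i, i ∈ F ↔ ⟪y, w i⟫ = 1}
    (by
      rintro F ⟨y, hy, hF⟩
      exact polar_extreme_card w hy F hF)
    (by
      intro i j hij
      have hnot : (i : Euc d) ∉ convexHull ℝ (verts P \ {(i : Euc d)}) := by
        have h := (convexIndependent_set_iff_notMem_convexHull_sdiff.1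
          hconv.convexIndependent_extremePoints)
        exact h _ i.2
      obtain ⟨f, s, hf1, hf2⟩ := geometric_hahn_banach_closed_point (convex_convexHull ℝ _)
        (Set.Finite.isClosed_convexHull ℝ (hfin.subset Set.sdiff_subset)) hnot
      have hflt : ∀ k : verts P, k ≠ i → f k < f i := by
        intro k hk
        have : (k : Euc d) ∈ convexHull ℝ (verts P \ {(i : Euc d)}) :=
          subset_convexHull ℝ _ ⟨k.2, fun h => hk (Subtype.ext h)⟩
        exact (hf1 _ this).trans hf2
      have hfle : ∀ k : verts P, f k ≤ f i := by
        intro k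
        by_cases hk : k = i
        · rw [hk]
        · exact (hflt k hk).le
      have hfP : ∀ x ∈ P, f x ≤ f i := by
        intro x hx
        have hx' : x ∈ convexHull ℝ (verts P) := hhull ▸ hx
        refine clm_le_hull f _ _ ?_ x hx'
        intro x hx; exact hfle ⟨x, hx⟩
      have hfz : f z < f i := by
        by_contra hge
        push Not at hge
        have := linear_max_interior f hz (fun y hy => (hfP y hy).trans hge)
        have h := hflt j hij.symm
        rw [this] at h
        simp at h
      set g : Euc d := (InnerProductSpace.toDual ℝ (Euc d)).symm f with hg
      have hgf : ∀ x, ⟪g, x⟫ = f x := fun x => InnerProductSpace.toDual_symm_apply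
      set r := f i - f z with hr
      have hrpos : 0 < r := by rw [hr]; linarith
      have hval : ∀ k : verts P, ⟪r⁻¹ • g, w k⟫ = (f k - f z) / r := by
        intro k
        rw [real_inner_smul_left, hgf, hw]; simp only [map_sub]; field_simp
      obtain ⟨y, hy, hyi, hyj⟩ := polar_extreme_sep w hKc (y0 := r⁻¹ • g) (by
          intro k
          rw [hval, div_le_one hrpos]
          have := hfle k; rw [hr]; linarith) i j
        (by rw [hval, hr]; exact div_self hrpos.ne')
        (by
          rw [hval, div_lt_one hrpos]
          have := hflt j hij.symm; rw [hr]; linarith)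
      refine ⟨Finset.univ.filter fun k => ⟪y, w k⟫ = 1, ⟨y, hy, by simp⟩, by simpa using hyi, ?_⟩
      simpa using hyj.ne)
    (by
      rintro F ⟨y, hy, hF⟩ i j hij hi hj
      exact hdiag' _ hrange y hy.1 i j hij ((hF i).1 hi) ((hF j).1 hj))
  set u : Fin d × Bool → Euc d := fun p => (m p : Euc d) with hu
  have hur : Set.range u = verts P := by
    rw [← hrange]
    exact hm.surjective.range_comp (fun v : verts P => (v : Euc d))
  have hPu : P = convexHull ℝ (Set.range u) := by rw [hur]; exact hhull
  have hui : Function.Injective u := Subtype.val_injective.comp hm.injective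
  refine ⟨u, hui, hur.symm, hPu, ?_⟩
  apply faces_char P u hui hur.symm hPu
  · intro l i h1 h2
    exact hdiag _ _ (hmadj i) l h1 h2
  · intro ε
    have hc := polar_compact (fun p => u p - z) (hint u hur)
    obtain ⟨y, hy, ht⟩ := goodT_all (fun p => u p - z) hc
      (fun y hy i => hdiag' u hur y hy _ _ (hmadj i)) ε
    refine ⟨innerSL ℝ y, 1 + ⟪y, z⟫, fun p => ?_⟩
    have e1 := hy p
    have e2 := ht p
    simp only [inner_sub_right] at e1 e2
    rw [innerSL_apply_apply]
    refine ⟨by linarith, ?_⟩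
    rw [← e2]
    constructor <;> intro h <;> linarith

/-- For `1 ≤ d ≤ 5`, every Mani `d`-polytope is combinatorially
equivalent to the `d`-dimensional crosspolytope; in particular there is exactly one
combinatorial type of Mani `d`-polytope in these dimensions. -/
theorem mani_lowDim_crossPolytope {d : ℕ} (hd1 : 1 ≤ d) (hd5 : d ≤ 5)
    (P : Set (Euc d)) (hP : IsManiPolytope P) :
    CombEquiv P (crossPolytope d) := by
  obtain ⟨u, hui, hur, -, hS⟩ := mani_matching hd1 hd5 P hP
  haveI : Nonempty (Fin d × Bool) := ⟨(⟨0, hd1⟩, true)⟩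
  have hinv : ∀ p, Function.invFun u (u p) = p := Function.leftInverse_invFun hui
  refine ⟨fun x => crossU d (Function.invFun u x), ⟨?_, ?_, ?_⟩, ?_⟩
  · rw [hur, cross_verts]
    rintro _ ⟨p, rfl⟩
    exact ⟨_, rfl⟩
  · rw [hur]
    rintro _ ⟨p, rfl⟩ _ ⟨q, rfl⟩ h
    have h' := crossU_inj d h
    rw [hinv, hinv] at h'
    rw [h']
  · rw [hur, cross_verts]
    rintro _ ⟨p, rfl⟩
    exact ⟨u p, ⟨p, rfl⟩, by simp only [hinv]⟩
  · intro S hSv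
    rw [hur] at hSv
    obtain ⟨T, rfl⟩ := Set.subset_range_iff_exists_image_eq.1 hSv
    rw [hS T, Set.image_image]
    simp only [hinv]
    exact (cross_faces d T).symm
end
end

section
/- For every d ≥ 6 there exists a nonsimplicial Mani d-polytope, i.e., an illuminated d-polytope with exactly M(d) vertices that has a facet which is not a simplex (a facet with more than d vertices). -/
open scoped RealInnerProductSpace

noncomputable section

lemma avg_lt1 {a b X Y M : ℝ} (ha : 0 < a) (hb : 0 < b) (hab : a + b = 1) (hX : X ≤ M)
    (hY : Y < M) : a * X + b * Y < M := by
  have h1 := mul_le_mul_of_nonneg_left hX ha.le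
  have h2 := mul_lt_mul_of_pos_left hY hb
  have h3 : a * M + b * M = M := by rw [← add_mul, hab, one_mul]
  linarith

lemma avg_lt2 {a b X Y M : ℝ} (ha : 0 < a) (hb : 0 < b) (hab : a + b = 1) (hX : X < M)
    (hY : Y ≤ M) : a * X + b * Y < M := by
  rw [add_comm]
  exact avg_lt1 hb ha (by linarith) hY hX

lemma conv_le {d : ℕ} {κ : Type*} (v : κ → Euc d) (g : Euc d) (M : ℝ)
    (h : ∀ k, ⟪g, v k⟫ ≤ M) : ∀ x ∈ convexHull ℝ (Set.range v), ⟪g, x⟫ ≤ M := by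
  intro x hx
  have : convexHull ℝ (Set.range v) ⊆ {x | ⟪g, x⟫ ≤ M} := by
    apply convexHull_min
    · rintro _ ⟨k, rfl⟩; exact h k
    · exact convex_halfSpace_le (f := fun x => ⟪g, x⟫) ⟨fun a b => inner_add_right _ _ _, fun c a => by simp [inner_smul_right]⟩ M
  exact this hx

lemma extreme_of_strict {d : ℕ} {κ : Type*} (v : κ → Euc d) (k : κ) (g : Euc d)
    (h : ∀ l, l ≠ k → ⟪g, v l⟫ < ⟪g, v k⟫) :
    v k ∈ Set.extremePoints ℝ (convexHull ℝ (Set.range v)) := by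
  have key : convexHull ℝ (Set.range v) ⊆ {x | x = v k ∨ ⟪g, x⟫ < ⟪g, v k⟫} := by
    apply convexHull_min
    · rintro _ ⟨l, rfl⟩
      by_cases hl : l = k
      · left; rw [hl]
      · right; exact h l hl
    · intro x hx y hy a b ha hb hab
      simp only [Set.mem_ofPred_eq] at hx hy ⊢
      rcases eq_or_lt_of_le ha with ha0 | ha0
      · have : b = 1 := by linarith
        subst this; simpa [← ha0] using hy
      rcases eq_or_lt_of_le hb with hb0 | hb0
      · have : a = 1 := by linarith
        subst this; simpa [← hb0] using hx
      rw [inner_add_right, inner_smul_right, inner_smul_right]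
      rcases hx with rfl | hx <;> rcases hy with rfl | hy
      · left; rw [← add_smul, hab, one_smul]
      · right; exact avg_lt1 ha0 hb0 hab le_rfl hy
      · right; exact avg_lt2 ha0 hb0 hab hx le_rfl
      · right; exact avg_lt2 ha0 hb0 hab hx hy.le
  rw [mem_extremePoints]
  refine ⟨subset_convexHull ℝ _ ⟨k, rfl⟩, ?_⟩
  rintro x hx y hy ⟨a, b, ha, hb, hab, he⟩
  have h1 : a * ⟪g, x⟫ + b * ⟪g, y⟫ = ⟪g, v k⟫ := by
    rw [← he, inner_add_right, inner_smul_right, inner_smul_right]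
  rcases key hx with hx | hx <;> rcases key hy with hy | hy
  · exact ⟨hx, hy⟩
  · rw [hx] at h1; exact absurd h1 (avg_lt1 ha hb hab le_rfl hy).ne
  · rw [hy] at h1; exact absurd h1 (avg_lt2 ha hb hab hx le_rfl).ne
  · exact absurd h1 (avg_lt2 ha hb hab hx hy.le).ne

lemma span_top {d : ℕ} {κ : Type*} (v : κ → Euc d) (k : κ)
    (h : ∀ s : Euc d, ∀ c : ℝ, (∀ l, ⟪s, v l⟫ = c) → s = 0) :
    affineSpan ℝ (Set.range v) = ⊤ := by
  have hne : (Set.range v).Nonempty := ⟨_, k, rfl⟩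
  rw [AffineSubspace.affineSpan_eq_top_iff_vectorSpan_eq_top_of_nonempty ℝ _ _ hne]
  rw [← Submodule.orthogonal_eq_bot_iff]
  rw [Submodule.eq_bot_iff]
  intro s hs
  apply h s ⟪s, v k⟫
  intro l
  have : v l -ᵥ v k ∈ vectorSpan ℝ (Set.range v) :=
    vsub_mem_vectorSpan ℝ ⟨l, rfl⟩ ⟨k, rfl⟩
  have h2 := (Submodule.mem_orthogonal' _ _).1 hs _ this
  rw [vsub_eq_sub, inner_sub_right] at h2
  linarith

lemma wsum_lt {d : ℕ} {ι : Type*} [Fintype ι] (y : ι → Euc d) (w : ι → ℝ)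
    (hw0 : ∀ i, 0 ≤ w i) (hw1 : ∑ i, w i = 1) (s : Euc d) (M : ℝ)
    (hM : ∀ i, ⟪s, y i⟫ ≤ M) (l : ι) (hl : 0 < w l) (hlM : ⟪s, y l⟫ < M) :
    ⟪s, ∑ i, w i • y i⟫ < M := by
  rw [inner_sum]
  simp only [inner_smul_right]
  calc ∑ i, w i * ⟪s, y i⟫ < ∑ i, w i * M := by
        apply Finset.sum_lt_sum
        · intro i _; exact mul_le_mul_of_nonneg_left (hM i) (hw0 i)
        · exact ⟨l, Finset.mem_univ _, mul_lt_mul_of_pos_left hlM hl⟩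
    _ = M := by rw [← Finset.sum_mul, hw1, one_mul]

lemma mid_interior {d : ℕ} {ι : Type*} [Fintype ι] (y : ι → Euc d) (w : ι → ℝ)
    (hw0 : ∀ i, 0 ≤ w i) (hw1 : ∑ i, w i = 1) (i : ι)
    (h : ∀ s : Euc d, ∀ c : ℝ, (∀ l, 0 < w l → ⟪s, y l⟫ = c) → ⟪s, y i⟫ = c → s = 0) :
    (1/2 : ℝ) • (∑ l, w l • y l) + (1/2 : ℝ) • y i ∈ interior (convexHull ℝ (Set.range y)) := by
  set Q := convexHull ℝ (Set.range y) with hQ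
  set m := (1/2 : ℝ) • (∑ l, w l • y l) + (1/2 : ℝ) • y i with hm
  have hconv : Convex ℝ Q := convex_convexHull ℝ _
  have hint : (interior Q).Nonempty := by
    rw [hconv.interior_nonempty_iff_affineSpan_eq_top, hQ, affineSpan_convexHull]
    exact span_top y i (fun s c hs => h s c (fun l _ => hs l) (hs i))
  by_contra hmn
  obtain ⟨f, hf⟩ := geometric_hahn_banach_open_point hconv.interior isOpen_interior hmn
  obtain ⟨s, hs⟩ : ∃ s : Euc d, ∀ x, f x = ⟪s, x⟫ :=
    ⟨(InnerProductSpace.toDual ℝ (Euc d)).symm f, fun x => by simp⟩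
  have hle : ∀ x ∈ Q, ⟪s, x⟫ ≤ ⟪s, m⟫ := by
    have hsub : closure (interior Q) ⊆ {x | f x ≤ f m} := by
      apply closure_minimal
      · intro x hx; exact (hf x hx).le
      · exact isClosed_le f.continuous continuous_const
    intro x hx
    have := hsub ((hconv.closure_interior_eq_closure_of_nonempty_interior hint).symm ▸ subset_closure hx)
    simpa [hs] using this
  have hy : ∀ l, ⟪s, y l⟫ ≤ ⟪s, m⟫ := fun l => hle _ (subset_convexHull ℝ _ ⟨l, rfl⟩)
  have hme : ⟪s, m⟫ = (1/2) * ⟪s, ∑ l, w l • y l⟫ + (1/2) * ⟪s, y i⟫ := by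
    rw [hm, inner_add_right, inner_smul_right, inner_smul_right]
  have hcle : ⟪s, ∑ l, w l • y l⟫ ≤ ⟪s, m⟫ := by
    rw [inner_sum]
    simp only [inner_smul_right]
    calc ∑ i, w i * ⟪s, y i⟫ ≤ ∑ i, w i * ⟪s, m⟫ := by
          apply Finset.sum_le_sum
          intro i _; exact mul_le_mul_of_nonneg_left (hy i) (hw0 i)
      _ = ⟪s, m⟫ := by rw [← Finset.sum_mul, hw1, one_mul]
  have hs0 : s = 0 := by
    apply h s ⟪s, m⟫
    · intro l hl
      by_contra hne
      have := wsum_lt y w hw0 hw1 s _ hy l hl (lt_of_le_of_ne (hy l) hne)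
      linarith [hy i]
    · linarith [hy i]
  obtain ⟨x, hx⟩ := hint
  have := hf x hx
  rw [hs, hs, hs0] at this
  simp at this

open Topology Filter in
/-- Stacking lemma. -/
lemma stack {d : ℕ} (hd : 1 ≤ d) {ι J : Type*} [Fintype ι] [Fintype J]
    (y : ι → Euc d) (A : J → Set ι) (f : J → Euc d)
    (H1 : ∀ i, ∃ s : Euc d, ∀ j, j ≠ i → ⟪s, y j⟫ < ⟪s, y i⟫)
    (H2 : ∀ j i, i ∉ A j → ⟪f j, y i⟫ = 1)
    (H2' : ∀ j i, i ∈ A j → ⟪f j, y i⟫ < 1)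
    (H3 : ∀ j, ∀ i ∈ A j, ∀ s : Euc d, ∀ c : ℝ, (∀ l, l ∉ A j → ⟪s, y l⟫ = c) →
      ⟪s, y i⟫ = c → s = 0)
    (H4 : ∀ i, ∃ j, i ∈ A j) (H4' : ∀ j, (A j).Nonempty)
    (H4'' : ∀ j i, ∃ l, l ∉ A j ∧ l ≠ i)
    (H5 : ∀ i j, i ≠ j → ∃ l, l ∈ A i ∧ l ∉ A j)
    (i₀ : ι)
    (G : Set ι) (h : Euc d) (hh0 : h ≠ 0)
    (H6 : ∀ i, i ∈ G → ⟪h, y i⟫ = 1) (H6' : ∀ i, i ∉ G → ⟪h, y i⟫ < 1)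
    (H7 : ∀ j, ∃ l, l ∉ A j ∧ l ∉ G)
    (H8 : d < G.ncard)
    (H9 : ∀ s : Euc d, ∀ c : ℝ, (∀ i ∈ G, ⟪s, y i⟫ = c) → ∃ a : ℝ, s = a • h) :
    ∃ P : Set (Euc d), (IsDPolytope P ∧ Illuminated P ∧
      (verts P).ncard = Fintype.card ι + Fintype.card J) ∧
      ∃ F : Set (Euc d), IsFacetOf P F ∧ d < (Set.extremePoints ℝ F).ncard := by
  classical
  choose g hg using H1
  -- weights
  have hN : ∀ j, 0 < (Finset.univ.filter (fun l => l ∉ A j)).card := by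
    intro j
    obtain ⟨l, hl, _⟩ := H4'' j i₀
    exact Finset.card_pos.2 ⟨l, by simp [hl]⟩
  let w : J → ι → ℝ := fun j l =>
    if l ∉ A j then ((Finset.univ.filter (fun l => l ∉ A j)).card : ℝ)⁻¹ else 0
  have hw0 : ∀ j i, 0 ≤ w j i := by
    intro j i
    simp only [w]; split_ifs <;> positivity
  have hwpos : ∀ j i, i ∉ A j → 0 < w j i := by
    intro j i hi
    simp only [w, hi]
    have := hN j
    simp only [not_false_eq_true, if_true]
    positivity
  have hwA : ∀ j i, 0 < w j i → i ∉ A j := by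
    intro j i hp hi
    simp [w, hi] at hp
  have hw1 : ∀ j, ∑ i, w j i = 1 := by
    intro j
    simp only [w]
    rw [← Finset.sum_filter, Finset.sum_const, nsmul_eq_mul]
    have := hN j
    exact mul_inv_cancel₀ (by positivity)
  let c : J → Euc d := fun j => ∑ i, w j i • y i
  let x : ℝ → J → Euc d := fun ε j => c j + ε • f j
  have hx0 : ∀ j, x 0 j = c j := by intro j; simp [x]
  have hxc : ∀ j, Continuous (fun ε => x ε j) := by intro j; simp only [x]; fun_prop
  have hfle : ∀ j i, ⟪f j, y i⟫ ≤ 1 := by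
    intro j i
    by_cases hi : i ∈ A j
    · exact (H2' j i hi).le
    · exact (H2 j i hi).le
  have hhle : ∀ i, ⟪h, y i⟫ ≤ 1 := by
    intro i
    by_cases hi : i ∈ G
    · exact (H6 i hi).le
    · exact (H6' i hi).le
  have hgle : ∀ i j, ⟪g i, y j⟫ ≤ ⟪g i, y i⟫ := by
    intro i j
    by_cases hi : j = i
    · rw [hi]
    · exact (hg i j hi).le
  have openc : ∀ (s : Euc d) (M : ℝ) (j : J), ⟪s, c j⟫ < M → ∀ᶠ ε in 𝓝 (0:ℝ), ⟪s, x ε j⟫ < M := by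
    intro s M j hlt
    have hc : Continuous (fun ε => ⟪s, x ε j⟫) := continuous_const.inner (hxc j)
    have : ⟪s, x 0 j⟫ < M := by rw [hx0]; exact hlt
    exact hc.continuousAt.eventually (Iio_mem_nhds this)
  have ea : ∀ᶠ ε in 𝓝 (0:ℝ), ∀ j i, i ∈ A j →
      (1/2 : ℝ) • x ε j + (1/2 : ℝ) • y i ∈ interior (convexHull ℝ (Set.range y)) := by
    rw [eventually_all]; intro j
    rw [eventually_all]; intro i
    by_cases hi : i ∈ A j
    · simp only [hi, true_imp_iff]
      have hc : Continuous (fun ε => (1/2 : ℝ) • x ε j + (1/2 : ℝ) • y i) :=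
        ((hxc j).const_smul (1/2 : ℝ)).add (continuous_const (y := (1/2 : ℝ) • y i))
      apply hc.continuousAt.eventually (isOpen_interior.mem_nhds _)
      beta_reduce
      rw [hx0]
      exact mid_interior y (w j) (hw0 j) (hw1 j) i
        (fun s c hs hi' => H3 j i hi s c (fun l hl => hs l (hwpos j l hl)) hi')
    · simp [hi]
  have eb : ∀ᶠ ε in 𝓝 (0:ℝ), ∀ i j, j ≠ i → ⟪f i, x ε j⟫ < 1 := by
    rw [eventually_all]; intro i
    rw [eventually_all]; intro j
    by_cases hi : j = i
    · simp [hi]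
    · simp only [ne_eq, hi, not_false_eq_true, true_imp_iff]
      apply openc
      obtain ⟨l, hl, hl'⟩ := H5 i j (fun e => hi e.symm)
      exact wsum_lt y (w j) (hw0 j) (hw1 j) _ _ (hfle i) l (hwpos j l hl') (H2' i l hl)
  have ec : ∀ᶠ ε in 𝓝 (0:ℝ), ∀ i j, ⟪g i, x ε j⟫ < ⟪g i, y i⟫ := by
    rw [eventually_all]; intro i
    rw [eventually_all]; intro j
    apply openc
    obtain ⟨l, hl, hl'⟩ := H4'' j i
    exact wsum_lt y (w j) (hw0 j) (hw1 j) _ _ (hgle i) l (hwpos j l hl) (hg i l hl')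
  have ed : ∀ᶠ ε in 𝓝 (0:ℝ), ∀ j, ⟪h, x ε j⟫ < 1 := by
    rw [eventually_all]; intro j
    apply openc
    obtain ⟨l, hl, hl'⟩ := H7 j
    exact wsum_lt y (w j) (hw0 j) (hw1 j) _ _ hhle l (hwpos j l hl) (H6' l hl')
  obtain ⟨ε, ⟨⟨⟨⟨ha, hb⟩, hc⟩, hdd⟩, hε⟩⟩ :=
    (((((ea.and eb).and ec).and ed).filter_mono nhdsWithin_le_nhds).and
      (self_mem_nhdsWithin (a := (0:ℝ)) (s := Set.Ioi 0))).exists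
  replace hε : 0 < ε := hε
  set X := x ε with hX
  have hfX : ∀ j, 1 < ⟪f j, X j⟫ := by
    intro j
    have hf0 : f j ≠ 0 := by
      intro h0
      obtain ⟨l, hl, _⟩ := H4'' j i₀
      have := H2 j l hl
      rw [h0, inner_zero_left] at this
      exact zero_ne_one this
    have hcj : ⟪f j, c j⟫ = 1 := by
      simp only [c]
      rw [inner_sum]
      simp only [inner_smul_right]
      rw [← hw1 j]
      apply Finset.sum_congr rfl
      intro i _
      by_cases hi : i ∈ A j
      · simp [w, hi]
      · rw [H2 j i hi, mul_one]
    have : ⟪f j, X j⟫ = 1 + ε * ⟪f j, f j⟫ := by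
      simp only [hX, x, inner_add_right, inner_smul_right, hcj]
    rw [this]
    have : 0 < ⟪f j, f j⟫ := real_inner_self_pos.2 hf0
    nlinarith
  let v : ι ⊕ J → Euc d := Sum.elim y X
  have hv : ∀ k, ∃ s : Euc d, ∀ l, l ≠ k → ⟪s, v l⟫ < ⟪s, v k⟫ := by
    rintro (i | j)
    · refine ⟨g i, ?_⟩
      rintro (l | l) hl
      · exact hg i l (fun e => hl (by rw [e]))
      · exact hc i l
    · refine ⟨f j, ?_⟩
      rintro (l | l) hl
      · exact (hfle j l).trans_lt (hfX j)
      · exact (hb j l (fun e => hl (by rw [e]))).trans (hfX j)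
  have hinj : Function.Injective v := by
    intro k l hkl
    by_contra hne
    obtain ⟨s, hs⟩ := hv k
    have := hs l (fun e => hne e.symm)
    rw [hkl] at this
    exact lt_irrefl _ this
  set P := convexHull ℝ (Set.range v) with hP
  have hverts : verts P = Set.range v := by
    apply Set.Subset.antisymm
    · exact extremePoints_convexHull_subset
    · rintro _ ⟨k, rfl⟩
      obtain ⟨s, hs⟩ := hv k
      exact extreme_of_strict v k s hs
  have hfin : (Set.range v).Finite := Set.finite_range v
  have hQP : convexHull ℝ (Set.range y) ⊆ P := by
    apply convexHull_mono
    rintro _ ⟨i, rfl⟩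
    exact ⟨Sum.inl i, rfl⟩
  have hdiag : ∀ j i, i ∈ A j → InnerDiagonal P (X j) (y i) := by
    intro j i hi
    refine ⟨?_, ?_, ?_, ?_⟩
    · rw [hverts]; exact ⟨Sum.inr j, rfl⟩
    · rw [hverts]; exact ⟨Sum.inl i, rfl⟩
    · intro e
      have : Sum.inr j = Sum.inl i := hinj e
      cases this
    · refine ⟨(1/2 : ℝ) • X j + (1/2 : ℝ) • y i, ⟨1/2, 1/2, by norm_num, by norm_num, by norm_num, rfl⟩, ?_⟩
      exact interior_mono hQP (ha j i hi)
  have hsymm : ∀ u v, InnerDiagonal P u v → InnerDiagonal P v u := by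
    rintro u v ⟨h1, h2, h3, h4⟩
    refine ⟨h2, h1, h3.symm, ?_⟩
    rwa [openSegment_symm]
  have hspan : affineSpan ℝ P = ⊤ := by
    rw [hP, affineSpan_convexHull]
    obtain ⟨j, hj⟩ := H4 i₀
    exact span_top v (Sum.inl i₀) (fun s c hs => H3 j i₀ hj s c (fun l _ => hs (Sum.inl l)) (hs (Sum.inl i₀)))
  refine ⟨P, ⟨⟨⟨Set.range v, hfin, rfl⟩, hspan⟩, ?_, ?_⟩, ?_⟩
  · intro u hu
    rw [hverts] at hu
    obtain ⟨k, rfl⟩ := hu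
    rcases k with i | j
    · obtain ⟨j, hj⟩ := H4 i
      exact ⟨X j, hdiag j i hj⟩
    · obtain ⟨i, hi⟩ := H4' j
      exact ⟨y i, hsymm _ _ (hdiag j i hi)⟩
  · rw [hverts, Set.ncard_eq_toFinset_card', Set.toFinset_range,
      Finset.card_image_of_injective _ hinj, Finset.card_univ, Fintype.card_sum]
  · let ℓ : Euc d →L[ℝ] ℝ := innerSL ℝ h
    have hPle : ∀ z ∈ P, ⟪h, z⟫ ≤ 1 := by
      apply conv_le
      rintro (i | j)
      · exact hhle i
      · exact (hdd j).le
    obtain ⟨i₁, hi₁⟩ : G.Nonempty := by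
      rw [Set.nonempty_iff_ne_empty]
      rintro rfl
      simp at H8
    have hyP : ∀ i, y i ∈ P := fun i => subset_convexHull ℝ _ ⟨Sum.inl i, rfl⟩
    let F : Set (Euc d) := {z ∈ P | ∀ u ∈ P, ℓ u ≤ ℓ z}
    have hF1 : ∀ z ∈ F, ⟪h, z⟫ = 1 := by
      rintro z ⟨hz, hz'⟩
      have h1 := hz' (y i₁) (hyP i₁)
      simp only [ℓ, innerSL_apply_apply, H6 i₁ hi₁] at h1
      exact le_antisymm (hPle z hz) h1
    have hGF : ∀ i ∈ G, y i ∈ F := by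
      intro i hi
      refine ⟨hyP i, fun u hu => ?_⟩
      simp only [ℓ, innerSL_apply_apply, H6 i hi]
      exact hPle u hu
    have hexp : IsExposed ℝ P F := fun _ => ⟨ℓ, rfl⟩
    refine ⟨F, ⟨hexp, ?_⟩, ?_⟩
    · rw [direction_affineSpan]
      have horth : (vectorSpan ℝ F)ᗮ = Submodule.span ℝ {h} := by
        apply le_antisymm
        · intro s hs
          rw [Submodule.mem_span_singleton]
          obtain ⟨a, ha⟩ := H9 s ⟪s, y i₁⟫ (by
            intro i hi
            have : y i -ᵥ y i₁ ∈ vectorSpan ℝ F :=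
              vsub_mem_vectorSpan ℝ (hGF i hi) (hGF i₁ hi₁)
            have h2 := (Submodule.mem_orthogonal' _ _).1 hs _ this
            rw [vsub_eq_sub, inner_sub_right] at h2
            linarith)
          exact ⟨a, ha.symm⟩
        · rw [Submodule.span_singleton_le_iff_mem, Submodule.mem_orthogonal']
          have : vectorSpan ℝ F ≤ (Submodule.span ℝ {h})ᗮ := by
            rw [vectorSpan_def, Submodule.span_le]
            rintro _ ⟨a, ha, b, hb, rfl⟩
            rw [SetLike.mem_coe, Submodule.mem_orthogonal_singleton_iff_inner_right]
            simp only [vsub_eq_sub]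
            rw [inner_sub_right, hF1 a ha, hF1 b hb, sub_self]
          intro u hu
          exact Submodule.mem_orthogonal_singleton_iff_inner_right.1 (this hu)
      have h1 := Submodule.finrank_add_finrank_orthogonal (vectorSpan ℝ F)
      rw [horth, finrank_span_singleton hh0, finrank_euclideanSpace_fin] at h1
      omega
    · have hsub : Set.extremePoints ℝ F ⊆ Set.range v := by
        rw [← hverts]
        exact hexp.isExtreme.extremePoints_subset_extremePoints
      have hsup : y '' G ⊆ Set.extremePoints ℝ F := by
        rintro _ ⟨i, hi, rfl⟩
        apply inter_extremePoints_subset_extremePoints_of_subset hexp.subset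
        refine ⟨hGF i hi, ?_⟩
        have : y i ∈ verts P := by rw [hverts]; exact ⟨Sum.inl i, rfl⟩
        exact this
      have hyinj : Function.Injective y := by
        intro i j hij
        have : (Sum.inl i : ι ⊕ J) = Sum.inl j := hinj hij
        exact Sum.inl_injective this
      calc d < G.ncard := H8
        _ = (y '' G).ncard := (Set.ncard_image_of_injective G hyinj).symm
        _ ≤ _ := Set.ncard_le_ncard hsup (hfin.subset hsub)

/-- Stacking lemma, in terms of a Gale transform. -/
lemma stackS {d : ℕ} (hd : 1 ≤ d) {ι J B : Type*} [Fintype ι] [Fintype J] [Fintype B]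
    (L : (ι → ℝ) →ₗ[ℝ] (B → ℝ)) (hL : Function.Surjective L)
    (hcard : Fintype.card ι = d + Fintype.card B)
    (A : J → Set ι) (τ : J → ι → ℝ)
    (H1 : ∀ i, ∃ t : ι → ℝ, L t = L 1 ∧ t i = 0 ∧ ∀ j, j ≠ i → 0 < t j)
    (H2 : ∀ j i, i ∉ A j → τ j i = 0)
    (H2' : ∀ j i, i ∈ A j → 0 < τ j i)
    (H2'' : ∀ j, L (τ j) = L 1)
    (H3 : ∀ j, ∀ i ∈ A j, ∀ t : ι → ℝ, ∀ c : ℝ, L t = c • L 1 → (∀ l, l ∉ A j → t l = 0) →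
      t i = 0 → c = 0 ∧ t = 0)
    (H4 : ∀ i, ∃ j, i ∈ A j) (H4' : ∀ j, (A j).Nonempty)
    (H4'' : ∀ j i, ∃ l, l ∉ A j ∧ l ≠ i)
    (H5 : ∀ i j, i ≠ j → ∃ l, l ∈ A i ∧ l ∉ A j)
    (G : Set ι) (θ : ι → ℝ)
    (H6 : ∀ i, i ∈ G → θ i = 0) (H6' : ∀ i, i ∉ G → 0 < θ i)
    (H6'' : L θ = L 1)
    (H7 : ∀ j, ∃ l, l ∉ A j ∧ l ∉ G)
    (H8 : d < G.ncard)
    (H9 : ∀ t : ι → ℝ, ∀ c : ℝ, L t = c • L 1 → (∀ i ∈ G, t i = 0) → t = c • θ) :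
    ∃ P : Set (Euc d), (IsDPolytope P ∧ Illuminated P ∧
      (verts P).ncard = Fintype.card ι + Fintype.card J) ∧
      ∃ F : Set (Euc d), IsFacetOf P F ∧ d < (Set.extremePoints ℝ F).ncard := by
  have hfr : Module.finrank ℝ (Euc d) = Module.finrank ℝ (LinearMap.ker L) := by
    have h1 := LinearMap.finrank_range_add_finrank_ker L
    rw [LinearMap.range_eq_top.2 hL, finrank_top, Module.finrank_fintype_fun_eq_card,
      Module.finrank_fintype_fun_eq_card] at h1
    rw [finrank_euclideanSpace_fin]
    omega
  let u : Euc d ≃ₗ[ℝ] LinearMap.ker L := LinearEquiv.ofFinrankEq _ _ hfr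
  obtain ⟨y, hy⟩ : ∃ y : ι → Euc d, ∀ x i, ⟪x, y i⟫ = (u x : ι → ℝ) i := by
    refine ⟨fun i => (InnerProductSpace.toDual ℝ (Euc d)).symm (LinearMap.toContinuousLinearMap
      ((LinearMap.proj i).comp ((LinearMap.ker L).subtype.comp u.toLinearMap))), ?_⟩
    intro x i
    rw [real_inner_comm, InnerProductSpace.toDual_symm_apply]
    simp
  have hslack : ∀ t : ι → ℝ, L t = L 1 → ∃ s : Euc d, ∀ i, ⟪s, y i⟫ = 1 - t i := by
    intro t ht
    refine ⟨u.symm ⟨1 - t, ?_⟩, ?_⟩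
    · rw [LinearMap.mem_ker, map_sub, ht, sub_self]
    · intro i
      rw [hy]; simp
  have hback : ∀ s : Euc d, ∀ c : ℝ, L (fun i => c - ⟪s, y i⟫) = c • L 1 := by
    intro s c
    have : (fun i => c - ⟪s, y i⟫) = c • (1 : ι → ℝ) - (u s : ι → ℝ) := by
      ext i; simp [hy]
    rw [this, map_sub, map_smul, LinearMap.mem_ker.1 (u s).2, sub_zero]
  have hzero : ∀ s s' : Euc d, (∀ i, ⟪s, y i⟫ = ⟪s', y i⟫) → s = s' := by
    intro s s' hs
    apply u.injective
    apply Subtype.ext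
    ext i
    rw [← hy, ← hy, hs]
  have hGne : G.Nonempty := by
    rw [Set.nonempty_iff_ne_empty]
    rintro rfl
    simp at H8
  obtain ⟨i₁, hi₁⟩ := hGne
  choose f hf using fun j => hslack (τ j) (H2'' j)
  obtain ⟨h, hh⟩ := hslack θ H6''
  refine stack hd y A f ?_ ?_ ?_ ?_ H4 H4' H4'' H5 i₁ G h ?_ ?_ ?_ H7 H8 ?_
  · intro i
    obtain ⟨t, ht, ht0, ht1⟩ := H1 i
    obtain ⟨s, hs⟩ := hslack t ht
    refine ⟨s, fun j hj => ?_⟩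
    rw [hs, hs, ht0]
    linarith [ht1 j hj]
  · intro j i hi
    rw [hf, H2 j i hi, sub_zero]
  · intro j i hi
    rw [hf]
    linarith [H2' j i hi]
  · intro j i hi s c hs hsi
    obtain ⟨hc, ht⟩ := H3 j i hi _ c (hback s c) (fun l hl => by simp [hs l hl]) (by simp [hsi])
    apply hzero
    intro l
    have := congrFun ht l
    simp [hc] at this
    rw [this, inner_zero_left]
  · rintro rfl
    have := hh i₁
    rw [H6 i₁ hi₁, inner_zero_left] at this
    norm_num at this
  · intro i hi
    rw [hh, H6 i hi, sub_zero]
  · intro i hi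
    rw [hh]
    linarith [H6' i hi]
  · intro s c hs
    refine ⟨c, hzero _ _ fun i => ?_⟩
    have := congrFun (H9 _ c (hback s c) (fun l hl => by simp [hs l hl])) i
    simp only [Pi.smul_apply, smul_eq_mul] at this
    rw [inner_smul_left, hh]
    simp
    linarith

/-- The block relations with one perturbed relation. -/
def blockL {B : Type*} [DecidableEq B] (k : B → ℕ) (b1 b2 b3 : B)
    (m : ∀ b, Fin (k b + 1)) (α : ℝ) :
    ((Σ b, Fin (k b + 1)) → ℝ) →ₗ[ℝ] (B → ℝ) where
  toFun t b := ∑ i, t ⟨b, i⟩ + if b = b3 then α * (t ⟨b1, m b1⟩ + t ⟨b2, m b2⟩) else 0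
  map_add' t t' := by
    ext b
    simp only [Pi.add_apply, Finset.sum_add_distrib]
    split_ifs <;> ring
  map_smul' c t := by
    ext b
    simp only [Pi.smul_apply, smul_eq_mul, RingHom.id_apply, ← Finset.mul_sum]
    split_ifs <;> ring

lemma concrete {d : ℕ} (hd : 1 ≤ d) {B J : Type*} [Fintype B] [DecidableEq B] [Fintype J]
    (k : B → ℕ) (hk : ∀ b, 1 ≤ k b) (hsum : ∑ b, k b = d)
    (b1 b2 b3 : B) (h12 : b1 ≠ b2) (h13 : b1 ≠ b3) (h23 : b2 ≠ b3)
    (m : ∀ b, Fin (k b + 1)) (z : ∀ b, J → Fin (k b + 1))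
    (hz : ∀ b, Function.Surjective (z b)) (b0 : B) (hz0 : Function.Injective (z b0))
    (hzm : ∀ j, ¬ (z b1 j = m b1 ∧ z b2 j = m b2)) :
    ∃ P : Set (Euc d), (IsDPolytope P ∧ Illuminated P ∧
      (verts P).ncard = d + Fintype.card B + Fintype.card J) ∧
      ∃ F : Set (Euc d), IsFacetOf P F ∧ d < (Set.extremePoints ℝ F).ncard := by
  have hk1 : (1:ℝ) ≤ k b1 := by exact_mod_cast hk b1
  have hk2 : (1:ℝ) ≤ k b2 := by exact_mod_cast hk b2
  have hk3 : (1:ℝ) ≤ k b3 := by exact_mod_cast hk b3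
  obtain ⟨β, hβ⟩ : ∃ β : ℝ, β = 1 / (k b1 + k b2) := ⟨_, rfl⟩
  have hβ1 : β * (k b1 + k b2) = 1 := by rw [hβ]; field_simp
  have hβ0 : 0 < β := by rw [hβ]; positivity
  have hβ2 : β ≤ 1/2 := by nlinarith
  obtain ⟨α, hα⟩ : ∃ α : ℝ, α = β * (k b3 + 1) := ⟨_, rfl⟩
  have hα0 : 0 < α := by rw [hα]; positivity
  have hα3 : α * ((k b1 + 1) + (k b2 + 1)) = (k b3 + 1) + 2 * α := by
    rw [hα]; linear_combination (k b3 + 1 : ℝ) * hβ1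
  have hLdef : ∀ t b, blockL k b1 b2 b3 m α t b =
      ∑ i, t ⟨b, i⟩ + if b = b3 then α * (t ⟨b1, m b1⟩ + t ⟨b2, m b2⟩) else 0 := fun _ _ => rfl
  have hL1 : ∀ b, blockL k b1 b2 b3 m α 1 b = (k b + 1) + if b = b3 then 2 * α else 0 := by
    intro b; rw [hLdef]; simp; split_ifs <;> ring
  have hcardι : Fintype.card (Σ b, Fin (k b + 1)) = d + Fintype.card B := by
    rw [Fintype.card_sigma]
    simp [Finset.sum_add_distrib, hsum]
  have hother : ∀ b (i : Fin (k b + 1)), ∃ i', i' ≠ i := by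
    intro b i
    have : Nontrivial (Fin (k b + 1)) := Fin.nontrivial_iff_two_le.2 (by have := hk b; omega)
    exact exists_ne i
  rw [← hcardι]
  let val : J → B → ℝ := fun j b => if b = b3 then
    α * ((if z b1 j = m b1 then (0:ℝ) else (k b1 + 1 : ℝ)) + (if z b2 j = m b2 then (0:ℝ) else (k b2 + 1 : ℝ)))
    else k b + 1
  refine stackS hd (blockL k b1 b2 b3 m α) ?_ hcardι (fun j => {l | l.2 = z l.1 j})
    (fun j l => if l.2 = z l.1 j then val j l.1 else 0) ?_ ?_ ?_ ?_ ?_ ?_ ?_ ?_ ?_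
    {l | l.1 = b3 ∨ l.2 ≠ m l.1}
    (fun l => if l.1 = b3 then 0 else if l.2 = m l.1 then k l.1 + 1 else 0) ?_ ?_ ?_ ?_ ?_ ?_
  · -- surjective
    intro v
    choose m' hm' using fun b => hother b (m b)
    refine ⟨fun l => if l.2 = m' l.1 then v l.1 else 0, ?_⟩
    ext b
    rw [hLdef]
    simp [(hm' b1).symm, (hm' b2).symm]
  · -- H1
    rintro ⟨c, i0⟩
    let own : ∀ b, Fin (k b + 1) → ℝ := fun b i => if h : b = c then
      (if h ▸ i = i0 then 0 else (k c + 1) / k c) else 1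
    have hkc : (1:ℝ) ≤ k c := by exact_mod_cast hk c
    have hrat : (k c + 1 : ℝ) / k c ≤ 2 := by
      rw [div_le_iff₀ (by linarith)]; linarith
    have hown_c : ∀ i, own c i = if i = i0 then (0:ℝ) else (k c + 1 : ℝ) / k c := by
      intro i; simp [own]
    have hown_n : ∀ b, b ≠ c → ∀ i, own b i = 1 := by
      intro b hb i; simp [own, hb]
    have hown_le : ∀ b i, own b i ≤ 2 := by
      intro b i
      by_cases hb : b = c
      · subst hb; rw [hown_c]; split_ifs <;> linarith
      · rw [hown_n b hb]; norm_num
    let e : ℝ := 1 + β * (2 - own b1 (m b1) - own b2 (m b2))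
    have he : 0 < e := by
      have : own b1 (m b1) + own b2 (m b2) ≤ 3 := by
        by_cases h : b1 = c
        · have := hown_n b2 (fun h' => h12 (h.trans h'.symm)) (m b2)
          linarith [hown_le b1 (m b1)]
        · have := hown_n b1 h (m b1)
          linarith [hown_le b2 (m b2)]
      simp only [e]; nlinarith
    have hsum_c : ∑ i, own c i = k c + 1 := by
      simp_rw [hown_c]
      rw [Finset.sum_ite, Finset.sum_const_zero, Finset.sum_const, zero_add]
      have : (Finset.univ.filter (fun i => ¬ i = i0)).card = k c := by
        rw [Finset.filter_not, Finset.filter_eq' ]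
        simp [Finset.card_sdiff]
      rw [this, nsmul_eq_mul]
      field_simp
    have hsum_n : ∀ b, b ≠ c → ∑ i, own b i = k b + 1 := by
      intro b hb
      simp [hown_n b hb]
    have hsum_all : ∀ b, ∑ i, own b i = k b + 1 := by
      intro b
      by_cases hb : b = c
      · subst hb; exact hsum_c
      · exact hsum_n b hb
    refine ⟨fun l => if l.1 = b3 then e * own l.1 l.2 else own l.1 l.2, ?_, ?_, ?_⟩
    · ext b
      rw [hLdef, hL1]
      by_cases hb : b = b3
      · subst hb
        simp only [if_true, if_neg h13, if_neg h23, ← Finset.mul_sum, hsum_all]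
        simp only [e, hα]
        ring
      · simp [hb, hsum_all]
    · simp [hown_c]
    · rintro ⟨b, i⟩ hbi
      have : 0 < own b i := by
        by_cases hb : b = c
        · subst hb
          have : i ≠ i0 := fun h => hbi (by rw [h])
          rw [hown_c, if_neg this]
          exact div_pos (by linarith) (by linarith)
        · rw [hown_n b hb]; norm_num
      dsimp only
      split_ifs <;> positivity
  · intro j i hi
    simp only [Set.mem_ofPred_eq] at hi
    simp [hi]
  · intro j i hi
    simp only [Set.mem_ofPred_eq] at hi
    simp only [hi, if_true, val]
    have := hzm j
    split_ifs <;> first | positivity | tauto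
  · intro j
    ext b
    rw [hLdef, hL1]
    by_cases hb : b = b3
    · subst hb
      have := hzm j
      simp only [Finset.sum_ite_eq', Finset.sum_ite_eq, Finset.mem_univ, if_true, val, if_neg h13, if_neg h23]
      rw [← hα3]
      simp only [eq_comm (a := m b1), eq_comm (a := m b2)]
      split_ifs <;> ring
    · simp [hb, val]
  · rintro j ⟨b, i⟩ hi t c hLt ht hti
    simp only [Set.mem_ofPred_eq] at hi ht
    subst hi
    have ht' : ∀ b i, i ≠ z b j → t ⟨b, i⟩ = 0 := fun b i h => ht ⟨b, i⟩ h
    have hsm : ∀ b, ∑ i, t ⟨b, i⟩ = t ⟨b, z b j⟩ := by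
      intro b
      apply Finset.sum_eq_single
      · intro i _ h; exact ht' b i h
      · simp
    have hb : ∀ b, t ⟨b, z b j⟩ + (if b = b3 then α * (t ⟨b1, m b1⟩ + t ⟨b2, m b2⟩) else 0) =
        c * ((k b + 1) + if b = b3 then 2 * α else 0) := by
      intro b
      have := congrFun hLt b
      rwa [Pi.smul_apply, smul_eq_mul, hL1, hLdef, hsm] at this
    have hbn : ∀ b, b ≠ b3 → t ⟨b, z b j⟩ = c * (k b + 1) := by
      intro b h
      have := hb b
      simpa [h] using this
    have h3 := hb b3
    simp only [if_true] at h3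
    have hc : c = 0 := by
      by_cases hbb : b = b3
      · subst hbb
        rw [hti, zero_add] at h3
        have e1 : t ⟨b1, m b1⟩ = if z b1 j = m b1 then c * (k b1 + 1) else 0 := by
          split_ifs with h
          · rw [← h]; exact hbn b1 h13
          · exact ht' _ _ (fun h' => h h'.symm)
        have e2 : t ⟨b2, m b2⟩ = if z b2 j = m b2 then c * (k b2 + 1) else 0 := by
          split_ifs with h
          · rw [← h]; exact hbn b2 h23
          · exact ht' _ _ (fun h' => h h'.symm)
        rw [e1, e2, ← hα3] at h3
        have hzj := hzm j
        have p1 : α * (k b1 + 1) ≠ 0 := by positivity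
        have p2 : α * (k b2 + 1) ≠ 0 := by positivity
        have p3 : α * ((k b1 + 1) + (k b2 + 1)) ≠ 0 := by positivity
        split_ifs at h3 with q1 q2 q2
        · exact absurd ⟨q1, q2⟩ hzj
        · have : c * (α * (k b2 + 1)) = 0 := by linear_combination -h3
          exact (mul_eq_zero.1 this).resolve_right p2
        · have : c * (α * (k b1 + 1)) = 0 := by linear_combination -h3
          exact (mul_eq_zero.1 this).resolve_right p1
        · have : c * (α * ((k b1 + 1) + (k b2 + 1))) = 0 := by linear_combination -h3
          exact (mul_eq_zero.1 this).resolve_right p3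
      · have := hbn b hbb
        rw [hti] at this
        have p : (k b + 1 : ℝ) ≠ 0 := by positivity
        exact (mul_eq_zero.1 this.symm).resolve_right p
    refine ⟨hc, ?_⟩
    subst hc
    have hn0 : ∀ b, b ≠ b3 → ∀ i, t ⟨b, i⟩ = 0 := by
      intro b h i
      by_cases hi : i = z b j
      · subst hi; rw [hbn b h, zero_mul]
      · exact ht' b i hi
    rw [hn0 b1 h13, hn0 b2 h23] at h3
    ext ⟨b, i⟩
    simp only [Pi.zero_apply]
    by_cases h : b = b3
    · subst h
      by_cases hi : i = z b j
      · subst hi; linarith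
      · exact ht' b i hi
    · exact hn0 b h i
  · rintro ⟨b, i⟩
    obtain ⟨j, hj⟩ := hz b i
    exact ⟨j, hj.symm⟩
  · intro j
    exact ⟨⟨b1, z b1 j⟩, rfl⟩
  · rintro j ⟨b, i⟩
    by_cases h : b = b1
    · obtain ⟨i', hi'⟩ := hother b2 (z b2 j)
      exact ⟨⟨b2, i'⟩, hi', fun e => h12 (h.symm.trans (congrArg Sigma.fst e).symm)⟩
    · obtain ⟨i', hi'⟩ := hother b1 (z b1 j)
      exact ⟨⟨b1, i'⟩, hi', fun e => h (congrArg Sigma.fst e).symm⟩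
  · intro i j hij
    exact ⟨⟨b0, z b0 i⟩, rfl, fun e => hij (hz0 e)⟩
  · rintro ⟨b, i⟩ h
    simp only [Set.mem_ofPred_eq] at h
    rcases h with h | h
    · simp [h]
    · simp [h]
  · rintro ⟨b, i⟩ h
    simp only [Set.mem_ofPred_eq, not_or, not_not] at h
    simp only [h.1, h.2, if_true, if_false]
    positivity
  · ext b
    rw [hLdef, hL1]
    by_cases hb : b = b3
    · subst hb
      simp only [if_true, if_neg h13, if_neg h23, Finset.sum_const_zero, zero_add]
      exact hα3
    · simp [hb]
  · intro j
    by_cases h : z b1 j = m b1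
    · have h2 : ¬ z b2 j = m b2 := fun h' => hzm j ⟨h, h'⟩
      exact ⟨⟨b2, m b2⟩, fun e => h2 e.symm, by simp [h23]⟩
    · exact ⟨⟨b1, m b1⟩, fun e => h e.symm, by simp [h13]⟩
  · set G : Set (Σ b, Fin (k b + 1)) := {l | l.1 = b3 ∨ l.2 ≠ m l.1} with hG
    have hsub : Gᶜ ⊆ (fun b => (⟨b, m b⟩ : Σ b, Fin (k b + 1))) '' {b3}ᶜ := by
      rintro ⟨b, i⟩ h
      simp only [hG, Set.mem_compl_iff, Set.mem_ofPred_eq, not_or, not_not] at h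
      exact ⟨b, h.1, by simp [h.2]⟩
    have h1 : Gᶜ.ncard ≤ ({b3}ᶜ : Set B).ncard :=
      (Set.ncard_le_ncard hsub (Set.toFinite _)).trans (Set.ncard_image_le (Set.toFinite _))
    have h2 := Set.ncard_add_ncard_compl G
    have h3 := Set.ncard_add_ncard_compl ({b3} : Set B)
    rw [Nat.card_eq_fintype_card, hcardι] at h2
    rw [Nat.card_eq_fintype_card, Set.ncard_singleton] at h3
    omega
  · intro t c hLt ht
    simp only [Set.mem_ofPred_eq] at ht
    ext ⟨b, i⟩
    simp only [Pi.smul_apply, smul_eq_mul]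
    by_cases hb : b = b3
    · simp [hb, ht ⟨b, i⟩ (Or.inl hb)]
    by_cases hi : i = m b
    · subst hi
      have h1 := congrFun hLt b
      rw [Pi.smul_apply, smul_eq_mul, hL1, hLdef] at h1
      have hsm : ∑ i, t ⟨b, i⟩ = t ⟨b, m b⟩ := by
        apply Finset.sum_eq_single
        · intro i _ h; exact ht ⟨b, i⟩ (Or.inr h)
        · simp
      rw [hsm] at h1
      simpa [hb] using h1
    · simp [hb, hi, ht ⟨b, i⟩ (Or.inr hi)]

lemma exists_sizes (p q : ℕ) (d : ℕ) (h1 : p ≤ d) (h2 : d ≤ p * q) :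
    ∃ k : Fin p → ℕ, (∀ b, 1 ≤ k b) ∧ (∀ b, k b ≤ q) ∧ ∑ b, k b = d := by
  induction d, h1 using Nat.le_induction with
  | base =>
    refine ⟨fun _ => 1, fun _ => le_rfl, fun b => ?_, by simp⟩
    have : 0 < p := b.pos
    exact Nat.pos_of_mul_pos_left (lt_of_lt_of_le this h2)
  | succ d hd ih =>
    obtain ⟨k, hk1, hkq, hs⟩ := ih (by omega)
    obtain ⟨b, hb⟩ : ∃ b, k b < q := by
      by_contra hcon
      push Not at hcon
      have : ∑ _b : Fin p, q ≤ ∑ b, k b := Finset.sum_le_sum fun b _ => hcon b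
      simp at this
      omega
    refine ⟨k + Pi.single b 1, fun c => ?_, fun c => ?_, ?_⟩
    · have := hk1 c
      simp only [Pi.add_apply]; omega
    · by_cases hc : c = b
      · subst hc; simp; omega
      · simp [hc, hkq c]
    · simp [Finset.sum_add_distrib, hs]

lemma numeric {d : ℕ} (hd : 6 ≤ d) :
    ∃ p q : ℕ, 3 ≤ p ∧ p ≤ d ∧ d ≤ p * q ∧ p * q < d + p ∧ Mf d = d + p + (q + 1) := by
  obtain ⟨p, hp⟩ : ∃ p, p = pf d := ⟨_, rfl⟩
  obtain ⟨q, hq⟩ : ∃ q, q = ⌈(d : ℝ) / (pf d : ℝ)⌉₊ := ⟨_, rfl⟩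
  have hM : Mf d = min (2 * d) (d + p + q + 1) := by rw [Mf, hp, hq]
  have hd' : (6:ℝ) ≤ d := by exact_mod_cast hd
  have hsq : Real.sqrt (4 * d + 1) ^ 2 = 4 * d + 1 := Real.sq_sqrt (by positivity)
  have hs1 : 1 < Real.sqrt (4 * d + 1) := by
    rw [Real.lt_sqrt (by norm_num)]; linarith
  have hup : d ≤ p * (p + 1) := by
    have h1 := Nat.le_ceil ((Real.sqrt (4 * d + 1) - 1) / 2)
    change _ ≤ ((pf d : ℕ) : ℝ) at h1
    rw [← hp] at h1
    have h2 : Real.sqrt (4 * d + 1) ≤ 2 * p + 1 := by linarith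
    have h3 : (4 * d + 1 : ℝ) ≤ (2 * p + 1) ^ 2 := by
      rw [← hsq]; gcongr
    have h4 : (d : ℝ) ≤ p * (p + 1) := by nlinarith
    exact_mod_cast h4
  have hlow : p * p < d + p := by
    have h1 := Nat.ceil_lt_add_one (a := (Real.sqrt (4 * d + 1) - 1) / 2) (by linarith)
    change ((pf d : ℕ) : ℝ) < _ at h1
    rw [← hp] at h1
    have h2 : 2 * p - 1 < Real.sqrt (4 * d + 1) := by linarith
    have hp1 : (1:ℝ) ≤ p := by
      have : 1 ≤ p := by
        rcases Nat.eq_zero_or_pos p with h | h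
        · subst h; omega
        · exact h
      exact_mod_cast this
    have h3 : (2 * p - 1 : ℝ) ^ 2 < 4 * d + 1 := by
      rw [← hsq]
      exact pow_lt_pow_left₀ h2 (by linarith) (by norm_num)
    have h4 : (p * p : ℝ) < d + p := by nlinarith
    exact_mod_cast h4
  have hp2 : 2 ≤ p := by
    by_contra h
    have : p ≤ 1 := by omega
    interval_cases p <;> omega
  have hp0 : (0:ℝ) < p := by exact_mod_cast (by omega : 0 < p)
  have hq1 : d ≤ p * q := by
    have h1 := Nat.le_ceil ((d : ℝ) / (pf d : ℝ))
    rw [← hq, ← hp, div_le_iff₀ hp0] at h1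
    have : (d : ℝ) ≤ p * q := by linarith
    exact_mod_cast this
  have hq2 : p * q < d + p := by
    have h1 := Nat.ceil_lt_add_one (a := (d : ℝ) / (pf d : ℝ)) (by positivity)
    rw [← hq, ← hp] at h1
    have h2 : (q : ℝ) - 1 < d / p := by linarith
    rw [lt_div_iff₀ hp0] at h2
    have : (p * q : ℝ) < d + p := by linarith
    exact_mod_cast this
  rcases Nat.lt_or_ge p 3 with h3 | h3
  · have hpe : p = 2 := by omega
    subst hpe
    have : d = 6 := by omega
    subst this
    refine ⟨3, 2, by norm_num, by norm_num, by norm_num, by norm_num, ?_⟩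
    rw [hM]
    have : q = 3 := by omega
    subst this
    rfl
  · refine ⟨p, q, h3, by nlinarith, hq1, hq2, ?_⟩
    rw [hM, min_eq_right]
    · ring
    rcases Nat.lt_or_ge p 4 with h4 | h4
    · have hpe : p = 3 := by omega
      subst hpe
      omega
    · have : q ≤ p + 1 := by
        by_contra hc
        push Not at hc
        nlinarith
      nlinarith

/-- For every `d ≥ 6` there is a nonsimplicial Mani `d`-polytope:
an illuminated `d`-polytope with exactly `M(d)` vertices having a facet with more
than `d` vertices. -/
theorem exists_nonsimplicial_mani {d : ℕ} (hd : 6 ≤ d) :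
    ∃ P : Set (Euc d), IsManiPolytope P ∧
      ∃ F : Set (Euc d), IsFacetOf P F ∧ d < (Set.extremePoints ℝ F).ncard := by
  obtain ⟨p, q, hp3, hpd, hd1, hd2, hM⟩ := numeric hd
  obtain ⟨k, hk1, hkq, hks⟩ := exists_sizes p q d hpd hd1
  obtain ⟨b0, hb0⟩ : ∃ b, q ≤ k b := by
    by_contra hcon
    push Not at hcon
    have : ∑ b, (k b + 1) ≤ ∑ _b : Fin p, q := Finset.sum_le_sum fun b _ => hcon b
    rw [Finset.sum_add_distrib, hks] at this
    simp at this
    omega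
  let b1 : Fin p := ⟨0, by omega⟩
  let b2 : Fin p := ⟨1, by omega⟩
  let b3 : Fin p := ⟨2, by omega⟩
  have h12 : b1 ≠ b2 := by simp [b1, b2]
  have h13 : b1 ≠ b3 := by simp [b1, b3]
  have h23 : b2 ≠ b3 := by simp [b2, b3]
  obtain ⟨P, ⟨hP1, hP2, hP3⟩, hF⟩ := concrete (by omega : 1 ≤ d) (J := Fin (q + 1)) k hk1 hks
    b1 b2 b3 h12 h13 h23
    (fun b => if b = b2 then Fin.last _ else 0)
    (fun b j => ⟨min j.val (k b), by omega⟩)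
    (by
      intro b i
      have := i.2
      have := hkq b
      refine ⟨⟨i.val, by omega⟩, ?_⟩
      ext
      simp only
      omega)
    b0
    (by
      intro i j hij
      have h1 := congrArg Fin.val hij
      simp only at h1
      have := i.2
      have := j.2
      ext
      omega)
    (by
      rintro j ⟨h1, h2⟩
      rw [if_neg h12] at h1
      rw [if_pos rfl] at h2
      have h1' := congrArg Fin.val h1
      have h2' := congrArg Fin.val h2
      simp only [Fin.val_last, Fin.val_zero] at h1' h2'
      have := hk1 b1
      have := hk1 b2
      omega)
  refine ⟨P, ⟨hP1, hP2, ?_⟩, hF⟩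
  rw [hP3, hM]
  simp
end
end

section
/- For every d ≥ 1, every illuminated d-polytope has at least M(d) vertices. -/
open scoped RealInnerProductSpace

noncomputable section

/-! ### Arithmetic -/

lemma pf_upper (d : ℕ) : d ≤ pf d * (pf d + 1) := by
  have h := Nat.le_ceil ((Real.sqrt (4 * d + 1) - 1) / 2)
  change _ ≤ ((pf d : ℕ) : ℝ) at h
  have h1 : Real.sqrt (4 * d + 1) ≤ 2 * (pf d : ℝ) + 1 := by linarith
  have h2 := (Real.sqrt_le_left (by positivity)).1 h1
  have h3 : (d : ℝ) ≤ pf d * (pf d + 1) := by nlinarith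
  exact_mod_cast h3

lemma pf_pos {d : ℕ} (hd : 1 ≤ d) : 1 ≤ pf d := by
  have := pf_upper d
  by_contra h
  have h0 : pf d = 0 := by omega
  rw [h0] at this
  omega

lemma pf_lower {d : ℕ} (hd : 1 ≤ d) : pf d * (pf d - 1) < d := by
  obtain ⟨q, hq⟩ : ∃ q, pf d = q + 1 := ⟨pf d - 1, by have := pf_pos hd; omega⟩
  have h : q < ⌈(Real.sqrt (4 * d + 1) - 1) / 2⌉₊ := by
    change q < pf d
    omega
  rw [Nat.lt_ceil] at h
  have h1 : 2 * (q : ℝ) + 1 < Real.sqrt (4 * d + 1) := by linarith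
  have h2 := (Real.lt_sqrt (by positivity)).1 h1
  have h3 : ((q : ℝ) + 1) * q < d := by nlinarith
  rw [hq]
  simp only [Nat.add_sub_cancel]
  exact_mod_cast h3

lemma arith_main {d g m n : ℕ} (hd : 1 ≤ d) (hgm : d ≤ m * g) (hn : d + g + m + 1 ≤ n) :
    Mf d ≤ n := by
  have hp := pf_pos hd
  have hu := pf_upper d
  have hl := pf_lower hd
  unfold Mf
  refine le_trans (min_le_right _ _) (le_trans ?_ hn)
  generalize pf d = p at *
  obtain ⟨r, rfl⟩ : ∃ r, p = r + 1 := ⟨p - 1, by omega⟩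
  simp only [Nat.add_sub_cancel] at hl
  have hS : 2 * (r + 1) ≤ g + m := by
    by_contra hcon
    have : g + m ≤ 2 * r + 1 := by omega
    zify at *
    nlinarith [sq_nonneg ((g : ℤ) - m), mul_self_le_mul_self (by positivity : (0:ℤ) ≤ g + m) this]
  obtain ⟨t, ht⟩ : ∃ t, g + m = 2 * (r + 1) + t := ⟨g + m - 2 * (r + 1), by omega⟩
  have hc : ⌈(d : ℝ) / ((r + 1 : ℕ) : ℝ)⌉₊ ≤ r + 1 + t := by
    rw [Nat.ceil_le, div_le_iff₀ (by positivity)]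
    norm_cast
    rcases Nat.eq_zero_or_pos t with h0 | h0
    · subst h0
      zify at *
      have hg : (g : ℤ) = 2 * (r + 1) - m := by linarith
      rw [hg] at hgm
      nlinarith [sq_nonneg ((m : ℤ) - (r + 1))]
    · nlinarith
  omega

/-! ### Star forests -/

/-- In a graph without isolated vertices there is a spanning star forest, encoded by the map
sending each vertex to the centre of its star. -/
lemma exists_star_forest {α : Type*} [Fintype α] [DecidableEq α] (A : α → α → Prop)
    (hsymm : ∀ a b, A a b → A b a) (hirr : ∀ a, ¬ A a a) (hiso : ∀ a, ∃ b, A b a) :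
    ∃ g : α → α, (∀ u, g (g u) = g u) ∧ (∀ u, g u ≠ u → A (g u) u) ∧
      ∀ c, g c = c → ∃ u, u ≠ c ∧ g u = c := by
  classical
  let bad : (α → α) → Finset α := fun g =>
    Finset.univ.filter fun c => g c = c ∧ ∀ u, g u = c → u = c
  let ok : (α → α) → Prop := fun g => (∀ u, g (g u) = g u) ∧ (∀ u, g u ≠ u → A (g u) u)
  have hne : ∃ g, ok g := ⟨id, fun _ => rfl, fun u h => absurd rfl h⟩
  obtain ⟨g, hg, hmin⟩ : ∃ g, ok g ∧ ∀ g', ok g' → (bad g).card ≤ (bad g').card := by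
    have hex : ∃ k, ∃ g, ok g ∧ (bad g).card = k := by
      obtain ⟨g, hg⟩ := hne
      exact ⟨_, g, hg, rfl⟩
    obtain ⟨g, hg, hk⟩ := Nat.find_spec hex
    refine ⟨g, hg, fun g' hg' => ?_⟩
    rw [hk]
    exact Nat.find_min' hex ⟨g', hg', rfl⟩
  refine ⟨g, hg.1, hg.2, fun c hc => ?_⟩
  by_contra hcon
  push Not at hcon
  obtain ⟨h1, h2⟩ := hg
  obtain ⟨x, hx⟩ := hiso c
  have hxc : x ≠ c := fun h => hirr c (h ▸ hx)
  have hleaf : ∀ u, g u = c → u = c := fun u hu => by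
    by_contra h
    exact hcon u h hu
  have key : ∀ g', ok g' → (∀ a, a ∈ bad g' → a ∈ bad g) → c ∉ bad g' → False := by
    intro g' hg' hsub hcb
    have hlt : bad g' ⊂ bad g := by
      refine Finset.ssubset_iff_subset_ne.2 ⟨hsub, fun h => hcb ?_⟩
      rw [h]
      simp only [bad, Finset.mem_filter, Finset.mem_univ, true_and]
      exact ⟨hc, hleaf⟩
    exact absurd (hmin g' hg') (not_le.2 (Finset.card_lt_card hlt))
  by_cases hxf : g x = x
  · apply key (fun u => if u = c then x else g u)
    · constructor
      · intro u; grind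
      · intro u; grind
    · intro a; simp only [bad, Finset.mem_filter, Finset.mem_univ, true_and]; grind
    · simp only [bad, Finset.mem_filter, Finset.mem_univ, true_and]; grind
  · by_cases hy : ∃ y, y ≠ x ∧ y ≠ g x ∧ g y = g x
    · obtain ⟨y, hy1, hy2, hy3⟩ := hy
      apply key (fun u => if u = c then x else if u = x then x else g u)
      · constructor
        · intro u; grind
        · intro u; grind
      · intro a; simp only [bad, Finset.mem_filter, Finset.mem_univ, true_and]; grind
      · simp only [bad, Finset.mem_filter, Finset.mem_univ, true_and]; grind
    · push Not at hy
      have hA := hsymm _ _ (h2 x hxf)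
      apply key (fun u => if u = c then x else if u = x then x else if u = g x then x else g u)
      · constructor
        · intro u; grind
        · intro u; grind
      · intro a; simp only [bad, Finset.mem_filter, Finset.mem_univ, true_and]; grind
      · simp only [bad, Finset.mem_filter, Finset.mem_univ, true_and]; grind

/-! ### Combinatorial core -/

lemma comb_core {α : Type*} [Fintype α] [DecidableEq α] [Nonempty α] (A : α → α → Prop) (d : ℕ)
    (hd : 1 ≤ d)
    (hsymm : ∀ a b, A a b → A b a) (hirr : ∀ a, ¬ A a a) (hiso : ∀ a, ∃ b, A b a)
    (hfacet : ∀ v w : α, v ≠ w → ∃ F : Finset α, v ∈ F ∧ w ∉ F ∧ d ≤ F.card ∧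
      ∀ a ∈ F, ∀ b ∈ F, ¬ A a b) :
    Mf d ≤ Fintype.card α := by
  classical
  obtain ⟨g, h1, h2, h3⟩ := exists_star_forest A hsymm hirr hiso
  let C : Finset α := Finset.univ.filter fun c => g c = c
  have hC : ∀ c, c ∈ C ↔ g c = c := by simp [C]
  let L : α → Finset α := fun c => Finset.univ.filter fun u => g u = c ∧ u ≠ c
  have hL : ∀ c u, u ∈ L c ↔ g u = c ∧ u ≠ c := by simp [L]
  let fib : α → Finset α := fun c => Finset.univ.filter fun u => g u = c
  have hfib : ∀ c ∈ C, fib c = insert c (L c) := by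
    intro c hc
    ext u
    simp only [fib, L, Finset.mem_filter, Finset.mem_univ, true_and, Finset.mem_insert]
    have := (hC c).1 hc
    grind
  have hfibc : ∀ c ∈ C, (fib c).card = (L c).card + 1 := by
    intro c hc
    rw [hfib c hc, Finset.card_insert_of_notMem (by simp [hL])]
  have hLpos : ∀ c ∈ C, 1 ≤ (L c).card := by
    intro c hc
    obtain ⟨u, hu, hgu⟩ := h3 c ((hC c).1 hc)
    exact Finset.card_pos.2 ⟨u, (hL c u).2 ⟨hgu, hu⟩⟩
  have hCne : C.Nonempty := ⟨g (Classical.arbitrary α), (hC _).2 (h1 _)⟩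
  obtain ⟨v, hv, hmax⟩ := Finset.exists_max_image C (fun c => (L c).card) hCne
  have hn : Fintype.card α = ∑ c ∈ C, ((L c).card + 1) := by
    rw [← Finset.card_univ, Finset.card_eq_sum_card_fiberwise (f := g) (t := C)
      (fun x _ => by simpa [hC] using h1 x)]
    exact Finset.sum_congr rfl fun c hc => hfibc c hc
  have hmiss : ∀ F : Finset α, Fintype.card α = F.card + ∑ c ∈ C, (fib c \ F).card := by
    intro F
    have : (Fᶜ).card = ∑ c ∈ C, (fib c \ F).card := by
      rw [Finset.card_eq_sum_card_fiberwise (f := g) (t := C)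
        (fun x _ => by simpa [hC] using h1 x)]
      refine Finset.sum_congr rfl fun c hc => congrArg Finset.card ?_
      ext u
      simp [fib, and_comm]
    rw [← this, Finset.card_add_card_compl]
  have hLsub : ∀ F : Finset α, (∀ a ∈ F, ∀ b ∈ F, ¬ A a b) → ∀ c ∈ F, L c ⊆ fib c \ F := by
    intro F hF c hc u hu
    obtain ⟨hu1, hu2⟩ := (hL c u).1 hu
    refine Finset.mem_sdiff.2 ⟨by simp [fib, hu1], fun huF => ?_⟩
    have := h2 u (by rw [hu1]; exact hu2.symm)
    rw [hu1] at this
    exact hF c hc u huF this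
  have hone : ∀ F : Finset α, (∀ a ∈ F, ∀ b ∈ F, ¬ A a b) → ∀ c ∈ C, 1 ≤ (fib c \ F).card := by
    intro F hF c hc
    by_cases hcF : c ∈ F
    · exact (hLpos c hc).trans (Finset.card_le_card (hLsub F hF c hcF))
    · exact Finset.card_pos.2 ⟨c, Finset.mem_sdiff.2 ⟨by simpa [fib] using (hC c).1 hc, hcF⟩⟩
  obtain ⟨m, hm⟩ : ∃ m, C.card = m + 1 := ⟨C.card - 1, by have := hCne.card_pos; omega⟩
  have hCv : (C.erase v).card = m := by rw [Finset.card_erase_of_mem hv]; omega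
  by_cases hbig : ∃ c ∈ C, c ≠ v ∧ 2 ≤ (L c).card
  · obtain ⟨c, hc, hcv, hc2⟩ := hbig
    obtain ⟨w, hw⟩ := Finset.card_pos.1 (show 0 < (L c).card by omega)
    have hw' := (hL c w).1 hw
    have hvw : v ≠ w := by
      rintro rfl
      exact hw'.2 ((hC v).1 hv ▸ hw'.1)
    obtain ⟨F, hvF, hwF, hdF, hF⟩ := hfacet v w hvw
    have hc2' : 2 ≤ (fib c \ F).card := by
      by_cases hcF : c ∈ F
      · exact hc2.trans (Finset.card_le_card (hLsub F hF c hcF))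
      · rw [← Finset.card_pair hw'.2]
        refine Finset.card_le_card fun u hu => ?_
        have hgc := (hC c).1 hc
        simp only [Finset.mem_insert, Finset.mem_singleton] at hu
        rcases hu with rfl | rfl
        · exact Finset.mem_sdiff.2 ⟨by simpa [fib] using hw'.1, hwF⟩
        · exact Finset.mem_sdiff.2 ⟨by simpa [fib] using hgc, hcF⟩
    have hcC : c ∈ C.erase v := Finset.mem_erase.2 ⟨hcv, hc⟩
    have hs := hmiss F
    rw [← Finset.add_sum_erase C _ hv, ← Finset.add_sum_erase _ _ hcC] at hs
    have hrest : ((C.erase v).erase c).card * 1 ≤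
        ∑ x ∈ (C.erase v).erase c, (fib x \ F).card := by
      rw [← smul_eq_mul]
      refine Finset.card_nsmul_le_sum _ _ _ fun x hx => hone F hF x ?_
      exact Finset.mem_of_mem_erase (Finset.mem_of_mem_erase hx)
    rw [Finset.card_erase_of_mem hcC, hCv] at hrest
    have hm1 : 1 ≤ m := by rw [← hCv]; exact Finset.card_pos.2 ⟨c, hcC⟩
    have hvL := Finset.card_le_card (hLsub F hF v hvF)
    have hlow : d + (L v).card + m + 1 ≤ Fintype.card α := by omega
    have hup : Fintype.card α ≤ (m + 1) * ((L v).card + 1) := by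
      rw [hn, ← hm, ← smul_eq_mul]
      exact Finset.sum_le_card_nsmul _ _ _ fun x hx => by have := hmax x hx; omega
    refine arith_main hd ?_ hlow
    nlinarith
  · push Not at hbig
    obtain ⟨w, hwv, hw⟩ := h3 v ((hC v).1 hv)
    obtain ⟨F, hvF, -, hdF, hF⟩ := hfacet v w hwv.symm
    have hs := hmiss F
    rw [← Finset.add_sum_erase C _ hv] at hs
    have hrest : (C.erase v).card * 1 ≤ ∑ x ∈ C.erase v, (fib x \ F).card := by
      rw [← smul_eq_mul]
      exact Finset.card_nsmul_le_sum _ _ _ fun x hx => hone F hF x (Finset.mem_of_mem_erase hx)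
    have hvL := Finset.card_le_card (hLsub F hF v hvF)
    rw [← Finset.add_sum_erase C _ hv] at hn
    have h2s : ∑ x ∈ C.erase v, ((L x).card + 1) = (C.erase v).card * 2 := by
      rw [Finset.sum_congr rfl (g := fun _ => 2), Finset.sum_const, smul_eq_mul]
      intro x hx
      have hx' := Finset.mem_erase.1 hx
      have := hbig x hx'.2 hx'.1
      have := hLpos x hx'.2
      omega
    have := hLpos v hv
    refine (min_le_left _ _).trans ?_
    omega

/-! ### Geometry -/

/-- Through every vertex `v ≠ w` there is a supporting functional whose face contains `v`, at
least `d` vertices, and not `w`. -/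
lemma exists_functional {d : ℕ} (V : Finset (Euc d)) (v w : Euc d) (hv : v ∈ V)
    (hspan : Submodule.span ℝ ((fun u => v - u) '' (V : Set (Euc d))) = ⊤)
    (hex : ∃ c : Module.Dual ℝ (Euc d), (∀ u ∈ V, 0 ≤ c (v - u)) ∧ 0 < c (v - w)) :
    ∃ c : Module.Dual ℝ (Euc d), (∀ u ∈ V, 0 ≤ c (v - u)) ∧ 0 < c (v - w) ∧
      d ≤ (V.filter fun u => c (v - u) = 0).card := by
  classical
  let T : Module.Dual ℝ (Euc d) → Finset (Euc d) := fun c => V.filter fun u => c (v - u) = 0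
  let ok : Module.Dual ℝ (Euc d) → Prop :=
    fun c => (∀ u ∈ V, 0 ≤ c (v - u)) ∧ 0 < c (v - w)
  obtain ⟨c, hc, hmax⟩ : ∃ c, ok c ∧ ∀ c', ok c' → (T c').card ≤ (T c).card := by
    have hex' : ∃ k, ∃ c, ok c ∧ V.card - (T c).card = k := by
      obtain ⟨c, hc⟩ := hex
      exact ⟨_, c, hc, rfl⟩
    obtain ⟨c, hc, hk⟩ := Nat.find_spec hex'
    refine ⟨c, hc, fun c' hc' => ?_⟩
    have := Nat.find_min' hex' ⟨c', hc', rfl⟩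
    have h1 : (T c).card ≤ V.card := Finset.card_filter_le _ _
    have h2 : (T c').card ≤ V.card := Finset.card_filter_le _ _
    omega
  refine ⟨c, hc.1, hc.2, ?_⟩
  by_contra hlt
  push Not at hlt
  change (T c).card < d at hlt
  have hvT : v ∈ T c := by simp [T, hv]
  -- a functional vanishing on the tight directions and on `v - w`
  let S : Finset (Euc d) := insert (v - w) (((T c).erase v).image fun u => v - u)
  have hScard : S.card < d := by
    have h1 := Finset.card_insert_le (v - w) (((T c).erase v).image fun u => v - u)
    have h2 := Finset.card_image_le (s := (T c).erase v) (f := fun u => v - u)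
    have h3 := Finset.card_erase_of_mem hvT
    have h4 := Finset.card_pos.2 ⟨v, hvT⟩
    change S.card ≤ _ at h1
    omega
  have hSlt : Submodule.span ℝ (S : Set (Euc d)) < ⊤ := by
    rw [lt_top_iff_ne_top]
    intro htop
    have h1 := finrank_span_finset_le_card (R := ℝ) S
    unfold Set.finrank at h1
    rw [htop, finrank_top] at h1
    simp at h1
    omega
  obtain ⟨f, hf0, hf⟩ := Submodule.exists_le_ker_of_lt_top _ hSlt
  have hfS : ∀ x ∈ S, f x = 0 := fun x hx => hf (Submodule.subset_span hx)
  have hfw : f (v - w) = 0 := hfS _ (Finset.mem_insert_self _ _)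
  have hfT : ∀ u ∈ T c, f (v - u) = 0 := by
    intro u hu
    by_cases huv : u = v
    · simp [huv]
    · exact hfS _ (Finset.mem_insert_of_mem
        (Finset.mem_image_of_mem _ (Finset.mem_erase.2 ⟨huv, hu⟩)))
  obtain ⟨u₀, hu₀, hfu₀⟩ : ∃ u ∈ V, f (v - u) ≠ 0 := by
    by_contra hcon
    push Not at hcon
    apply hf0
    have : (⊤ : Submodule ℝ (Euc d)) ≤ LinearMap.ker f := by
      rw [← hspan, Submodule.span_le]
      rintro _ ⟨u, hu, rfl⟩
      exact hcon u hu
    ext x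
    have hx := this (Submodule.mem_top (x := x))
    simpa using LinearMap.mem_ker.1 hx
  obtain ⟨f', hf'w, hf'T, hf'u⟩ : ∃ f' : Module.Dual ℝ (Euc d), f' (v - w) = 0 ∧
      (∀ u ∈ T c, f' (v - u) = 0) ∧ f' (v - u₀) < 0 := by
    rcases lt_or_gt_of_ne hfu₀ with h | h
    · exact ⟨f, hfw, hfT, h⟩
    · exact ⟨-f, by rw [LinearMap.neg_apply, hfw, neg_zero],
        fun u hu => by rw [LinearMap.neg_apply, hfT u hu, neg_zero],
        by rw [LinearMap.neg_apply]; linarith⟩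
  obtain ⟨u₁, hu₁, hmin⟩ := Finset.exists_min_image (V.filter fun u => f' (v - u) < 0)
    (fun u => c (v - u) / (-f' (v - u))) ⟨u₀, by simp only [Finset.mem_filter]; exact ⟨hu₀, hf'u⟩⟩
  obtain ⟨hu₁V, hu₁f⟩ := Finset.mem_filter.1 hu₁
  set t : ℝ := c (v - u₁) / (-f' (v - u₁)) with ht
  have ht0 : 0 ≤ t := div_nonneg (hc.1 _ hu₁V) (by linarith)
  have hval : ∀ x, (c + t • f') x = c x + t * f' x := fun x => by simp
  have hok : ok (c + t • f') := by
    refine ⟨fun u hu => ?_, ?_⟩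
    · rw [hval]
      rcases lt_or_ge (f' (v - u)) 0 with h | h
      · have h1 := hmin u (Finset.mem_filter.2 ⟨hu, h⟩)
        rw [le_div_iff₀ (by linarith)] at h1
        linarith
      · have := hc.1 u hu
        positivity
    · rw [hval, hf'w]
      simpa using hc.2
  have hsub : insert u₁ (T c) ⊆ T (c + t • f') := by
    intro u hu
    rcases Finset.mem_insert.1 hu with rfl | hu
    · refine Finset.mem_filter.2 ⟨hu₁V, ?_⟩
      rw [hval, ht]
      have : f' (v - u) ≠ 0 := hu₁f.ne
      field_simp
      ring
    · refine Finset.mem_filter.2 ⟨(Finset.mem_filter.1 hu).1, ?_⟩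
      rw [hval, hf'T u hu, (Finset.mem_filter.1 hu).2]
      simp
  have hnot : u₁ ∉ T c := fun h => by
    have := hf'T u₁ h
    linarith
  have := (Finset.card_le_card hsub).trans (hmax _ hok)
  rw [Finset.card_insert_of_notMem hnot] at this
  omega

/-- A nonzero linear functional has no maximum over `P` at an interior point of `P`. -/
lemma no_interior_max {d : ℕ} (P : Set (Euc d)) (c : Module.Dual ℝ (Euc d)) (z y : Euc d)
    (hz : z ∈ interior P) (hmax : ∀ x ∈ P, c x ≤ c z) (hy : 0 < c y) : False := by
  have hcont : ContinuousAt (fun t : ℝ => z + t • y) 0 := by fun_prop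
  have hmem : ∀ᶠ t in nhds (0 : ℝ), z + t • y ∈ P := by
    apply hcont.eventually
    simpa using mem_interior_iff_mem_nhds.1 hz
  have hmem' : ∀ᶠ t in nhdsWithin (0 : ℝ) (Set.Ioi 0), z + t • y ∈ P :=
    hmem.filter_mono nhdsWithin_le_nhds
  obtain ⟨t, ht, ht0⟩ := (hmem'.and self_mem_nhdsWithin).exists
  have h := hmax _ ht
  rw [map_add, map_smul, smul_eq_mul] at h
  have : 0 < t * c y := mul_pos ht0 hy
  linarith

/-- For `d ≥ 1`, every illuminated `d`-polytope has at least
`M(d)` vertices. -/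
theorem illuminated_card_ge_M {d : ℕ} (hd : 1 ≤ d) (P : Set (Euc d))
    (hP : IsDPolytope P) (hIll : Illuminated P) :
    Mf d ≤ (verts P).ncard := by
  classical
  obtain ⟨⟨V₀, hV₀, hPV⟩, hspan⟩ := hP
  have hfin : (verts P).Finite := by
    refine hV₀.subset ?_
    unfold verts
    rw [hPV]
    exact extremePoints_convexHull_subset
  have hcomp : IsCompact P := hPV ▸ hV₀.isCompact_convexHull ℝ
  have hconv : Convex ℝ P := hPV ▸ convex_convexHull ℝ V₀
  have hhull : P = convexHull ℝ (verts P) := by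
    have h := closure_convexHull_extremePoints hcomp hconv
    have h2 : IsClosed (convexHull ℝ (verts P)) := hfin.isClosed_convexHull ℝ
    unfold verts at *
    rw [h2.closure_eq] at h
    exact h.symm
  have hspanV : affineSpan ℝ (verts P) = ⊤ := by
    rw [← affineSpan_convexHull, ← hhull, hspan]
  have hne : (verts P).Nonempty := by
    rw [← affineSpan_nonempty (k := ℝ), hspanV]
    exact ⟨0, trivial⟩
  haveI : Fintype (verts P) := hfin.fintype
  haveI : Nonempty (verts P) := hne.to_subtype
  rw [← Nat.card_coe_set_eq, Nat.card_eq_fintype_card]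
  have hsymm : ∀ a b, InnerDiagonal P a b → InnerDiagonal P b a := by
    rintro a b ⟨h1, h2, h3, h4⟩
    exact ⟨h2, h1, h3.symm, by rwa [openSegment_symm]⟩
  refine comb_core (fun a b : verts P => InnerDiagonal P a b) d hd
    (fun a b => hsymm a b) (fun a h => h.2.2.1 rfl) ?_ ?_
  · intro a
    obtain ⟨u, hu⟩ := hIll a a.2
    exact ⟨⟨u, hu.1⟩, hu⟩
  · rintro ⟨v, hv⟩ ⟨w, hw⟩ hvw
    have hvw' : w ≠ v := fun h => hvw (Subtype.ext h.symm)
    have hsp : Submodule.span ℝ ((fun u => v - u) '' (hfin.toFinset : Set (Euc d))) = ⊤ := by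
      have h := vectorSpan_eq_span_vsub_set_left ℝ hv
      rw [← direction_affineSpan, hspanV, AffineSubspace.direction_top] at h
      simpa [vsub_eq_sub] using h.symm
    have hsep : ∃ c : Module.Dual ℝ (Euc d),
        (∀ u ∈ hfin.toFinset, 0 ≤ c (v - u)) ∧ 0 < c (v - w) := by
      have hnot : v ∉ convexHull ℝ (verts P \ {v}) := by
        intro hmem
        have h1 : convexHull ℝ (verts P \ {v}) ⊆ P \ {v} := by
          refine convexHull_min ?_ ?_
          · intro x hx
            exact ⟨hx.1.1, hx.2⟩
          · exact (hconv.mem_extremePoints_iff_convex_sdiff.1 hv).2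
        exact (h1 hmem).2 rfl
      obtain ⟨c, s, hc1, hc2⟩ := geometric_hahn_banach_closed_point
        (convex_convexHull ℝ (verts P \ {v}))
        ((hfin.subset Set.sdiff_subset).isClosed_convexHull ℝ) hnot
      have hc : ∀ u ∈ verts P, u ≠ v → 0 < c (v - u) := by
        intro u hu huv
        have := hc1 u (subset_convexHull ℝ _ ⟨hu, huv⟩)
        rw [map_sub]
        linarith
      refine ⟨c.toLinearMap, fun u hu => ?_, hc w hw hvw'⟩
      by_cases huv : u = v
      · simp [huv]
      · exact (hc u (hfin.mem_toFinset.1 hu) huv).le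
    obtain ⟨c, hc1, hc2, hc3⟩ := exists_functional hfin.toFinset v w
      (hfin.mem_toFinset.2 hv) hsp hsep
    have hcP : ∀ x ∈ P, c x ≤ c v := by
      intro x hx
      rw [hhull] at hx
      refine (convexHull_min (t := {x | c x ≤ c v}) ?_ ?_) hx
      · intro u hu
        have := hc1 u (hfin.mem_toFinset.2 hu)
        rw [map_sub] at this
        simp only [Set.mem_ofPred_eq]
        linarith
      · exact convex_halfSpace_le c.isLinear _
    refine ⟨Finset.univ.filter fun u : verts P => c (v - u) = 0, ?_, ?_, ?_, ?_⟩
    · simp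
    · simp only [Finset.mem_filter, Finset.mem_univ, true_and]
      exact hc2.ne'
    · refine hc3.trans ?_
      rw [← Finset.card_image_of_injective _ (Subtype.val_injective (p := fun x => x ∈ verts P))]
      refine Finset.card_le_card fun u hu => ?_
      obtain ⟨h1, h2⟩ := Finset.mem_filter.1 hu
      exact Finset.mem_image.2 ⟨⟨u, hfin.mem_toFinset.1 h1⟩,
        Finset.mem_filter.2 ⟨Finset.mem_univ _, h2⟩, rfl⟩
    · rintro ⟨a, ha⟩ haF ⟨b, hb⟩ hbF ⟨-, -, -, z, hz, hzP⟩
      simp only [Finset.mem_filter, Finset.mem_univ, true_and, map_sub] at haF hbF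
      obtain ⟨s, t, hs, ht, hst, rfl⟩ := hz
      have hcz : c (s • a + t • b) = c v := by
        rw [map_add, map_smul, map_smul, smul_eq_mul, smul_eq_mul,
          show c a = c v by linarith, show c b = c v by linarith, ← add_mul, hst, one_mul]
      exact no_interior_max P c _ (v - w) hzP (fun x hx => by rw [hcz]; exact hcP x hx) hc2
end
end
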